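/- (Theorem 1, stability.) Assume the Dirichlet-measurement setting described in the context, with θ₁ ∈ (0, π/2]. Suppose K ∈ ℝ^{1×N₀} and L ∈ ℝ^{N₀} are such that every complex eigenvalue μ of F₁ satisfies Re μ < −|c|; fix α₁, α₂, α₃, α₄ > 0 with 𝔠 := 1 − ½(|c|/α₁ + 1/α₂ + 1/α₃ + |c|/α₄) > 0; and suppose for the given N ≥ N₀ + 1 there exist a symmetric positive definite P, symmetric positive semidefinite Q₁, Q₂, and reals r₁, r₂, β, γ > 0 such that Ψ ≺ 0, Θ₁ ≺ 0, Θ₂ ≺ 0, Θ₃ < 0, Θ₄ < 0. Then for any h > 0 there exist constants δ, M > 0 such that every classical solution of the closed-loop system (the PDE with output y_D(t) = z(t,0) interconnected with the controller), with admissible initial data (z₀ ∈ C⁰([−h,0]; L²(0,1)) with z₀ and u₀ Lipschitz, z₀(τ,·) ∈ H²(0,1), cos(θ₁) z₀(0,0) − sin(θ₁) z₀,ₓ(0,0) = 0, u₀(0) = Σ_{k=1}^{N₀} k_k ẑ_k(0), and ẑₙ constant on [−h,0]), satisfies for all t ≥ 0: ‖z(t,·)‖²_{H¹} + Σ_{n=1}^{N}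 ẑₙ(t)² ≤ M e^{−2δt} ( sup_{τ∈[−h,0]} ‖z₀(τ,·)‖²_{L²} + ‖z₀(0,·)‖²_{H¹} + ‖u₀‖²_∞ + Σ_{n=1}^{N} ẑₙ(0)² ). -/

import Mathlib

open Real Set Matrix MeasureTheory

noncomputable section

/-- One-sided/within derivative on the spatial interval `[0,1]`. -/
def dI (f : ℝ → ℝ) (x : ℝ) : ℝ := derivWithin f (Set.Icc 0 1) x

/-- `L²(0,1)` inner product. -/
def ip (f g : ℝ → ℝ) : ℝ := ∫ x in (0:ℝ)..1, f x * g x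

/-- The lifting function `a(x) = (2p(x) + 2xp'(x) - x²q̃(x))/(cos θ₂ + 2 sin θ₂)`. -/
def aFun (p qt : ℝ → ℝ) (θ₂ : ℝ) (x : ℝ) : ℝ :=
  (2 * p x + 2 * x * dI p x - x ^ 2 * qt x) / (Real.cos θ₂ + 2 * Real.sin θ₂)

/-- The lifting function `b(x) = -x²/(cos θ₂ + 2 sin θ₂)`. -/
def bFun (θ₂ : ℝ) (x : ℝ) : ℝ := -x ^ 2 / (Real.cos θ₂ + 2 * Real.sin θ₂)

/-- Input coefficient `βₙ = aₙ + (-λₙ + q_c) bₙ`. -/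
def betaC (p qt : ℝ → ℝ) (θ₂ q_c : ℝ) (lam : ℕ → ℝ) (phi : ℕ → ℝ → ℝ) (n : ℕ) : ℝ :=
  ip (aFun p qt θ₂) (phi n) + (-lam n + q_c) * ip (bFun θ₂) (phi n)

/-- Squared `L²`-norm `‖R_N f‖² = Σ_{n≥N+1} ⟨f,φₙ⟩²` of the residual `R_N f`. -/
def RN2 (f : ℝ → ℝ) (phi : ℕ → ℝ → ℝ) (N : ℕ) : ℝ := ∑' k : ℕ, (ip f (phi (N + 1 + k)))^2

/-- `A₀ = diag(-λ₁+q_c, …, -λ_{N₀}+q_c)`. -/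
def A0 (N₀ : ℕ) (lam : ℕ → ℝ) (q_c : ℝ) : Matrix (Fin N₀) (Fin N₀) ℝ :=
  Matrix.diagonal fun i => -lam (i.val + 1) + q_c

/-- `F₃ = A₁ = diag(-λ_{N₀+1}+q_c, …, -λ_N+q_c)`. -/
def A1 (N₀ N : ℕ) (lam : ℕ → ℝ) (q_c : ℝ) : Matrix (Fin (N - N₀)) (Fin (N - N₀)) ℝ :=
  Matrix.diagonal fun i => -lam (N₀ + i.val + 1) + q_c

/-- `𝔅₀ = (β₁,…,β_{N₀})ᵀ`. -/
def B0 (N₀ : ℕ) (p qt : ℝ → ℝ) (θ₂ q_c : ℝ) (lam : ℕ → ℝ) (phi : ℕ → ℝ → ℝ) :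
    Fin N₀ → ℝ :=
  fun i => betaC p qt θ₂ q_c lam phi (i.val + 1)

/-- `F₁ = [[A₀+𝔅₀K, LC₀],[0, A₀-LC₀]]`. -/
def F1 (N₀ : ℕ) (lam : ℕ → ℝ) (q_c : ℝ) (B0v C0v K L : Fin N₀ → ℝ) :
    Matrix (Fin N₀ ⊕ Fin N₀) (Fin N₀ ⊕ Fin N₀) ℝ :=
  Matrix.fromBlocks (A0 N₀ lam q_c + Matrix.vecMulVec B0v K) (Matrix.vecMulVec L C0v) 0
    (A0 N₀ lam q_c - Matrix.vecMulVec L C0v)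

/-- `F₂ = [LC̃₁; -LC̃₁]`. -/
def F2 (N₀ N : ℕ) (L : Fin N₀ → ℝ) (Ct : Fin (N - N₀) → ℝ) :
    Matrix (Fin N₀ ⊕ Fin N₀) (Fin (N - N₀)) ℝ :=
  Matrix.of fun i j => Sum.elim (fun a' => L a' * Ct j) (fun a' => -(L a' * Ct j)) i

/-- `ℒ = col(L,-L)`. -/
def Lv (N₀ : ℕ) (L : Fin N₀ → ℝ) : Fin N₀ ⊕ Fin N₀ → ℝ := Sum.elim L fun a' => -L a'

/-- `K̃ = [K 0]`. -/
def Kt (N₀ : ℕ) (K : Fin N₀ → ℝ) : Fin N₀ ⊕ Fin N₀ → ℝ := Sum.elim K 0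

/-- Index type of the matrix `Ψ` (blocks of sizes `2N₀`, `N-N₀`, `1`). -/
abbrev SIdx (N₀ N : ℕ) := ((Fin N₀ ⊕ Fin N₀) ⊕ Fin (N - N₀)) ⊕ Unit

/-- The row vector `E = K̃ [F₁ F₂ ℒ]`. -/
def Erow (N₀ N : ℕ) (F1m : Matrix (Fin N₀ ⊕ Fin N₀) (Fin N₀ ⊕ Fin N₀) ℝ)
    (F2m : Matrix (Fin N₀ ⊕ Fin N₀) (Fin (N - N₀)) ℝ)
    (Lvv Ktv : Fin N₀ ⊕ Fin N₀ → ℝ) : SIdx N₀ N → ℝ :=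
  Sum.elim (Sum.elim (Matrix.vecMul Ktv F1m) (Matrix.vecMul Ktv F2m)) fun _ => Ktv ⬝ᵥ Lvv

/-- The matrix `Ψ` of the LMI conditions. -/
def PsiM (N₀ N : ℕ)
    (P Q1 F1m : Matrix (Fin N₀ ⊕ Fin N₀) (Fin N₀ ⊕ Fin N₀) ℝ)
    (Q2 F3m : Matrix (Fin (N - N₀)) (Fin (N - N₀)) ℝ)
    (F2m : Matrix (Fin N₀ ⊕ Fin N₀) (Fin (N - N₀)) ℝ)
    (Lvv Ktv : Fin N₀ ⊕ Fin N₀ → ℝ) (E : SIdx N₀ N → ℝ)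
    (c r₁ βs γ α₂ α₃ RNa2 RNb2 : ℝ) : Matrix (SIdx N₀ N) (SIdx N₀ N) ℝ :=
  Matrix.fromBlocks
    (Matrix.fromBlocks
      (F1mᵀ * P + P * F1m + |c| • P + Q1 + (α₂ * γ * RNa2) • Matrix.vecMulVec Ktv Ktv)
      (P * F2m)
      ((P * F2m)ᵀ)
      (r₁ • ((2:ℝ) • F3m + |c| • (1 : Matrix (Fin (N - N₀)) (Fin (N - N₀)) ℝ)) + Q2))
    (Matrix.of fun i (_ : Unit) => Sum.elim (P.mulVec Lvv) (fun _ => 0) i)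
    (Matrix.of fun (_ : Unit) j => Sum.elim (P.mulVec Lvv) (fun _ => 0) j)
    (Matrix.of fun _ _ => -βs)
  + (2 * α₃ * γ * RNb2) • Matrix.vecMulVec E E

/-- The matrix `Θ₁`. -/
def Theta1 (N₀ : ℕ) (P Q1 : Matrix (Fin N₀ ⊕ Fin N₀) (Fin N₀ ⊕ Fin N₀) ℝ)
    (Ktv : Fin N₀ ⊕ Fin N₀ → ℝ) (c γ α₃ α₄ RNb2 : ℝ) :
    Matrix (Fin N₀ ⊕ Fin N₀) (Fin N₀ ⊕ Fin N₀) ℝ :=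
  |c| • P - Q1 + ((2*α₃*|c| + α₄) * γ * |c| * RNb2) • Matrix.vecMulVec Ktv Ktv

/-- The matrix `Θ₂`. -/
def Theta2 (N₀ N : ℕ) (Q2 : Matrix (Fin (N - N₀)) (Fin (N - N₀)) ℝ) (r₁ c : ℝ) :
    Matrix (Fin (N - N₀)) (Fin (N - N₀)) ℝ :=
  (r₁ * |c|) • (1 : Matrix (Fin (N - N₀)) (Fin (N - N₀)) ℝ) - Q2

/-- The Sturm–Liouville differential expression `-(p f')' + q f` on `[0,1]`. -/
def slOp (p q f : ℝ → ℝ) (x : ℝ) : ℝ := -(dI (fun y => p y * dI f y) x) + q x * f x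

/-- The `C²` functions on `[0,1]` satisfying the homogeneous Robin boundary conditions. -/
structure RobinDomain (θ₁ θ₂ : ℝ) (f : ℝ → ℝ) : Prop where
  reg : ContDiffOn ℝ 2 f (Set.Icc 0 1)
  left : Real.cos θ₁ * f 0 - Real.sin θ₁ * dI f 0 = 0
  right : Real.cos θ₂ * f 1 + Real.sin θ₂ * dI f 1 = 0

/-- The squared `H¹(0,1)` norm. -/
def h1sq (f : ℝ → ℝ) : ℝ := (∫ x in (0:ℝ)..1, (f x)^2) + ∫ x in (0:ℝ)..1, (dI f x)^2

theorem uniqueDiffOn_unit : UniqueDiffOn ℝ (Icc (0:ℝ) 1) := uniqueDiffOn_Icc one_pos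

theorem hasDerivWithinAt_dI {f : ℝ → ℝ} (hf : ContDiffOn ℝ 1 f (Icc 0 1)) {x : ℝ}
    (hx : x ∈ Icc (0:ℝ) 1) : HasDerivWithinAt f (dI f x) (Icc 0 1) x :=
  (hf.differentiableOn (by norm_num) x hx).hasDerivWithinAt

theorem dI_eq {f : ℝ → ℝ} {f' x : ℝ} (hx : x ∈ Icc (0:ℝ) 1)
    (hf : HasDerivWithinAt f f' (Icc 0 1) x) : dI f x = f' :=
  hf.derivWithin (uniqueDiffOn_unit x hx)

theorem contDiffOn_dI {f : ℝ → ℝ} (hf : ContDiffOn ℝ 2 f (Icc 0 1)) :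
    ContDiffOn ℝ 1 (dI f) (Icc 0 1) :=
  hf.derivWithin uniqueDiffOn_unit (by norm_num)

theorem continuousOn_dI {f : ℝ → ℝ} (hf : ContDiffOn ℝ 1 f (Icc 0 1)) :
    ContinuousOn (dI f) (Icc 0 1) :=
  hf.continuousOn_derivWithin uniqueDiffOn_unit (by norm_num)

theorem ContinuousOn.intervalIntegrable_unit {f : ℝ → ℝ} (hf : ContinuousOn f (Icc 0 1)) :
    IntervalIntegrable f volume 0 1 :=
  ContinuousOn.intervalIntegrable_of_Icc zero_le_one hf

theorem unit_integral_by_parts {u v u' v' : ℝ → ℝ}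
    (hu : ∀ x ∈ Icc (0:ℝ) 1, HasDerivWithinAt u (u' x) (Icc 0 1) x)
    (hv : ∀ x ∈ Icc (0:ℝ) 1, HasDerivWithinAt v (v' x) (Icc 0 1) x)
    (hu' : ContinuousOn u' (Icc 0 1)) (hv' : ContinuousOn v' (Icc 0 1)) :
    ∫ x in (0:ℝ)..1, u x * v' x = u 1 * v 1 - u 0 * v 0 - ∫ x in (0:ℝ)..1, u' x * v x := by
  have h01 : Set.uIcc (0:ℝ) 1 = Icc 0 1 := Set.uIcc_of_le zero_le_one
  apply intervalIntegral.integral_mul_deriv_eq_deriv_mul_of_hasDerivWithinAt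
  · rwa [h01]
  · rwa [h01]
  · exact hu'.intervalIntegrable_unit
  · exact hv'.intervalIntegrable_unit

theorem unit_integral_mono {f g : ℝ → ℝ} (hf : ContinuousOn f (Icc 0 1))
    (hg : ContinuousOn g (Icc 0 1)) (h : ∀ x ∈ Icc (0:ℝ) 1, f x ≤ g x) :
    ∫ x in (0:ℝ)..1, f x ≤ ∫ x in (0:ℝ)..1, g x :=
  intervalIntegral.integral_mono_on zero_le_one hf.intervalIntegrable_unit
    hg.intervalIntegrable_unit h

theorem unit_integral_congr {f g : ℝ → ℝ} (h : ∀ x ∈ Icc (0:ℝ) 1, f x = g x) :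
    ∫ x in (0:ℝ)..1, f x = ∫ x in (0:ℝ)..1, g x := by
  apply intervalIntegral.integral_congr
  rwa [Set.uIcc_of_le (zero_le_one' ℝ)]

theorem unit_integral_add {f g : ℝ → ℝ} (hf : ContinuousOn f (Icc 0 1))
    (hg : ContinuousOn g (Icc 0 1)) :
    ∫ x in (0:ℝ)..1, (f x + g x) = (∫ x in (0:ℝ)..1, f x) + ∫ x in (0:ℝ)..1, g x :=
  intervalIntegral.integral_add hf.intervalIntegrable_unit hg.intervalIntegrable_unit

theorem unit_integral_sq_nonneg (f : ℝ → ℝ) : 0 ≤ ∫ x in (0:ℝ)..1, (f x)^2 :=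
  intervalIntegral.integral_nonneg zero_le_one fun _ _ => sq_nonneg _

theorem h1sq_nonneg (f : ℝ → ℝ) : 0 ≤ h1sq f :=
  add_nonneg (unit_integral_sq_nonneg _) (unit_integral_sq_nonneg _)

section ip

theorem ip_comm (f g : ℝ → ℝ) : ip f g = ip g f := by
  simp only [ip, mul_comm]

theorem ip_congr {f₁ f₂ g : ℝ → ℝ} (h : ∀ x ∈ Icc (0:ℝ) 1, f₁ x = f₂ x) : ip f₁ g = ip f₂ g :=
  unit_integral_congr fun x hx => by rw [h x hx]

theorem ip_add_left {f₁ f₂ g : ℝ → ℝ} (h₁ : ContinuousOn f₁ (Icc 0 1))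
    (h₂ : ContinuousOn f₂ (Icc 0 1)) (hg : ContinuousOn g (Icc 0 1)) :
    ip (fun x => f₁ x + f₂ x) g = ip f₁ g + ip f₂ g := by
  unfold ip
  rw [← unit_integral_add (h₁.fun_mul hg) (h₂.fun_mul hg)]
  exact unit_integral_congr fun x _ => by ring

theorem ip_const_mul_left (k : ℝ) (f g : ℝ → ℝ) : ip (fun x => k * f x) g = k * ip f g := by
  unfold ip
  rw [← intervalIntegral.integral_const_mul]
  exact unit_integral_congr fun x _ => by ring

theorem ip_sum_left {ι : Type*} (s : Finset ι) {F : ι → ℝ → ℝ} {g : ℝ → ℝ}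
    (hF : ∀ i ∈ s, ContinuousOn (F i) (Icc 0 1)) (hg : ContinuousOn g (Icc 0 1)) :
    ip (fun x => ∑ i ∈ s, F i x) g = ∑ i ∈ s, ip (F i) g := by
  classical
  induction s using Finset.induction_on with
  | empty => simp [ip]
  | insert a s ha ih =>
    simp only [Finset.sum_insert ha]
    rw [ip_add_left (hF a (Finset.mem_insert_self _ _)) _ hg, ih]
    · exact fun i hi => hF i (Finset.mem_insert_of_mem hi)
    · exact continuousOn_finsetSum _ fun i hi => hF i (Finset.mem_insert_of_mem hi)

end ip

theorem slOp_continuousOn {p q f : ℝ → ℝ} (hp : ContDiffOn ℝ 2 p (Icc 0 1))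
    (hq : ContinuousOn q (Icc 0 1)) (hf : ContDiffOn ℝ 2 f (Icc 0 1)) :
    ContinuousOn (slOp p q f) (Icc 0 1) :=
  (continuousOn_dI ((hp.of_le (by norm_num)).mul (contDiffOn_dI hf))).neg.add
    (hq.mul hf.continuousOn)

/-- Green's first identity for the Sturm–Liouville expression. -/
theorem ip_slOp {p q f g : ℝ → ℝ} (hp : ContDiffOn ℝ 2 p (Icc 0 1))
    (hq : ContinuousOn q (Icc 0 1)) (hf : ContDiffOn ℝ 2 f (Icc 0 1))
    (hg : ContDiffOn ℝ 2 g (Icc 0 1)) :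
    ip (slOp p q f) g = (∫ x in (0:ℝ)..1, (p x * dI f x * dI g x + q x * (f x * g x)))
      - p 1 * dI f 1 * g 1 + p 0 * dI f 0 * g 0 := by
  have hg1 : ContDiffOn ℝ 1 g (Icc 0 1) := hg.of_le (by norm_num)
  have hpf : ContDiffOn ℝ 1 (fun y => p y * dI f y) (Icc 0 1) :=
    (hp.of_le (by norm_num)).mul (contDiffOn_dI hf)
  have key := unit_integral_by_parts (u := g) (v := fun y => p y * dI f y)
    (fun x hx => hasDerivWithinAt_dI hg1 hx) (fun x hx => hasDerivWithinAt_dI hpf hx)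
    (continuousOn_dI hg1) (continuousOn_dI hpf)
  have e1 : ip (slOp p q f) g =
      -(∫ x in (0:ℝ)..1, g x * dI (fun y => p y * dI f y) x)
        + ∫ x in (0:ℝ)..1, q x * (f x * g x) := by
    rw [← intervalIntegral.integral_neg, ← unit_integral_add]
    · exact unit_integral_congr fun x _ => by simp only [slOp]; ring
    · exact (hg.continuousOn.mul (continuousOn_dI hpf)).neg
    · exact hq.mul (hf.continuousOn.mul hg.continuousOn)
  rw [e1, key, unit_integral_add]
  · have : ∫ x in (0:ℝ)..1, dI g x * (p x * dI f x) = ∫ x in (0:ℝ)..1, p x * dI f x * dI g x :=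
      unit_integral_congr fun x _ => by ring
    rw [this]; ring
  · exact hpf.continuousOn.mul (continuousOn_dI hg1)
  · exact hq.mul (hf.continuousOn.mul hg.continuousOn)

theorem ip_slOp_comm {θ₁ θ₂ : ℝ} {p q f g : ℝ → ℝ} (hp : ContDiffOn ℝ 2 p (Icc 0 1))
    (hq : ContinuousOn q (Icc 0 1)) (hf : RobinDomain θ₁ θ₂ f) (hg : RobinDomain θ₁ θ₂ g) :
    ip (slOp p q f) g = ip f (slOp p q g) := by
  rw [ip_comm f, ip_slOp hp hq hf.reg hg.reg, ip_slOp hp hq hg.reg hf.reg]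
  have e : ∫ x in (0:ℝ)..1, (p x * dI f x * dI g x + q x * (f x * g x)) =
      ∫ x in (0:ℝ)..1, (p x * dI g x * dI f x + q x * (g x * f x)) :=
    unit_integral_congr fun x _ => by ring
  have w1 : dI f 1 * g 1 = dI g 1 * f 1 := by
    linear_combination (-(dI f 1 * g 1 - dI g 1 * f 1)) * Real.sin_sq_add_cos_sq θ₂
      + (Real.sin θ₂ * g 1 - Real.cos θ₂ * dI g 1) * hf.right
      + (Real.cos θ₂ * dI f 1 - Real.sin θ₂ * f 1) * hg.right
  have w0 : dI f 0 * g 0 = dI g 0 * f 0 := by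
    linear_combination (-(dI f 0 * g 0 - dI g 0 * f 0)) * Real.sin_sq_add_cos_sq θ₁
      + (-Real.sin θ₁ * g 0 - Real.cos θ₁ * dI g 0) * hf.left
      + (Real.cos θ₁ * dI f 0 + Real.sin θ₁ * f 0) * hg.left
  rw [e]
  linear_combination p 0 * w0 - p 1 * w1

theorem sq_zero_le_h1sq {f : ℝ → ℝ} (hf : ContDiffOn ℝ 1 f (Icc 0 1)) :
    (f 0)^2 ≤ 2 * h1sq f := by
  have hd := fun x (hx : x ∈ Icc (0:ℝ) 1) => hasDerivWithinAt_dI hf hx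
  have hc := hf.continuousOn
  have hc' := continuousOn_dI hf
  have key := unit_integral_by_parts (u := fun x => (f x)^2) (u' := fun x => 2 * f x * dI f x)
    (v := fun x => x - 1) (v' := fun _ => 1)
    (fun x hx => by simpa using (hd x hx).fun_pow 2)
    (fun x _ => (hasDerivWithinAt_id x _).sub_const 1)
    ((continuousOn_const.mul hc).mul hc') continuousOn_const
  have e : (f 0)^2 = ∫ x in (0:ℝ)..1, ((f x)^2 + 2 * f x * dI f x * (x - 1)) := by
    rw [unit_integral_add (hc.fun_pow 2)]
    · simp only [mul_one] at key
      linarith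
    · exact ((continuousOn_const.mul hc).mul hc').mul (by fun_prop)
  rw [e, h1sq, ← unit_integral_add (hc.fun_pow 2) (hc'.fun_pow 2), ← intervalIntegral.integral_const_mul]
  apply unit_integral_mono
  · exact (hc.fun_pow 2).add (((continuousOn_const.mul hc).mul hc').mul (by fun_prop))
  · exact continuousOn_const.mul ((hc.fun_pow 2).add (hc'.fun_pow 2))
  · intro x hx
    nlinarith [hx.1, hx.2, sq_nonneg (f x + (1 - x) * dI f x), mul_nonneg hx.1 (sub_nonneg.2 hx.2),
      mul_nonneg (mul_nonneg hx.1 (by linarith [hx.2] : (0:ℝ) ≤ 2 - x)) (sq_nonneg (dI f x)),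
      sq_nonneg (f x), sq_nonneg (dI f x), sq_nonneg (f x - (1 - x) * dI f x)]

theorem sq_one_le_h1sq {f : ℝ → ℝ} (hf : ContDiffOn ℝ 1 f (Icc 0 1)) :
    (f 1)^2 ≤ 2 * h1sq f := by
  have hd := fun x (hx : x ∈ Icc (0:ℝ) 1) => hasDerivWithinAt_dI hf hx
  have hc := hf.continuousOn
  have hc' := continuousOn_dI hf
  have key := unit_integral_by_parts (u := fun x => (f x)^2) (u' := fun x => 2 * f x * dI f x)
    (v := fun x => x) (v' := fun _ => 1)
    (fun x hx => by simpa using (hd x hx).fun_pow 2)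
    (fun x _ => (hasDerivWithinAt_id x _))
    ((continuousOn_const.mul hc).mul hc') continuousOn_const
  have e : (f 1)^2 = ∫ x in (0:ℝ)..1, ((f x)^2 + 2 * f x * dI f x * x) := by
    rw [unit_integral_add (hc.fun_pow 2)]
    · simp only [mul_one] at key
      linarith
    · exact ((continuousOn_const.mul hc).mul hc').mul (by fun_prop)
  rw [e, h1sq, ← unit_integral_add (hc.fun_pow 2) (hc'.fun_pow 2), ← intervalIntegral.integral_const_mul]
  apply unit_integral_mono
  · exact (hc.fun_pow 2).add (((continuousOn_const.mul hc).mul hc').mul (by fun_prop))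
  · exact continuousOn_const.mul ((hc.fun_pow 2).add (hc'.fun_pow 2))
  · intro x hx
    nlinarith [hx.1, hx.2, sq_nonneg (f x - x * dI f x),
      mul_nonneg (mul_nonneg (sub_nonneg.2 hx.2) (by linarith [hx.1] : (0:ℝ) ≤ 1 + x))
        (sq_nonneg (dI f x)), sq_nonneg (f x), sq_nonneg (dI f x)]

/-- On the Robin domain the quadratic form of the operator is equivalent to the `H¹` norm. -/
theorem exists_energy_equiv {θ₁ θ₂ : ℝ} (hθ₁ : θ₁ ∈ Set.Ioc 0 (π/2)) (hθ₂ : θ₂ ∈ Set.Icc 0 (π/2))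
    {p q : ℝ → ℝ} (hp : ContDiffOn ℝ 2 p (Icc 0 1)) (hppos : ∀ x ∈ Icc (0:ℝ) 1, 0 < p x)
    (hq : ContinuousOn q (Icc 0 1)) (hqpos : ∀ x ∈ Icc (0:ℝ) 1, 0 < q x) :
    ∃ m > (0:ℝ), ∃ C > (0:ℝ), ∀ f, RobinDomain θ₁ θ₂ f →
      m * h1sq f ≤ ip (slOp p q f) f ∧ ip (slOp p q f) f ≤ C * h1sq f := by
  obtain ⟨xp, hxp, hminp⟩ := isCompact_Icc.exists_isMinOn (nonempty_Icc.2 zero_le_one)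
    hp.continuousOn
  obtain ⟨xq, hxq, hminq⟩ := isCompact_Icc.exists_isMinOn (nonempty_Icc.2 zero_le_one) hq
  obtain ⟨yp, hyp, hmaxp⟩ := isCompact_Icc.exists_isMaxOn (nonempty_Icc.2 zero_le_one)
    hp.continuousOn
  obtain ⟨yq, hyq, hmaxq⟩ := isCompact_Icc.exists_isMaxOn (nonempty_Icc.2 zero_le_one) hq
  simp only [isMinOn_iff, isMaxOn_iff] at hminp hminq hmaxp hmaxq
  have hs₁ : 0 < Real.sin θ₁ := Real.sin_pos_of_pos_of_lt_pi hθ₁.1 (by linarith [hθ₁.2, pi_pos])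
  have hs₂ : 0 ≤ Real.sin θ₂ := Real.sin_nonneg_of_nonneg_of_le_pi hθ₂.1 (by linarith [hθ₂.2, pi_pos])
  have hc₁ : 0 ≤ Real.cos θ₁ := Real.cos_nonneg_of_neg_pi_div_two_le_of_le
    (by linarith [hθ₁.1, pi_pos]) hθ₁.2
  have hc₂ : 0 ≤ Real.cos θ₂ := Real.cos_nonneg_of_neg_pi_div_two_le_of_le
    (by linarith [hθ₂.1, pi_pos]) hθ₂.2
  have hp0 : 0 < p 0 := hppos 0 (by simp)
  have hp1 : 0 < p 1 := hppos 1 (by simp)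
  have hd₁ := div_nonneg hc₁ hs₁.le
  have hd₂ := div_nonneg hc₂ hs₂
  have hpy := hppos yp hyp
  have hqy := hqpos yq hyq
  refine ⟨min (p xp) (q xq), lt_min (hppos _ hxp) (hqpos _ hxq),
    (p yp + q yq) + (p 1 * (Real.cos θ₂ / Real.sin θ₂) * 2
      + p 0 * (Real.cos θ₁ / Real.sin θ₁) * 2), by positivity, fun f hf => ?_⟩
  have hf1 : ContDiffOn ℝ 1 f (Icc 0 1) := hf.reg.of_le (by norm_num)
  have hc := hf1.continuousOn
  have hc' := continuousOn_dI hf1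
  have hsum : h1sq f = ∫ x in (0:ℝ)..1, ((f x)^2 + (dI f x)^2) := by
    rw [h1sq, ← unit_integral_add (hc.fun_pow 2) (hc'.fun_pow 2)]
  have hint : ContinuousOn (fun x => p x * dI f x * dI f x + q x * (f x * f x)) (Icc 0 1) :=
    ((hp.continuousOn.mul hc').mul hc').add (hq.mul (hc.mul hc))
  have hlow : min (p xp) (q xq) * h1sq f ≤
      ∫ x in (0:ℝ)..1, (p x * dI f x * dI f x + q x * (f x * f x)) := by
    rw [hsum, ← intervalIntegral.integral_const_mul]
    refine unit_integral_mono (continuousOn_const.mul ((hc.fun_pow 2).add (hc'.fun_pow 2))) hint ?_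
    intro x hx
    have h1 := (min_le_left (p xp) (q xq)).trans (hminp x hx)
    have h2 := (min_le_right (p xp) (q xq)).trans (hminq x hx)
    nlinarith [mul_le_mul_of_nonneg_right h1 (sq_nonneg (dI f x)),
      mul_le_mul_of_nonneg_right h2 (sq_nonneg (f x))]
  have hup : ∫ x in (0:ℝ)..1, (p x * dI f x * dI f x + q x * (f x * f x)) ≤
      (p yp + q yq) * h1sq f := by
    rw [hsum, ← intervalIntegral.integral_const_mul]
    refine unit_integral_mono hint (continuousOn_const.mul ((hc.fun_pow 2).add (hc'.fun_pow 2))) ?_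
    intro x hx
    nlinarith [mul_le_mul_of_nonneg_right (hmaxp x hx) (sq_nonneg (dI f x)),
      mul_le_mul_of_nonneg_right (hmaxq x hx) (sq_nonneg (f x)),
      mul_nonneg hpy.le (sq_nonneg (f x)), mul_nonneg hqy.le (sq_nonneg (dI f x))]
  have b0 : dI f 0 * f 0 = Real.cos θ₁ / Real.sin θ₁ * (f 0)^2 := by
    field_simp
    linear_combination (-f 0) * hf.left
  have b1 : -(dI f 1 * f 1) = Real.cos θ₂ / Real.sin θ₂ * (f 1)^2 := by
    rcases hs₂.eq_or_lt with h0 | h0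
    · have h1 := Real.sin_sq_add_cos_sq θ₂
      have h2 := hf.right
      rw [← h0] at h1 h2 ⊢
      have : f 1 = 0 := by
        have h3 : Real.cos θ₂ ≠ 0 := by
          intro h; rw [h] at h1; norm_num at h1
        simpa [h3] using h2
      simp [this]
    · field_simp
      linear_combination (-f 1) * hf.right
  have t0 := sq_zero_le_h1sq hf1
  have t1 := sq_one_le_h1sq hf1
  have u0 := mul_le_mul_of_nonneg_left t0 (mul_nonneg hp0.le hd₁)
  have u1 := mul_le_mul_of_nonneg_left t1 (mul_nonneg hp1.le hd₂)
  have v0 := mul_nonneg (mul_nonneg hp0.le hd₁) (sq_nonneg (f 0))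
  have v1 := mul_nonneg (mul_nonneg hp1.le hd₂) (sq_nonneg (f 1))
  have e : ip (slOp p q f) f = (∫ x in (0:ℝ)..1, (p x * dI f x * dI f x + q x * (f x * f x)))
      + p 1 * (Real.cos θ₂ / Real.sin θ₂) * (f 1)^2
      + p 0 * (Real.cos θ₁ / Real.sin θ₁) * (f 0)^2 := by
    rw [ip_slOp hp hq hf.reg hf.reg]
    linear_combination p 0 * b0 + p 1 * b1
  constructor
  · rw [e]; linarith
  · rw [e]; linarith

theorem hasSum_of_eq {f g : ℕ → ℝ} {a : ℝ} (hg : HasSum g a) (h : ∀ k, f k = g k) :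
    HasSum f a :=
  funext h ▸ hg

theorem RobinDomain.const_mul {θ₁ θ₂ : ℝ} {f : ℝ → ℝ} (hf : RobinDomain θ₁ θ₂ f) (k : ℝ) :
    RobinDomain θ₁ θ₂ (fun x => k * f x) := by
  have hd : ∀ x ∈ Icc (0:ℝ) 1, dI (fun x => k * f x) x = k * dI f x := fun x hx =>
    dI_eq hx ((hasDerivWithinAt_dI (hf.reg.of_le (by norm_num)) hx).const_mul k)
  refine ⟨contDiffOn_const.mul hf.reg, ?_, ?_⟩
  · rw [hd 0 (by simp)]; linear_combination k * hf.left
  · rw [hd 1 (by simp)]; linear_combination k * hf.right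

theorem RobinDomain.add {θ₁ θ₂ : ℝ} {f g : ℝ → ℝ} (hf : RobinDomain θ₁ θ₂ f)
    (hg : RobinDomain θ₁ θ₂ g) : RobinDomain θ₁ θ₂ (fun x => f x + g x) := by
  have hd : ∀ x ∈ Icc (0:ℝ) 1, dI (fun x => f x + g x) x = dI f x + dI g x := fun x hx =>
    dI_eq hx ((hasDerivWithinAt_dI (hf.reg.of_le (by norm_num)) hx).fun_add
      (hasDerivWithinAt_dI (hg.reg.of_le (by norm_num)) hx))
  refine ⟨hf.reg.add hg.reg, ?_, ?_⟩
  · rw [hd 0 (by simp)]; linear_combination hf.left + hg.left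
  · rw [hd 1 (by simp)]; linear_combination hf.right + hg.right

theorem RobinDomain.sum {θ₁ θ₂ : ℝ} {ι : Type*} (s : Finset ι) {F : ι → ℝ → ℝ}
    (hF : ∀ i ∈ s, RobinDomain θ₁ θ₂ (F i)) : RobinDomain θ₁ θ₂ (fun x => ∑ i ∈ s, F i x) := by
  classical
  induction s using Finset.induction_on with
  | empty =>
    have hd : ∀ x ∈ Icc (0:ℝ) 1, dI (fun _ => (0:ℝ)) x = 0 := fun x hx =>
      dI_eq hx (hasDerivWithinAt_const _ _ _)
    simp only [Finset.sum_empty]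
    refine ⟨contDiffOn_const, ?_, ?_⟩
    · rw [hd 0 (by simp)]; ring
    · rw [hd 1 (by simp)]; ring
  | insert a s ha ih =>
    simp only [Finset.sum_insert ha]
    exact (hF a (Finset.mem_insert_self _ _)).add
      (ih fun i hi => hF i (Finset.mem_insert_of_mem hi))

/-- The eigenstructure of a regular Sturm–Liouville problem with Robin boundary conditions. -/
structure SturmLiouville (θ₁ θ₂ : ℝ) (p q : ℝ → ℝ) (lam : ℕ → ℝ) (phi : ℕ → ℝ → ℝ) : Prop where
  angle_left : θ₁ ∈ Set.Ioc 0 (π/2)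
  angle_right : θ₂ ∈ Set.Icc 0 (π/2)
  p_reg : ContDiffOn ℝ 2 p (Set.Icc 0 1)
  p_pos : ∀ x ∈ Set.Icc (0:ℝ) 1, 0 < p x
  q_cont : ContinuousOn q (Set.Icc 0 1)
  q_pos : ∀ x ∈ Set.Icc (0:ℝ) 1, 0 < q x
  lam_pos : ∀ n ≥ 1, 0 < lam n
  lam_lt : ∀ n ≥ 1, lam n < lam (n+1)
  phi_dom : ∀ n ≥ 1, RobinDomain θ₁ θ₂ (phi n)
  phi_eig : ∀ n ≥ 1, ∀ x ∈ Set.Icc (0:ℝ) 1, slOp p q (phi n) x = lam n * phi n x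
  orth : ∀ m ≥ 1, ∀ n ≥ 1, ip (phi m) (phi n) = if m = n then 1 else 0
  parseval : ∀ f : ℝ → ℝ, ContinuousOn f (Set.Icc 0 1) →
      (∫ x in (0:ℝ)..1, (f x)^2) = ∑' k : ℕ, (ip f (phi (k+1)))^2

namespace SturmLiouville

variable {θ₁ θ₂ : ℝ} {p q : ℝ → ℝ} {lam : ℕ → ℝ} {phi : ℕ → ℝ → ℝ}

theorem phi_cont (H : SturmLiouville θ₁ θ₂ p q lam phi) {n : ℕ} (hn : 1 ≤ n) :
    ContinuousOn (phi n) (Icc 0 1) := (H.phi_dom n hn).reg.continuousOn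

theorem lam_le (H : SturmLiouville θ₁ θ₂ p q lam phi) {m n : ℕ} (hm : 1 ≤ m) (hmn : m ≤ n) :
    lam m ≤ lam n := by
  induction n, hmn using Nat.le_induction with
  | base => exact le_rfl
  | succ n hn ih => exact ih.trans (H.lam_lt n (hm.trans hn)).le

theorem hasSum_sq (H : SturmLiouville θ₁ θ₂ p q lam phi) {f : ℝ → ℝ}
    (hf : ContinuousOn f (Icc 0 1)) :
    HasSum (fun k => (ip f (phi (k+1)))^2) (∫ x in (0:ℝ)..1, (f x)^2) := by
  rw [H.parseval f hf]
  by_contra hns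
  have hns' : ¬ Summable (fun k => (ip f (phi (k+1)))^2) := fun hs => hns hs.hasSum
  have h0 : ∫ x in (0:ℝ)..1, (f x)^2 = 0 := by
    rw [H.parseval f hf, tsum_eq_zero_of_not_summable hns']
  apply hns'
  have hz : ∀ k, ip f (phi (k+1)) = 0 := by
    intro k
    set g := phi (k+1) with hg
    have hgc : ContinuousOn g (Icc 0 1) := H.phi_cont (by omega)
    by_contra hne
    have hquad : ∀ s : ℝ, 0 ≤ 2 * s * ip f g + ∫ x in (0:ℝ)..1, (g x)^2 := by
      intro s
      have e : 2 * s * ip f g + ∫ x in (0:ℝ)..1, (g x)^2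
          = ∫ x in (0:ℝ)..1, (s * f x + g x)^2 := by
        have e1 : ∫ x in (0:ℝ)..1, (s * f x + g x)^2
            = ∫ x in (0:ℝ)..1, (s^2 * (f x)^2 + (2 * s * (f x * g x) + (g x)^2)) :=
          unit_integral_congr fun x _ => by ring
        rw [e1, unit_integral_add (by fun_prop) (by fun_prop),
          unit_integral_add (by fun_prop) (by fun_prop), intervalIntegral.integral_const_mul,
          intervalIntegral.integral_const_mul, h0, ip]
        ring
      rw [e]; exact unit_integral_sq_nonneg _
    have := hquad (-((∫ x in (0:ℝ)..1, (g x)^2) + 1) / (2 * ip f g))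
    field_simp at this
    linarith
  simp [hz]

theorem hasSum_ip (H : SturmLiouville θ₁ θ₂ p q lam phi) {f g : ℝ → ℝ}
    (hf : ContinuousOn f (Icc 0 1)) (hg : ContinuousOn g (Icc 0 1)) :
    HasSum (fun k => ip f (phi (k+1)) * ip g (phi (k+1))) (ip f g) := by
  have h1 := H.hasSum_sq (f := fun x => f x + g x) (hf.add hg)
  have h2 := H.hasSum_sq (f := fun x => f x + (-1) * g x) (hf.add (continuousOn_const.mul hg))
  have h3 := (h1.sub h2).mul_left (1/4)
  have e : ip f g = 1 / 4 * ((∫ x in (0:ℝ)..1, (f x + g x)^2)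
      - ∫ x in (0:ℝ)..1, (f x + (-1) * g x)^2) := by
    rw [← intervalIntegral.integral_sub, ← intervalIntegral.integral_const_mul]
    · exact unit_integral_congr fun x _ => by ring
    · exact ContinuousOn.intervalIntegrable_unit (by fun_prop)
    · exact ContinuousOn.intervalIntegrable_unit (by fun_prop)
  rw [e]
  refine hasSum_of_eq h3 fun k => ?_
  have hk := H.phi_cont (n := k+1) (by omega)
  rw [ip_add_left hf hg hk, ip_add_left hf (continuousOn_const.fun_mul hg) hk, ip_const_mul_left]
  ring

theorem coef_slOp (H : SturmLiouville θ₁ θ₂ p q lam phi) {f : ℝ → ℝ}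
    (hf : RobinDomain θ₁ θ₂ f) {n : ℕ} (hn : 1 ≤ n) :
    ip (slOp p q f) (phi n) = lam n * ip f (phi n) := by
  rw [ip_slOp_comm H.p_reg H.q_cont hf (H.phi_dom n hn), ip_comm, ip_congr (H.phi_eig n hn),
    ip_const_mul_left, ip_comm]

theorem hasSum_energy (H : SturmLiouville θ₁ θ₂ p q lam phi) {f : ℝ → ℝ}
    (hf : RobinDomain θ₁ θ₂ f) :
    HasSum (fun k => lam (k+1) * (ip f (phi (k+1)))^2) (ip (slOp p q f) f) := by
  have h := H.hasSum_ip (slOp_continuousOn H.p_reg H.q_cont hf.reg) hf.reg.continuousOn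
  refine hasSum_of_eq h fun k => ?_
  rw [H.coef_slOp hf (by omega)]
  ring

/-- The eigenfunction expansion of an element of the domain converges at the left endpoint. -/
theorem tendsto_trace (H : SturmLiouville θ₁ θ₂ p q lam phi) {f : ℝ → ℝ}
    (hf : RobinDomain θ₁ θ₂ f) :
    Filter.Tendsto (fun M => ∑ k ∈ Finset.range M, ip f (phi (k+1)) * phi (k+1) 0)
      Filter.atTop (nhds (f 0)) := by
  obtain ⟨m, hm, C, -, hmC⟩ := exists_energy_equiv H.angle_left H.angle_right H.p_reg H.p_pos
    H.q_cont H.q_pos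
  set t : ℕ → ℝ := fun k => lam (k+1) * (ip f (phi (k+1)))^2 with ht
  have hE := H.hasSum_energy hf
  set E := ip (slOp p q f) f
  have hfc := hf.reg.continuousOn
  have key : ∀ M, (f 0 - ∑ k ∈ Finset.range M, ip f (phi (k+1)) * phi (k+1) 0)^2
      ≤ 2 / m * (E - ∑ k ∈ Finset.range M, t k) := by
    intro M
    set G : ℝ → ℝ := fun x => ∑ k ∈ Finset.range M, ip f (phi (k+1)) * phi (k+1) x with hG
    have hGd : RobinDomain θ₁ θ₂ G :=
      RobinDomain.sum _ fun k _ => (H.phi_dom (k+1) (by omega)).const_mul _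
    set g : ℝ → ℝ := fun x => f x + (-1) * G x with hg
    have hgd : RobinDomain θ₁ θ₂ g := hf.add (hGd.const_mul _)
    have hcoef : ∀ j, ip g (phi (j+1)) = if j ∈ Finset.range M then 0 else ip f (phi (j+1)) := by
      intro j
      have hj := H.phi_cont (n := j+1) (by omega)
      rw [hg, ip_add_left hfc (continuousOn_const.fun_mul hGd.reg.continuousOn) hj, ip_const_mul_left,
        hG, ip_sum_left _ (fun k _ => continuousOn_const.fun_mul (H.phi_cont (by omega))) hj]
      simp only [ip_const_mul_left, H.orth _ (Nat.le_add_left 1 _) _ (Nat.le_add_left 1 _),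
        Nat.add_right_cancel_iff, mul_ite, mul_one, mul_zero]
      rw [Finset.sum_ite_eq' (Finset.range M) j]
      split_ifs <;> ring
    have hEg := H.hasSum_energy hgd
    have hEg' : HasSum (fun k => lam (k+1) * (ip g (phi (k+1)))^2)
        (E - ∑ k ∈ Finset.range M, t k) := by
      have h1 : HasSum (fun k => if k ∈ Finset.range M then t k else 0)
          (∑ k ∈ Finset.range M, t k) := by
        rw [← Finset.sum_congr rfl
          (fun k hk => if_pos hk : ∀ k ∈ Finset.range M, ite (k ∈ Finset.range M) (t k) 0 = t k)]
        exact hasSum_sum_of_ne_finset_zero fun b hb => if_neg hb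
      refine hasSum_of_eq (hE.sub h1) fun k => ?_
      rw [hcoef]
      split_ifs <;> simp [ht]
    have heq := hEg.unique hEg'
    have h1 := (hmC g hgd).1
    rw [heq] at h1
    have h2 := sq_zero_le_h1sq (hgd.reg.of_le (by norm_num : (1:WithTop ℕ∞) ≤ 2))
    have e0 : f 0 - ∑ k ∈ Finset.range M, ip f (phi (k+1)) * phi (k+1) 0 = g 0 := by
      simp only [hg, hG]; ring
    rw [e0]
    calc (g 0)^2 ≤ 2 * h1sq g := h2
      _ = 2 / m * (m * h1sq g) := by field_simp
      _ ≤ _ := mul_le_mul_of_nonneg_left h1 (by positivity)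
  have hlim : Filter.Tendsto (fun M => 2 / m * (E - ∑ k ∈ Finset.range M, t k))
      Filter.atTop (nhds 0) := by
    have := (hE.tendsto_sum_nat.const_sub E).const_mul (2/m)
    simpa using this
  have hsq := squeeze_zero (fun M => sq_nonneg _) key hlim
  have habs : Filter.Tendsto
      (fun M => f 0 - ∑ k ∈ Finset.range M, ip f (phi (k+1)) * phi (k+1) 0)
      Filter.atTop (nhds 0) := by
    have := hsq.sqrt
    simp only [Real.sqrt_sq_eq_abs, Real.sqrt_zero] at this
    exact (tendsto_zero_iff_abs_tendsto_zero _).2 this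
  simpa using habs.const_sub (f 0)

end SturmLiouville

/-- A Lyapunov–Krasovskii type comparison principle with a distributed delayed term `G`. -/
theorem delay_comparison {h δ η g : ℝ} (hh : 0 < h) (hδ : 0 < δ) (hδη : 2 * δ ≤ η)
    (hδh : Real.exp (2 * δ * h) ≤ 1 + η) {V V' G err : ℝ → ℝ}
    (hV : ContinuousOn V (Ici 0)) (hV0 : ∀ t ≥ 0, 0 ≤ V t)
    (hG : ContinuousOn G (Ici (-h))) (hG0 : ∀ s ≥ -h, 0 ≤ G s)
    (herr : ContinuousOn err (Ici 0))
    (hV' : ∀ t > 0, HasDerivAt V (V' t) t)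
    (hineq : ∀ t > 0, V' t ≤ -η * V t - (1 + η) * G t + G (t - h) + err t)
    (hg : ∀ s ∈ Icc (-h) (0:ℝ), G s ≤ g) {t : ℝ} (ht : 0 ≤ t) :
    Real.exp (2 * δ * t) * V t ≤
      V 0 + (1 + η) * (h * g) + ∫ s in (0:ℝ)..t, Real.exp (2 * δ * s) * err s := by
  have hη : 0 < 1 + η := (Real.exp_pos _).trans_le hδh
  obtain ⟨G₁, hG₁c, hG₁⟩ : ∃ G₁ : ℝ → ℝ, Continuous G₁ ∧ ∀ s ≥ -h, G₁ s = G s :=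
    ⟨fun s => G (max s (-h)), hG.comp_continuous (by fun_prop) fun s => mem_Ici.2 (le_max_right _ _),
      fun s hs => by simp [max_eq_left hs]⟩
  obtain ⟨e₁, he₁c, he₁⟩ : ∃ e₁ : ℝ → ℝ, Continuous e₁ ∧ ∀ s ≥ 0, e₁ s = err s :=
    ⟨fun s => err (max s 0), herr.comp_continuous (by fun_prop) fun s => mem_Ici.2 (le_max_right _ _),
      fun s hs => by simp [max_eq_left hs]⟩
  set J : ℝ → ℝ := fun t => ∫ s in (-h)..t, Real.exp (2 * δ * s) * G₁ s with hJ
  set I : ℝ → ℝ := fun t => ∫ s in (0:ℝ)..t, Real.exp (2 * δ * s) * e₁ s with hI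
  have hJc : Continuous fun s => Real.exp (2 * δ * s) * G₁ s := by fun_prop
  have hIc : Continuous fun s => Real.exp (2 * δ * s) * e₁ s := by fun_prop
  have hJd : ∀ t, HasDerivAt J (Real.exp (2 * δ * t) * G₁ t) t := fun t =>
    intervalIntegral.integral_hasDerivAt_right (hJc.intervalIntegrable _ _)
      (hJc.stronglyMeasurableAtFilter _ _) hJc.continuousAt
  have hId : ∀ t, HasDerivAt I (Real.exp (2 * δ * t) * e₁ t) t := fun t =>
    intervalIntegral.integral_hasDerivAt_right (hIc.intervalIntegrable _ _)
      (hIc.stronglyMeasurableAtFilter _ _) hIc.continuousAt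
  have hJcont : Continuous J := continuous_iff_continuousAt.2 fun t => (hJd t).continuousAt
  have hIcont : Continuous I := continuous_iff_continuousAt.2 fun t => (hId t).continuousAt
  set F : ℝ → ℝ := fun t =>
    Real.exp (2 * δ * t) * V t + (1 + η) * (J t - J (t - h)) - I t with hF
  have hFc : ContinuousOn F (Ici 0) := by
    refine ContinuousOn.sub (ContinuousOn.add (ContinuousOn.mul (by fun_prop) hV) ?_)
      hIcont.continuousOn
    exact (continuous_const.mul (hJcont.sub (hJcont.comp (by fun_prop)))).continuousOn
  have hFd : ∀ t > 0, HasDerivAt F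
      ((Real.exp (2 * δ * t) * (2 * δ)) * V t + Real.exp (2 * δ * t) * V' t
        + (1 + η) * (Real.exp (2 * δ * t) * G₁ t - Real.exp (2 * δ * (t - h)) * G₁ (t - h))
        - Real.exp (2 * δ * t) * e₁ t) t := by
    intro t ht
    have h1 : HasDerivAt (fun t => Real.exp (2 * δ * t)) (Real.exp (2 * δ * t) * (2 * δ)) t := by
      simpa using ((hasDerivAt_id t).const_mul (2 * δ)).exp
    have h2 : HasDerivAt (fun t => J (t - h))
        (Real.exp (2 * δ * (t - h)) * G₁ (t - h)) t := by
      simpa using HasDerivAt.comp_sub_const t h (hJd (t - h))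
    exact ((h1.mul (hV' t ht)).add (((hJd t).sub h2).const_mul (1 + η))).sub (hId t)
  have hFanti : AntitoneOn F (Ici 0) := by
    refine antitoneOn_of_deriv_nonpos (convex_Ici 0) hFc ?_ ?_
    · intro t ht
      rw [interior_Ici] at ht
      exact (hFd t ht).differentiableAt.differentiableWithinAt
    · intro t ht
      rw [interior_Ici] at ht
      rw [(hFd t ht).deriv, hG₁ t (by linarith [ht.out]), hG₁ (t - h) (by linarith [ht.out]),
        he₁ t ht.out.le]
      have hE := Real.exp_pos (2 * δ * t)
      have hi := mul_le_mul_of_nonneg_left (hineq t ht) hE.le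
      have hsplit : Real.exp (2 * δ * t) = Real.exp (2 * δ * (t - h)) * Real.exp (2 * δ * h) := by
        rw [← Real.exp_add]; ring_nf
      have hGn := hG0 (t - h) (by linarith [ht.out])
      have h3 : Real.exp (2 * δ * t) * G (t - h)
          ≤ (1 + η) * (Real.exp (2 * δ * (t - h)) * G (t - h)) := by
        rw [hsplit]
        nlinarith [mul_le_mul_of_nonneg_right hδh
          (mul_nonneg (Real.exp_pos (2 * δ * (t - h))).le hGn)]
      have h4 : Real.exp (2 * δ * t) * V t * (2 * δ) ≤ Real.exp (2 * δ * t) * V t * η :=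
        mul_le_mul_of_nonneg_left hδη (mul_nonneg hE.le (hV0 t ht.out.le))
      linarith
  have hmain := hFanti (mem_Ici.2 le_rfl) ht ht
  have hI0 : I 0 = 0 := by simp [hI]
  have hJ0 : J (0 - h) = 0 := by simp [hJ]
  have hJle : J 0 ≤ h * g := by
    have : J 0 ≤ ∫ _ in (-h)..(0:ℝ), g := by
      refine intervalIntegral.integral_mono_on (by linarith) (hJc.intervalIntegrable _ _)
        (by simp) ?_
      intro s hs
      rw [hG₁ s hs.1]
      have h1 : Real.exp (2 * δ * s) ≤ 1 := Real.exp_le_one_iff.2 (by nlinarith [hs.2])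
      nlinarith [hG0 s hs.1, hg s hs]
    simpa using this
  have hJmono : J (t - h) ≤ J t := by
    have : J t - J (t - h) = ∫ s in (t-h)..t, Real.exp (2 * δ * s) * G₁ s :=
      intervalIntegral.integral_interval_sub_left (hJc.intervalIntegrable _ _)
        (hJc.intervalIntegrable _ _)
    have h2 : 0 ≤ ∫ s in (t-h)..t, Real.exp (2 * δ * s) * G₁ s := by
      refine intervalIntegral.integral_nonneg (by linarith) fun s hs => ?_
      have hs' : s ≥ -h := by linarith [hs.1]
      rw [hG₁ s hs']
      exact mul_nonneg (Real.exp_pos _).le (hG0 s hs')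
    linarith
  have hIt : I t = ∫ s in (0:ℝ)..t, Real.exp (2 * δ * s) * err s := by
    refine intervalIntegral.integral_congr fun s hs => ?_
    rw [Set.uIcc_of_le ht] at hs
    simp only [he₁ s hs.1]
  simp only [hF, hI0, hJ0, mul_zero, Real.exp_zero, one_mul, sub_zero] at hmain
  rw [hIt] at hmain
  nlinarith [mul_nonneg hη.le (sub_nonneg.2 hJmono), mul_le_mul_of_nonneg_left hJle hη.le]

/-- A decay rate compatible with `delay_comparison`. -/
theorem exists_rate {h η : ℝ} (hh : 0 < h) (hη : 0 < η) :
    ∃ δ > 0, 2 * δ ≤ η ∧ Real.exp (2 * δ * h) ≤ 1 + η := by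
  have hl : 0 < Real.log (1 + η) := Real.log_pos (by linarith)
  refine ⟨min (η / 2) (Real.log (1 + η) / (2 * h)), by positivity, ?_, ?_⟩
  · linarith [min_le_left (η / 2) (Real.log (1 + η) / (2 * h))]
  · rw [← Real.le_log_iff_exp_le (by linarith)]
    have := min_le_right (η / 2) (Real.log (1 + η) / (2 * h))
    rw [le_div_iff₀ (by positivity)] at this
    linarith

theorem exists_quad_lower {ι : Type*} [Fintype ι] {A : Matrix ι ι ℝ} (hA : A.PosDef) :
    ∃ ε > (0:ℝ), ∀ x : ι → ℝ, ε * (x ⬝ᵥ x) ≤ x ⬝ᵥ (A *ᵥ x) := by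
  set S : Set (ι → ℝ) := {x | x ⬝ᵥ x = 1}
  have hdc : Continuous fun x : ι → ℝ => x ⬝ᵥ x := by
    unfold dotProduct; fun_prop
  have hAc : Continuous fun x : ι → ℝ => x ⬝ᵥ (A *ᵥ x) := by
    unfold mulVec dotProduct; fun_prop
  have hSc : IsCompact S := by
    refine Metric.isCompact_of_isClosed_isBounded (isClosed_eq hdc continuous_const) ?_
    refine (Metric.isBounded_closedBall (x := (0 : ι → ℝ)) (r := 1)).subset fun x hx => ?_
    rw [mem_closedBall_zero_iff, pi_norm_le_iff_of_nonneg zero_le_one]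
    intro i
    rw [Real.norm_eq_abs, abs_le_one_iff_mul_self_le_one]
    calc x i * x i ≤ ∑ j, x j * x j :=
        Finset.single_le_sum (fun j _ => mul_self_nonneg (x j)) (Finset.mem_univ i)
      _ = 1 := hx
  have hnn : ∀ x : ι → ℝ, 0 ≤ x ⬝ᵥ x := fun x => Finset.sum_nonneg fun i _ => mul_self_nonneg _
  have hscale : ∀ ε : ℝ, (∀ y ∈ S, ε ≤ y ⬝ᵥ (A *ᵥ y)) →
      ∀ x : ι → ℝ, ε * (x ⬝ᵥ x) ≤ x ⬝ᵥ (A *ᵥ x) := by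
    intro ε hε x
    rcases (hnn x).eq_or_lt with h0 | h0
    · have hx : x = 0 := dotProduct_self_eq_zero.1 h0.symm
      simp [hx]
    · set r := Real.sqrt (x ⬝ᵥ x) with hr
      have hr0 : 0 < r := Real.sqrt_pos.2 h0
      have hr2 : r * r = x ⬝ᵥ x := Real.mul_self_sqrt h0.le
      have hy := hε (r⁻¹ • x) (by
        change (r⁻¹ • x) ⬝ᵥ (r⁻¹ • x) = 1
        rw [smul_dotProduct, dotProduct_smul, ← hr2]
        simp only [smul_eq_mul]; field_simp)
      rw [mulVec_smul, smul_dotProduct, dotProduct_smul, smul_eq_mul, smul_eq_mul] at hy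
      rw [← hr2]
      have := mul_le_mul_of_nonneg_left hy (mul_pos hr0 hr0).le
      calc ε * (r * r) = r * r * ε := by ring
        _ ≤ _ := this
        _ = _ := by field_simp
  rcases S.eq_empty_or_nonempty with hS | hS
  · exact ⟨1, one_pos, hscale 1 (by simp [hS])⟩
  · obtain ⟨y, hyS, hy⟩ := hSc.exists_isMinOn hS hAc.continuousOn
    have hy0 : y ≠ 0 := by
      rintro rfl
      simp [S] at hyS
    exact ⟨y ⬝ᵥ (A *ᵥ y), by simpa using hA.dotProduct_mulVec_pos hy0,
      hscale _ fun z hz => hy hz⟩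

theorem exists_quad_upper {ι : Type*} [Fintype ι] (A : Matrix ι ι ℝ) :
    ∃ C > (0:ℝ), ∀ x : ι → ℝ, x ⬝ᵥ (A *ᵥ x) ≤ C * (x ⬝ᵥ x) := by
  refine ⟨1 + ∑ i, ∑ j, |A i j|, by positivity, fun x => ?_⟩
  have hle : ∀ i, x i * x i ≤ x ⬝ᵥ x := fun i =>
    Finset.single_le_sum (fun j _ => mul_self_nonneg (x j)) (Finset.mem_univ i)
  have hnn : 0 ≤ x ⬝ᵥ x := Finset.sum_nonneg fun i _ => mul_self_nonneg _
  have h1 : x ⬝ᵥ (A *ᵥ x) ≤ ∑ i, ∑ j, |A i j| * (x ⬝ᵥ x) := by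
    simp only [dotProduct, mulVec, Finset.mul_sum]
    refine Finset.sum_le_sum fun i _ => Finset.sum_le_sum fun j _ => ?_
    have h2 : |x i * x j| ≤ ∑ k, x k * x k := by
      rw [abs_le]
      have hi := hle i
      have hj := hle j
      simp only [dotProduct] at hi hj
      constructor <;> nlinarith [sq_nonneg (x i + x j), sq_nonneg (x i - x j)]
    calc x i * (A i j * x j) = A i j * (x i * x j) := by ring
      _ ≤ |A i j| * |x i * x j| := by rw [← abs_mul]; exact le_abs_self _
      _ ≤ |A i j| * ∑ k, x k * x k := mul_le_mul_of_nonneg_left h2 (abs_nonneg _)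
      _ = _ := by rw [Finset.mul_sum]
  calc _ ≤ _ := h1
    _ = (∑ i, ∑ j, |A i j|) * (x ⬝ᵥ x) := by simp only [Finset.sum_mul]
    _ ≤ _ := by nlinarith

theorem quad_symm {ι : Type*} [Fintype ι] {P : Matrix ι ι ℝ} (hP : P.IsHermitian) (x y : ι → ℝ) :
    x ⬝ᵥ (P *ᵥ y) = y ⬝ᵥ (P *ᵥ x) := by
  have hT : Pᵀ = P := (conjTranspose_eq_transpose_of_trivial P).symm.trans hP
  rw [dotProduct_mulVec, ← mulVec_transpose, hT, dotProduct_comm]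

/-- Weighted Young inequality for the quadratic form of a positive semidefinite matrix. -/
theorem quad_young {ι : Type*} [Fintype ι] {P : Matrix ι ι ℝ} (hP : P.PosSemidef) (c : ℝ)
    (x y : ι → ℝ) :
    2 * (x ⬝ᵥ (P *ᵥ (c • y))) ≤ |c| * (x ⬝ᵥ (P *ᵥ x)) + |c| * (y ⬝ᵥ (P *ᵥ y)) := by
  have h1 := hP.dotProduct_mulVec_nonneg (x - y)
  have h2 := hP.dotProduct_mulVec_nonneg (x + y)
  simp only [star_trivial, mulVec_sub, mulVec_add, sub_dotProduct, add_dotProduct, dotProduct_sub,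
    dotProduct_add, quad_symm hP.1 y x] at h1 h2
  rw [mulVec_smul, dotProduct_smul, smul_eq_mul]
  rcases abs_cases c with ⟨h, hc⟩ | ⟨h, hc⟩ <;> rw [h] <;> nlinarith

section Psi

variable {N₀ N : ℕ} {P Q1 F1m : Matrix (Fin N₀ ⊕ Fin N₀) (Fin N₀ ⊕ Fin N₀) ℝ}
    {Q2 F3m : Matrix (Fin (N - N₀)) (Fin (N - N₀)) ℝ}
    {F2m : Matrix (Fin N₀ ⊕ Fin N₀) (Fin (N - N₀)) ℝ}
    {Lvv Ktv : Fin N₀ ⊕ Fin N₀ → ℝ} {c r₁ βs γ α₂ α₃ α₄ RNa2 RNb2 : ℝ}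

theorem erow_dotProduct (X : Fin N₀ ⊕ Fin N₀ → ℝ) (Y : Fin (N - N₀) → ℝ) (ζ : ℝ) :
    Erow N₀ N F1m F2m Lvv Ktv ⬝ᵥ (Sum.elim (Sum.elim X Y) fun _ => ζ) =
      Ktv ⬝ᵥ (F1m *ᵥ X + F2m *ᵥ Y + ζ • Lvv) := by
  rw [Erow, sumElim_dotProduct_sumElim, sumElim_dotProduct_sumElim, ← dotProduct_mulVec,
    ← dotProduct_mulVec, dotProduct_add, dotProduct_add, dotProduct_smul]
  simp [dotProduct, mul_comm]

theorem psi_quad (hP : P.IsHermitian) (X : Fin N₀ ⊕ Fin N₀ → ℝ) (Y : Fin (N - N₀) → ℝ) (ζ : ℝ)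
    (E : SIdx N₀ N → ℝ) :
    (Sum.elim (Sum.elim X Y) fun _ => ζ) ⬝ᵥ
      (PsiM N₀ N P Q1 F1m Q2 F3m F2m Lvv Ktv E c r₁ βs γ α₂ α₃ RNa2 RNb2 *ᵥ
        (Sum.elim (Sum.elim X Y) fun _ => ζ)) =
      2 * (X ⬝ᵥ (P *ᵥ (F1m *ᵥ X + F2m *ᵥ Y + ζ • Lvv))) + |c| * (X ⬝ᵥ (P *ᵥ X))
        + X ⬝ᵥ (Q1 *ᵥ X) + α₂ * γ * RNa2 * (Ktv ⬝ᵥ X) ^ 2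
        + r₁ * (2 * (Y ⬝ᵥ (F3m *ᵥ Y)) + |c| * (Y ⬝ᵥ Y)) + Y ⬝ᵥ (Q2 *ᵥ Y) - βs * ζ ^ 2
        + 2 * α₃ * γ * RNb2 * (E ⬝ᵥ (Sum.elim (Sum.elim X Y) fun _ => ζ)) ^ 2 := by
  set ξ : SIdx N₀ N → ℝ := Sum.elim (Sum.elim X Y) fun _ => ζ with hξ
  have hb1 : (Matrix.of fun i (_ : Unit) => Sum.elim (P.mulVec Lvv)
      (fun _ : Fin (N - N₀) => (0:ℝ)) i) *ᵥ (fun _ => ζ) = ζ • Sum.elim (P.mulVec Lvv)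
      (fun _ : Fin (N - N₀) => (0:ℝ)) := by
    ext i; simp [mulVec, dotProduct, mul_comm]
  have hb2 : (Matrix.of fun (_ : Unit) j => Sum.elim (P.mulVec Lvv)
      (fun _ : Fin (N - N₀) => (0:ℝ)) j) *ᵥ (Sum.elim X Y) = fun _ => (P *ᵥ Lvv) ⬝ᵥ X := by
    ext i
    simp [mulVec, dotProduct]
  have hb3 : (Matrix.of fun (_ : Unit) (_ : Unit) => -βs) *ᵥ (fun _ => ζ)
      = fun _ => -βs * ζ := by
    ext i; simp [mulVec, dotProduct]
  have hP1 : X ⬝ᵥ (F1mᵀ *ᵥ (P *ᵥ X)) = X ⬝ᵥ (P *ᵥ (F1m *ᵥ X)) := by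
    rw [dotProduct_mulVec, vecMul_transpose, quad_symm hP]
  have hP2 : Y ⬝ᵥ ((P * F2m)ᵀ *ᵥ X) = X ⬝ᵥ (P *ᵥ (F2m *ᵥ Y)) := by
    rw [dotProduct_mulVec, vecMul_transpose, mulVec_mulVec, dotProduct_comm]
  rw [PsiM, add_mulVec, dotProduct_add, smul_mulVec, dotProduct_smul, vecMulVec_mulVec]
  conv_lhs => enter [1]; rw [hξ]
  rw [fromBlocks_mulVec]
  simp only [Sum.elim_comp_inl, Sum.elim_comp_inr]
  rw [fromBlocks_mulVec]
  simp only [Sum.elim_comp_inl, Sum.elim_comp_inr]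
  rw [sumElim_dotProduct_sumElim, hb1, hb2, hb3, dotProduct_add, sumElim_dotProduct_sumElim,
    dotProduct_smul, sumElim_dotProduct_sumElim]
  simp only [add_mulVec, smul_mulVec, dotProduct_add, dotProduct_smul, vecMulVec_mulVec, hP1, hP2,
    one_mulVec, smul_eq_mul, mulVec_add, mulVec_smul, ← mulVec_mulVec,
    op_smul_eq_smul, dotProduct_comm (P *ᵥ Lvv) X, dotProduct_comm ξ E,
    dotProduct_comm X Ktv]
  have hu : (fun _ : Unit => ζ) ⬝ᵥ (fun _ : Unit => X ⬝ᵥ (P *ᵥ Lvv)) = ζ * (X ⬝ᵥ (P *ᵥ Lvv)) := by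
    simp [dotProduct]
  have hu' : (fun _ : Unit => ζ) ⬝ᵥ (fun _ : Unit => -βs * ζ) = -βs * ζ ^ 2 := by
    simp [dotProduct]; ring
  have h0 : (Y ⬝ᵥ fun _ => (0:ℝ)) = 0 := by simp [dotProduct]
  rw [hu, hu', h0]
  ring

end Psi

/-- Young's inequality `2xy ≤ x²/α + αy²`. -/
theorem two_mul_le_young {α : ℝ} (hα : 0 < α) (x y : ℝ) : 2 * x * y ≤ x ^ 2 / α + α * y ^ 2 := by
  have : 0 ≤ (x - α * y) ^ 2 / α := by positivity
  have e : (x - α * y) ^ 2 / α = x ^ 2 / α - 2 * x * y + α * y ^ 2 := by field_simp; ring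
  linarith

theorem tail_dissipation {α₁ α₂ α₃ α₄ cf c γ q_c l₀ Ra Rb : ℝ} (hα₁ : 0 < α₁) (hα₂ : 0 < α₂)
    (hα₃ : 0 < α₃) (hα₄ : 0 < α₄) (hcf : cf = 1 - (|c|/α₁ + 1/α₂ + 1/α₃ + |c|/α₄)/2)
    (hcfpos : 0 < cf) (hγ : 0 < γ) (hl₀ : 0 < l₀) {l a b : ℕ → ℝ} (hl : ∀ k, l₀ ≤ l k)
    (M : ℕ) (ha : ∑ k ∈ Finset.range M, a k ^ 2 ≤ Ra) (hb : ∑ k ∈ Finset.range M, b k ^ 2 ≤ Rb)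
    (w wh : ℕ → ℝ) (u v uh : ℝ) :
    ∑ k ∈ Finset.range M, 2 * γ * l k * w k *
        ((-l k + q_c) * w k + c * wh k + a k * u + b k * v - c * b k * uh) ≤
      2 * γ * (-cf * l₀ + q_c) * ∑ k ∈ Finset.range M, l k * w k ^ 2
        + γ * α₁ * |c| * ∑ k ∈ Finset.range M, wh k ^ 2
        + γ * α₂ * Ra * u ^ 2 + γ * α₃ * Rb * v ^ 2 + γ * |c| * α₄ * Rb * uh ^ 2 := by
  have hk : ∀ k, 2 * γ * l k * w k *
        ((-l k + q_c) * w k + c * wh k + a k * u + b k * v - c * b k * uh) ≤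
      2 * γ * (-cf * l₀ + q_c) * (l k * w k ^ 2) + γ * α₁ * |c| * wh k ^ 2
        + γ * α₂ * u ^ 2 * a k ^ 2 + γ * α₃ * v ^ 2 * b k ^ 2
        + γ * |c| * α₄ * uh ^ 2 * b k ^ 2 := by
    intro k
    set y := l k * w k with hy
    have hlk : 0 < l k := hl₀.trans_le (hl k)
    have h1 : 2 * y * (c * wh k) ≤ |c| * (y ^ 2 / α₁ + α₁ * wh k ^ 2) := by
      have e1 := two_mul_le_young hα₁ y (wh k)
      have e2 := two_mul_le_young hα₁ y (-wh k)
      rw [neg_sq] at e2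
      rcases abs_cases c with ⟨h, hc⟩ | ⟨h, hc⟩ <;> rw [h] <;> nlinarith
    have h4 : 2 * y * (-c * b k * uh) ≤ |c| * (y ^ 2 / α₄ + α₄ * (b k * uh) ^ 2) := by
      have e1 := two_mul_le_young hα₄ y (b k * uh)
      have e2 := two_mul_le_young hα₄ y (-(b k * uh))
      rw [neg_sq] at e2
      rcases abs_cases c with ⟨h, hc⟩ | ⟨h, hc⟩ <;> rw [h] <;> nlinarith
    have h2 := two_mul_le_young hα₂ y (a k * u)
    have h3 := two_mul_le_young hα₃ y (b k * v)
    have h5 : -2 * y ^ 2 + |c| * (y ^ 2 / α₁) + y ^ 2 / α₂ + y ^ 2 / α₃ + |c| * (y ^ 2 / α₄)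
        = -2 * cf * y ^ 2 := by
      rw [hcf]; ring
    have h6 : cf * l₀ * (l k * w k ^ 2) ≤ cf * y ^ 2 := by
      have : l₀ * (l k * w k ^ 2) ≤ l k * (l k * w k ^ 2) :=
        mul_le_mul_of_nonneg_right (hl k) (by positivity)
      calc _ = cf * (l₀ * (l k * w k ^ 2)) := by ring
        _ ≤ cf * (l k * (l k * w k ^ 2)) := mul_le_mul_of_nonneg_left this hcfpos.le
        _ = _ := by rw [hy]; ring
    have h7 : 2 * l k * w k *
        ((-l k + q_c) * w k + c * wh k + a k * u + b k * v - c * b k * uh)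
        = -2 * y ^ 2 + 2 * q_c * (l k * w k ^ 2) + 2 * y * (c * wh k) + 2 * y * (a k * u)
          + 2 * y * (b k * v) + 2 * y * (-c * b k * uh) := by rw [hy]; ring
    have h8 : 2 * l k * w k *
        ((-l k + q_c) * w k + c * wh k + a k * u + b k * v - c * b k * uh) ≤
      2 * (-cf * l₀ + q_c) * (l k * w k ^ 2) + α₁ * |c| * wh k ^ 2
        + α₂ * u ^ 2 * a k ^ 2 + α₃ * v ^ 2 * b k ^ 2
        + |c| * α₄ * uh ^ 2 * b k ^ 2 := by
      rw [h7]; linarith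
    have h9 := mul_le_mul_of_nonneg_left h8 hγ.le
    calc _ = γ * (2 * l k * w k *
        ((-l k + q_c) * w k + c * wh k + a k * u + b k * v - c * b k * uh)) := by ring
      _ ≤ _ := h9
      _ = _ := by ring
  refine (Finset.sum_le_sum fun k _ => hk k).trans ?_
  simp only [Finset.sum_add_distrib, ← Finset.mul_sum]
  have e1 := mul_le_mul_of_nonneg_left ha (by positivity : 0 ≤ γ * α₂ * u ^ 2)
  have e2 := mul_le_mul_of_nonneg_left hb (by positivity : 0 ≤ γ * α₃ * v ^ 2)
  have e3 := mul_le_mul_of_nonneg_left hb (by positivity : 0 ≤ γ * |c| * α₄ * uh ^ 2)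
  linarith

/-- The linear matrix inequalities of the Lyapunov analysis, together with the data of the residual
modes: eigenvalues `l`, input coefficients `a` and `b`. -/
structure LyapunovLMI {N₀ N : ℕ} (P Q1 F1m : Matrix (Fin N₀ ⊕ Fin N₀) (Fin N₀ ⊕ Fin N₀) ℝ)
    (Q2 F3m : Matrix (Fin (N - N₀)) (Fin (N - N₀)) ℝ)
    (F2m : Matrix (Fin N₀ ⊕ Fin N₀) (Fin (N - N₀)) ℝ) (Lvv Ktv : Fin N₀ ⊕ Fin N₀ → ℝ)
    (c r₁ r₂ βs γ α₁ α₂ α₃ α₄ cf q_c l₀ Ra Rb Mφ : ℝ) (l a b : ℕ → ℝ) : Prop where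
  α₁_pos : 0 < α₁
  α₂_pos : 0 < α₂
  α₃_pos : 0 < α₃
  α₄_pos : 0 < α₄
  cf_eq : cf = 1 - (|c|/α₁ + 1/α₂ + 1/α₃ + |c|/α₄)/2
  cf_pos : 0 < cf
  r₁_pos : 0 < r₁
  r₂_pos : 0 < r₂
  βs_pos : 0 < βs
  γ_pos : 0 < γ
  P_pos : P.PosDef
  Q1_nonneg : Q1.PosSemidef
  Q2_nonneg : Q2.PosSemidef
  psi_neg : (-(PsiM N₀ N P Q1 F1m Q2 F3m F2m Lvv Ktv (Erow N₀ N F1m F2m Lvv Ktv)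
      c r₁ βs γ α₂ α₃ Ra Rb)).PosDef
  theta1_neg : (-(Theta1 N₀ P Q1 Ktv c γ α₃ α₄ Rb)).PosDef
  theta2_neg : (-(Theta2 N₀ N Q2 r₁ c)).PosDef
  theta3_neg : γ * α₁ * |c| - r₂ < 0
  theta4_neg : 2*γ*(-cf * l₀ + q_c) + βs * Mφ + r₂ / l₀ < 0
  Mφ_nonneg : 0 ≤ Mφ
  l₀_pos : 0 < l₀
  le_l : ∀ k, l₀ ≤ l k
  sum_a : ∀ M, ∑ k ∈ Finset.range M, a k ^ 2 ≤ Ra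
  sum_b : ∀ M, ∑ k ∈ Finset.range M, b k ^ 2 ≤ Rb

namespace LyapunovLMI

variable {N₀ N : ℕ} {P Q1 F1m : Matrix (Fin N₀ ⊕ Fin N₀) (Fin N₀ ⊕ Fin N₀) ℝ}
    {Q2 F3m : Matrix (Fin (N - N₀)) (Fin (N - N₀)) ℝ}
    {F2m : Matrix (Fin N₀ ⊕ Fin N₀) (Fin (N - N₀)) ℝ} {Lvv Ktv : Fin N₀ ⊕ Fin N₀ → ℝ}
    {c r₁ r₂ βs γ α₁ α₂ α₃ α₄ cf q_c l₀ Ra Rb Mφ : ℝ} {l a b : ℕ → ℝ}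

theorem dissipation (H : LyapunovLMI P Q1 F1m Q2 F3m F2m Lvv Ktv c r₁ r₂ βs γ α₁ α₂ α₃ α₄ cf q_c
      l₀ Ra Rb Mφ l a b) :
    ∃ η > (0:ℝ), ∀ (X Xh X' : Fin N₀ ⊕ Fin N₀ → ℝ) (Y Yh Y' : Fin (N - N₀) → ℝ) (w wh w' : ℕ → ℝ)
      (ζ uh : ℝ) (M : ℕ), X' = F1m *ᵥ X + F2m *ᵥ Y + ζ • Lvv + c • Xh →
      Y' = F3m *ᵥ Y + c • Yh →
      (∀ k, w' k = (-l k + q_c) * w k + c * wh k + a k * (Ktv ⬝ᵥ X) + b k * (Ktv ⬝ᵥ X')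
        - c * b k * uh) →
      2 * (X ⬝ᵥ (P *ᵥ X')) + 2 * r₁ * (Y ⬝ᵥ Y')
          + ∑ k ∈ Finset.range M, 2 * γ * l k * w k * w' k ≤
        -η * (X ⬝ᵥ (P *ᵥ X) + r₁ * (Y ⬝ᵥ Y) + γ * ∑ k ∈ Finset.range M, l k * w k ^ 2)
          - (1 + η) * (X ⬝ᵥ (Q1 *ᵥ X) + Y ⬝ᵥ (Q2 *ᵥ Y) + r₂ * ∑ k ∈ Finset.range M, w k ^ 2)
          + (Xh ⬝ᵥ (Q1 *ᵥ Xh) + Yh ⬝ᵥ (Q2 *ᵥ Yh) + r₂ * ∑ k ∈ Finset.range M, wh k ^ 2)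
          + γ * |c| * α₄ * Rb * (uh ^ 2 - (Ktv ⬝ᵥ Xh) ^ 2)
          + βs * max 0 (ζ ^ 2 - Mφ * ∑ k ∈ Finset.range M, l k * w k ^ 2) := by
  obtain ⟨ε, hε, hΨ⟩ := exists_quad_lower H.psi_neg
  obtain ⟨CP, hCP, hCP'⟩ := exists_quad_upper P
  obtain ⟨C1, hC1, hC1'⟩ := exists_quad_upper Q1
  obtain ⟨C2, hC2, hC2'⟩ := exists_quad_upper Q2
  set Θ := -(2*γ*(-cf * l₀ + q_c) + βs * Mφ + r₂ / l₀) with hΘ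
  have hΘ0 : 0 < Θ := by have := H.theta4_neg; linarith
  have hγ := H.γ_pos
  have hr₁ := H.r₁_pos
  have hr₂ := H.r₂_pos
  have hl₀ := H.l₀_pos
  have hα₃ := H.α₃_pos
  have hRb : 0 ≤ Rb := by simpa using H.sum_b 0
  set η := min (ε / (CP + C1)) (min (ε / (r₁ + C2)) (Θ / (γ + r₂ / l₀))) with hη
  have hη0 : 0 < η := by positivity
  have hη1 : η * (CP + C1) ≤ ε := by
    rw [← le_div_iff₀ (by positivity)]; exact min_le_left _ _
  have hη2 : η * (r₁ + C2) ≤ ε := by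
    rw [← le_div_iff₀ (by positivity)]; exact (min_le_right _ _).trans (min_le_left _ _)
  have hη3 : η * (γ + r₂ / l₀) ≤ Θ := by
    rw [← le_div_iff₀ (by positivity)]; exact (min_le_right _ _).trans (min_le_right _ _)
  refine ⟨η, hη0, ?_⟩
  intro X Xh X' Y Yh Y' w wh w' ζ uh M hX' hY' hw'
  have hnn : ∀ {ι : Type} [Fintype ι] (x : ι → ℝ), 0 ≤ x ⬝ᵥ x :=
    fun x => Finset.sum_nonneg fun i _ => mul_self_nonneg _
  simp only [hw']
  set S := ∑ k ∈ Finset.range M, l k * w k ^ 2 with hS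
  set T := ∑ k ∈ Finset.range M, w k ^ 2 with hT
  set Th := ∑ k ∈ Finset.range M, wh k ^ 2 with hTh
  have hTS : T ≤ S / l₀ := by
    rw [le_div_iff₀ hl₀, hT, hS, Finset.sum_mul]
    refine Finset.sum_le_sum fun k _ => ?_
    rw [mul_comm]
    exact mul_le_mul_of_nonneg_right (H.le_l k) (sq_nonneg _)
  have hT0 : 0 ≤ T := Finset.sum_nonneg fun k _ => sq_nonneg _
  have hTh0 : 0 ≤ Th := Finset.sum_nonneg fun k _ => sq_nonneg _
  have hS0 : 0 ≤ S := Finset.sum_nonneg fun k _ =>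
    mul_nonneg (hl₀.trans_le (H.le_l k)).le (sq_nonneg _)
  have htail := tail_dissipation (q_c := q_c) H.α₁_pos H.α₂_pos H.α₃_pos H.α₄_pos H.cf_eq H.cf_pos
    hγ hl₀ H.le_l M (H.sum_a M) (H.sum_b M) w wh (Ktv ⬝ᵥ X) (Ktv ⬝ᵥ X') uh
  set f := F1m *ᵥ X + F2m *ᵥ Y + ζ • Lvv with hf
  have hv : Ktv ⬝ᵥ X' = Ktv ⬝ᵥ f + c * (Ktv ⬝ᵥ Xh) := by
    rw [hX', dotProduct_add, dotProduct_smul, smul_eq_mul]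
  have hv2 : (Ktv ⬝ᵥ X') ^ 2 ≤ 2 * (Ktv ⬝ᵥ f) ^ 2 + 2 * (|c| * |c|) * (Ktv ⬝ᵥ Xh) ^ 2 := by
    rw [hv, abs_mul_abs_self]
    nlinarith [sq_nonneg (Ktv ⬝ᵥ f - c * (Ktv ⬝ᵥ Xh))]
  have hv3 := mul_le_mul_of_nonneg_left hv2 (by positivity : 0 ≤ γ * α₃ * Rb)
  have hψ := psi_quad (P := P) (Q1 := Q1) (F1m := F1m) (Q2 := Q2) (F3m := F3m) (F2m := F2m)
    (Lvv := Lvv) (Ktv := Ktv) (c := c) (r₁ := r₁) (βs := βs) (γ := γ) (α₂ := α₂) (α₃ := α₃)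
    (RNa2 := Ra) (RNb2 := Rb) H.P_pos.isHermitian X Y ζ (Erow N₀ N F1m F2m Lvv Ktv)
  rw [erow_dotProduct, ← hf] at hψ
  have hΨ1 := hΨ (Sum.elim (Sum.elim X Y) fun _ => ζ)
  rw [neg_mulVec, dotProduct_neg, hψ, sumElim_dotProduct_sumElim, sumElim_dotProduct_sumElim]
    at hΨ1
  have hξ : ε * (X ⬝ᵥ X + Y ⬝ᵥ Y) ≤
      ε * (X ⬝ᵥ X + Y ⬝ᵥ Y + (fun _ : Unit => ζ) ⬝ᵥ fun _ => ζ) :=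
    mul_le_mul_of_nonneg_left (by linarith [hnn (fun _ : Unit => ζ)]) hε.le
  have hθ1 := H.theta1_neg.posSemidef.dotProduct_mulVec_nonneg Xh
  rw [star_trivial, neg_mulVec, dotProduct_neg, Theta1, add_mulVec, sub_mulVec, smul_mulVec,
    smul_mulVec, vecMulVec_mulVec, dotProduct_add, dotProduct_sub, dotProduct_smul,
    dotProduct_smul, op_smul_eq_smul, dotProduct_smul, dotProduct_comm Xh Ktv] at hθ1
  have hθ2 := H.theta2_neg.posSemidef.dotProduct_mulVec_nonneg Yh
  rw [star_trivial, neg_mulVec, dotProduct_neg, Theta2, sub_mulVec, smul_mulVec, one_mulVec,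
    dotProduct_sub, dotProduct_smul] at hθ2
  simp only [smul_eq_mul] at hθ1 hθ2
  have hx := quad_young H.P_pos.posSemidef c X Xh
  have hy := quad_young (PosSemidef.one (n := Fin (N - N₀)) (R := ℝ)) c Y Yh
  simp only [one_mulVec] at hy
  have hxe : X ⬝ᵥ (P *ᵥ X') = X ⬝ᵥ (P *ᵥ f) + X ⬝ᵥ (P *ᵥ (c • Xh)) := by
    rw [hX', mulVec_add, dotProduct_add]
  have hye : Y ⬝ᵥ Y' = Y ⬝ᵥ (F3m *ᵥ Y) + Y ⬝ᵥ (c • Yh) := by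
    rw [hY', dotProduct_add]
  have hy2 := mul_le_mul_of_nonneg_left hy hr₁.le
  have hζ : βs * ζ ^ 2 ≤ βs * Mφ * S + βs * max 0 (ζ ^ 2 - Mφ * S) := by
    have := mul_le_mul_of_nonneg_left (le_max_right 0 (ζ ^ 2 - Mφ * S)) H.βs_pos.le
    linarith
  have h4 : 2 * γ * (-cf * l₀ + q_c) * S + βs * Mφ * S + r₂ * T ≤ -Θ * S := by
    have e : r₂ * T ≤ r₂ / l₀ * S := by
      calc r₂ * T ≤ r₂ * (S / l₀) := mul_le_mul_of_nonneg_left hTS hr₂.le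
        _ = _ := by ring
    have : -Θ * S = 2 * γ * (-cf * l₀ + q_c) * S + βs * Mφ * S + r₂ / l₀ * S := by rw [hΘ]; ring
    linarith
  have h3 : γ * α₁ * |c| * Th ≤ r₂ * Th :=
    mul_le_mul_of_nonneg_right (by linarith [H.theta3_neg]) hTh0
  have hηX : η * (X ⬝ᵥ (P *ᵥ X) + X ⬝ᵥ (Q1 *ᵥ X)) ≤ ε * (X ⬝ᵥ X) := by
    calc _ ≤ η * ((CP + C1) * (X ⬝ᵥ X)) :=
          mul_le_mul_of_nonneg_left (by linarith [hCP' X, hC1' X]) hη0.le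
      _ = η * (CP + C1) * (X ⬝ᵥ X) := by ring
      _ ≤ _ := mul_le_mul_of_nonneg_right hη1 (hnn X)
  have hηY : η * (r₁ * (Y ⬝ᵥ Y) + Y ⬝ᵥ (Q2 *ᵥ Y)) ≤ ε * (Y ⬝ᵥ Y) := by
    calc _ ≤ η * ((r₁ + C2) * (Y ⬝ᵥ Y)) :=
          mul_le_mul_of_nonneg_left (by linarith [hC2' Y]) hη0.le
      _ = η * (r₁ + C2) * (Y ⬝ᵥ Y) := by ring
      _ ≤ _ := mul_le_mul_of_nonneg_right hη2 (hnn Y)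
  have hηS : η * (γ * S + r₂ * T) ≤ Θ * S := by
    calc _ ≤ η * (γ * S + r₂ * (S / l₀)) :=
          mul_le_mul_of_nonneg_left (by gcongr) hη0.le
      _ = η * (γ + r₂ / l₀) * S := by ring
      _ ≤ _ := mul_le_mul_of_nonneg_right hη3 hS0
  rw [hxe, hye]
  linarith

end LyapunovLMI

theorem HasDerivAt.dotProduct {ι : Type*} [Fintype ι] {X Y : ℝ → ι → ℝ} {X' Y' : ι → ℝ} {t : ℝ}
    (hX : HasDerivAt X X' t) (hY : HasDerivAt Y Y' t) :
    HasDerivAt (fun s => X s ⬝ᵥ Y s) (X' ⬝ᵥ Y t + X t ⬝ᵥ Y') t := by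
  simp only [_root_.dotProduct, ← Finset.sum_add_distrib]
  exact HasDerivAt.fun_sum fun i _ => (hasDerivAt_pi.1 hX i).fun_mul (hasDerivAt_pi.1 hY i)

theorem HasDerivAt.quad {ι : Type*} [Fintype ι] {A : Matrix ι ι ℝ} (hA : A.IsHermitian)
    {X : ℝ → ι → ℝ} {X' : ι → ℝ} {t : ℝ} (hX : HasDerivAt X X' t) :
    HasDerivAt (fun s => X s ⬝ᵥ (A *ᵥ X s)) (2 * (X t ⬝ᵥ (A *ᵥ X'))) t := by
  have h1 : HasDerivAt (fun s => A *ᵥ X s) (A *ᵥ X') t :=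
    (LinearMap.toContinuousLinearMap A.mulVecLin).hasFDerivAt.comp_hasDerivAt t hX
  have h2 := hX.dotProduct h1
  rwa [quad_symm hA X', ← two_mul] at h2

theorem ContinuousOn.quad {ι : Type*} [Fintype ι] (A : Matrix ι ι ℝ)
    {X : ℝ → ι → ℝ} {s : Set ℝ} (hX : ContinuousOn X s) :
    ContinuousOn (fun s => X s ⬝ᵥ (A *ᵥ X s)) s := by
  have : Continuous fun x : ι → ℝ => x ⬝ᵥ (A *ᵥ x) := by
    unfold mulVec dotProduct; fun_prop
  exact this.comp_continuousOn hX

theorem ContinuousOn.dotProduct_self {ι : Type*} [Fintype ι]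
    {X : ℝ → ι → ℝ} {s : Set ℝ} (hX : ContinuousOn X s) :
    ContinuousOn (fun s => X s ⬝ᵥ X s) s := by
  have : Continuous fun x : ι → ℝ => x ⬝ᵥ x := by
    unfold dotProduct; fun_prop
  exact this.comp_continuousOn hX

theorem sq_dotProduct_le {ι : Type*} [Fintype ι] (x y : ι → ℝ) :
    (x ⬝ᵥ y) ^ 2 ≤ (x ⬝ᵥ x) * (y ⬝ᵥ y) := by
  simpa [dotProduct, sq] using Finset.sum_mul_sq_le_sq_mul_sq Finset.univ x y

theorem dotProduct_self_nonneg' {ι : Type*} [Fintype ι] (x : ι → ℝ) : 0 ≤ x ⬝ᵥ x :=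
  Finset.sum_nonneg fun _ _ => mul_self_nonneg _

/-- If the defects tend to zero pointwise and are dominated, so do their weighted integrals. -/
theorem tendsto_integral_defect {δ βs t : ℝ} (ht : 0 ≤ t) {ζ : ℝ → ℝ} {S : ℕ → ℝ → ℝ}
    (hζ : ContinuousOn ζ (Ici 0)) (hS : ∀ M, ContinuousOn (S M) (Ici 0))
    (hS0 : ∀ M s, 0 ≤ S M s)
    (hlim : ∀ s ≥ 0, Filter.Tendsto (fun M => max 0 (ζ s ^ 2 - S M s)) Filter.atTop (nhds 0)) :
    Filter.Tendsto (fun M => ∫ s in (0:ℝ)..t,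
      Real.exp (2 * δ * s) * (βs * max 0 (ζ s ^ 2 - S M s))) Filter.atTop (nhds 0) := by
  have hsub : Icc 0 t ⊆ Ici (0:ℝ) := fun s hs => hs.1
  have hsub' : Set.uIoc (0:ℝ) t ⊆ Icc 0 t := by
    rw [uIoc_of_le ht]; exact Ioc_subset_Icc_self
  have hexp : Continuous fun s : ℝ => Real.exp (2 * δ * s) := by fun_prop
  have key := intervalIntegral.tendsto_integral_filter_of_dominated_convergence
    (μ := volume) (a := 0) (b := t) (l := Filter.atTop)
    (F := fun M s => Real.exp (2 * δ * s) * (βs * max 0 (ζ s ^ 2 - S M s)))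
    (f := fun _ => (0:ℝ)) (fun s => Real.exp (2 * δ * s) * (|βs| * ζ s ^ 2)) ?_ ?_ ?_ ?_
  · simpa using key
  · refine Filter.Eventually.of_forall fun M => ?_
    have hc : ContinuousOn (fun s => Real.exp (2 * δ * s) * (βs * max 0 (ζ s ^ 2 - S M s)))
        (Icc 0 t) := by
      refine hexp.continuousOn.mul (continuousOn_const.mul (continuousOn_const.sup ?_))
      exact ((hζ.mono hsub).pow 2).sub ((hS M).mono hsub)
    exact (hc.aestronglyMeasurable measurableSet_Icc).mono_set hsub'
  · refine Filter.Eventually.of_forall fun M => Filter.Eventually.of_forall fun s hs => ?_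
    rw [norm_mul, norm_mul, Real.norm_eq_abs, Real.norm_eq_abs, Real.norm_eq_abs,
      abs_of_pos (Real.exp_pos _), abs_of_nonneg (le_max_left 0 (ζ s ^ 2 - S M s))]
    gcongr
    exact max_le (sq_nonneg _) (by linarith [hS0 M s])
  · refine ContinuousOn.intervalIntegrable ?_
    rw [uIcc_of_le ht]
    exact hexp.continuousOn.mul (continuousOn_const.mul ((hζ.mono hsub).pow 2))
  · refine Filter.Eventually.of_forall fun s hs => ?_
    have := (((hlim s (hsub' hs).1).const_mul βs).const_mul (Real.exp (2 * δ * s)))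
    simpa using this

namespace LyapunovLMI

variable {N₀ N : ℕ} {P Q1 F1m : Matrix (Fin N₀ ⊕ Fin N₀) (Fin N₀ ⊕ Fin N₀) ℝ}
    {Q2 F3m : Matrix (Fin (N - N₀)) (Fin (N - N₀)) ℝ}
    {F2m : Matrix (Fin N₀ ⊕ Fin N₀) (Fin (N - N₀)) ℝ} {Lvv Ktv : Fin N₀ ⊕ Fin N₀ → ℝ}
    {c r₁ r₂ βs γ α₁ α₂ α₃ α₄ cf q_c l₀ Ra Rb Mφ : ℝ} {l a b : ℕ → ℝ}

/-- Exponential decay of the truncated model coupled with the residual modes. -/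
theorem decay (H : LyapunovLMI P Q1 F1m Q2 F3m F2m Lvv Ktv c r₁ r₂ βs γ α₁ α₂ α₃ α₄ cf q_c
      l₀ Ra Rb Mφ l a b) {h : ℝ} (hh : 0 < h) :
    ∃ δ > (0:ℝ), ∃ C > (0:ℝ), ∀ (X : ℝ → Fin N₀ ⊕ Fin N₀ → ℝ) (Y : ℝ → Fin (N - N₀) → ℝ)
      (w : ℕ → ℝ → ℝ) (u ζ : ℝ → ℝ) (D : ℝ),
      ContinuousOn X (Ici (-h)) → ContinuousOn Y (Ici (-h)) →
      (∀ k, ContinuousOn (w k) (Ici (-h))) → ContinuousOn u (Ici (-h)) → ContinuousOn ζ (Ici 0) →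
      (∀ t > 0, HasDerivAt X (F1m *ᵥ X t + F2m *ᵥ Y t + ζ t • Lvv + c • X (t - h)) t) →
      (∀ t > 0, HasDerivAt Y (F3m *ᵥ Y t + c • Y (t - h)) t) →
      (∀ k, ∀ t > 0, HasDerivAt (w k) ((-l k + q_c) * w k t + c * w k (t - h)
        + a k * (Ktv ⬝ᵥ X t)
        + b k * (Ktv ⬝ᵥ (F1m *ᵥ X t + F2m *ᵥ Y t + ζ t • Lvv + c • X (t - h)))
        - c * b k * u (t - h)) t) →
      (∀ t ≥ 0, u t = Ktv ⬝ᵥ X t) →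
      (∀ t ≥ 0, Filter.Tendsto (fun M => max 0 (ζ t ^ 2
        - Mφ * ∑ k ∈ Finset.range M, l k * w k t ^ 2)) Filter.atTop (nhds 0)) →
      (∀ s ∈ Icc (-h) (0:ℝ), X s ⬝ᵥ X s ≤ D ∧ Y s ⬝ᵥ Y s ≤ D ∧ u s ^ 2 ≤ D ∧
        ∀ M, ∑ k ∈ Finset.range M, w k s ^ 2 ≤ D) →
      (∀ M, ∑ k ∈ Finset.range M, l k * w k 0 ^ 2 ≤ D) →
      ∀ t ≥ 0, ∀ M, X t ⬝ᵥ X t + Y t ⬝ᵥ Y t + ∑ k ∈ Finset.range M, l k * w k t ^ 2 ≤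
        C * Real.exp (-2 * δ * t) * D := by
  obtain ⟨η, hη, hdiss⟩ := H.dissipation
  obtain ⟨δ, hδ, hδη, hδh⟩ := exists_rate hh hη
  obtain ⟨ε, hε, hPε⟩ := exists_quad_lower H.P_pos
  obtain ⟨CP, hCP, hCP'⟩ := exists_quad_upper P
  obtain ⟨C1, hC1, hC1'⟩ := exists_quad_upper Q1
  obtain ⟨C2, hC2, hC2'⟩ := exists_quad_upper Q2
  have hγ := H.γ_pos
  have hr₁ := H.r₁_pos
  have hr₂ := H.r₂_pos
  have hα₄ := H.α₄_pos
  have hRb : 0 ≤ Rb := by simpa using H.sum_b 0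
  set κ := γ * |c| * α₄ * Rb with hκ
  have hκ0 : 0 ≤ κ := by positivity
  set kk := Ktv ⬝ᵥ Ktv with hkk
  have hkk0 : 0 ≤ kk := dotProduct_self_nonneg' _
  set A := (CP + r₁ + γ) + (1 + η) * (h * (C1 + C2 + r₂ + κ * (1 + kk))) with hA
  have hA0 : 0 < A := by positivity
  set m := min ε (min r₁ γ) with hm
  have hm0 : 0 < m := by positivity
  refine ⟨δ, hδ, A / m, by positivity, ?_⟩
  intro X Y w u ζ D hX hY hw hu hζ hX' hY' hw' huX hlim hD hD' t ht M₀
  have hl0 : ∀ k, 0 ≤ l k := fun k => (H.l₀_pos.trans_le (H.le_l k)).le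
  have hsub : Ici (0:ℝ) ⊆ Ici (-h) := Ici_subset_Ici.2 (by linarith)
  have hD0 : 0 ≤ D := (dotProduct_self_nonneg' _).trans (hD 0 ⟨by linarith, le_rfl⟩).1
  set S : ℕ → ℝ → ℝ := fun M s => ∑ k ∈ Finset.range M, l k * w k s ^ 2 with hS
  set T : ℕ → ℝ → ℝ := fun M s => ∑ k ∈ Finset.range M, w k s ^ 2 with hT
  have hS0 : ∀ M s, 0 ≤ S M s := fun M s =>
    Finset.sum_nonneg fun k _ => mul_nonneg (hl0 k) (sq_nonneg _)
  have hT0 : ∀ M s, 0 ≤ T M s := fun M s => Finset.sum_nonneg fun k _ => sq_nonneg _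
  have hSc : ∀ M, ContinuousOn (S M) (Ici (-h)) := fun M =>
    continuousOn_finsetSum _ fun k _ => continuousOn_const.mul ((hw k).pow 2)
  have hTc : ∀ M, ContinuousOn (T M) (Ici (-h)) := fun M =>
    continuousOn_finsetSum _ fun k _ => (hw k).pow 2
  set V : ℕ → ℝ → ℝ := fun M s => X s ⬝ᵥ (P *ᵥ X s) + r₁ * (Y s ⬝ᵥ Y s) + γ * S M s with hV
  set E : ℝ → ℝ := fun s => κ * |u s ^ 2 - (Ktv ⬝ᵥ X s) ^ 2| with hE
  set G : ℕ → ℝ → ℝ := fun M s =>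
    X s ⬝ᵥ (Q1 *ᵥ X s) + Y s ⬝ᵥ (Q2 *ᵥ Y s) + r₂ * T M s + E s with hG
  set err : ℕ → ℝ → ℝ := fun M s => βs * max 0 (ζ s ^ 2 - Mφ * S M s) with herr
  set X' : ℝ → Fin N₀ ⊕ Fin N₀ → ℝ := fun t =>
    F1m *ᵥ X t + F2m *ᵥ Y t + ζ t • Lvv + c • X (t - h) with hX'd
  set w' : ℕ → ℝ → ℝ := fun k t => (-l k + q_c) * w k t + c * w k (t - h)
        + a k * (Ktv ⬝ᵥ X t) + b k * (Ktv ⬝ᵥ X' t) - c * b k * u (t - h) with hw'd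
  have hE0 : ∀ s, 0 ≤ E s := fun s => mul_nonneg hκ0 (abs_nonneg _)
  have hEz : ∀ s ≥ 0, E s = 0 := fun s hs => by simp [hE, huX s hs]
  have hKc : ContinuousOn (fun s => Ktv ⬝ᵥ X s) (Ici (-h)) := by
    have : Continuous fun x : Fin N₀ ⊕ Fin N₀ → ℝ => Ktv ⬝ᵥ x := by
      unfold dotProduct; fun_prop
    exact this.comp_continuousOn hX
  have hGc : ∀ M, ContinuousOn (G M) (Ici (-h)) := fun M =>
    (((hX.quad Q1).add (hY.quad Q2)).add (continuousOn_const.mul (hTc M))).add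
      (continuousOn_const.mul ((hu.pow 2).sub (hKc.pow 2)).abs)
  have hbound : ∀ M, Real.exp (2 * δ * t) * V M t ≤
      A * D + ∫ s in (0:ℝ)..t, Real.exp (2 * δ * s) * err M s := by
    intro M
    have h1 := delay_comparison (V := V M) (G := G M) (err := err M)
      (V' := fun t => 2 * (X t ⬝ᵥ (P *ᵥ X' t)) + 2 * r₁ * (Y t ⬝ᵥ (F3m *ᵥ Y t + c • Y (t - h)))
          + ∑ k ∈ Finset.range M, 2 * γ * l k * w k t * w' k t)
      (g := (C1 + C2 + r₂ + κ * (1 + kk)) * D) hh hδ hδη hδh ?_ ?_ (hGc M) ?_ ?_ ?_ ?_ ?_ ht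
    · have h2 : V M 0 ≤ (CP + r₁ + γ) * D := by
        obtain ⟨d1, d2, -, -⟩ := hD 0 ⟨by linarith, le_rfl⟩
        have e1 := mul_le_mul_of_nonneg_left d1 hCP.le
        have e2 := mul_le_mul_of_nonneg_left d2 hr₁.le
        have e3 := mul_le_mul_of_nonneg_left (hD' M) hγ.le
        have e4 := hCP' (X 0)
        simp only [hV, hS]
        linarith
      have h3 : A * D = (CP + r₁ + γ) * D
          + (1 + η) * (h * ((C1 + C2 + r₂ + κ * (1 + kk)) * D)) := by rw [hA]; ring
      linarith
    · exact (((hX.quad P).add (continuousOn_const.mul hY.dotProduct_self)).add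
        (continuousOn_const.mul (hSc M))).mono hsub
    · intro s _
      have e1 := (mul_nonneg hε.le (dotProduct_self_nonneg' (X s))).trans (hPε (X s))
      have e2 := mul_nonneg hr₁.le (dotProduct_self_nonneg' (Y s))
      have e3 := mul_nonneg hγ.le (hS0 M s)
      simp only [hV]; linarith
    · intro s _
      have e1 := H.Q1_nonneg.dotProduct_mulVec_nonneg (X s)
      have e2 := H.Q2_nonneg.dotProduct_mulVec_nonneg (Y s)
      rw [star_trivial] at e1 e2
      have e3 := mul_nonneg hr₂.le (hT0 M s)
      have e4 := hE0 s
      simp only [hG]; linarith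
    · exact continuousOn_const.mul (continuousOn_const.sup
        ((hζ.pow 2).sub (continuousOn_const.mul ((hSc M).mono hsub))))
    · intro s hs
      have d1 := (hX' s hs).quad H.P_pos.isHermitian
      have d2 := (((hY' s hs).dotProduct (hY' s hs)).const_mul r₁)
      have d3 : HasDerivAt (S M) (∑ k ∈ Finset.range M, l k * (2 * w k s * w' k s)) s := by
        refine HasDerivAt.fun_sum fun k _ => ?_
        refine (((hw' k s hs).fun_pow 2).const_mul (l k)).congr_deriv ?_
        change l k * (((2:ℕ):ℝ) * w k s ^ (2-1) * w' k s) = _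
        norm_num
      refine ((d1.fun_add d2).fun_add (d3.const_mul γ)).congr_deriv ?_
      rw [Finset.mul_sum, dotProduct_comm (F3m *ᵥ Y s + c • Y (s - h)) (Y s)]
      congr 1
      · ring
      · exact Finset.sum_congr rfl fun k _ => by ring
    · intro s hs
      have d := hdiss (X s) (X (s - h)) (X' s) (Y s) (Y (s - h)) (F3m *ᵥ Y s + c • Y (s - h))
        (fun k => w k s) (fun k => w k (s - h)) (fun k => w' k s) (ζ s) (u (s - h)) M rfl rfl
        (fun k => rfl)
      have e1 : κ * (u (s - h) ^ 2 - (Ktv ⬝ᵥ X (s - h)) ^ 2) ≤ E (s - h) :=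
        mul_le_mul_of_nonneg_left (le_abs_self _) hκ0
      have e2 := hEz s (le_of_lt hs)
      simp only [hG, hV, herr, e2, hS, hT] at *
      linarith
    · intro s hs
      obtain ⟨d1, d2, d3, d4⟩ := hD s hs
      have e1 := (hC1' (X s)).trans (mul_le_mul_of_nonneg_left d1 hC1.le)
      have e2 := (hC2' (Y s)).trans (mul_le_mul_of_nonneg_left d2 hC2.le)
      have e3 := mul_le_mul_of_nonneg_left (d4 M) hr₂.le
      have e4 : |u s ^ 2 - (Ktv ⬝ᵥ X s) ^ 2| ≤ (1 + kk) * D := by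
        have f1 := (sq_dotProduct_le Ktv (X s)).trans (mul_le_mul_of_nonneg_left d1 hkk0)
        rw [abs_le]
        constructor
        · nlinarith [sq_nonneg (u s)]
        · nlinarith [sq_nonneg (Ktv ⬝ᵥ X s), mul_nonneg hkk0 hD0]
      have e5 := mul_le_mul_of_nonneg_left e4 hκ0
      simp only [hG, hE, hT]
      linarith
  have hlow : ∀ M ≥ M₀, Real.exp (2 * δ * t) * (m * (X t ⬝ᵥ X t + Y t ⬝ᵥ Y t + S M₀ t)) ≤
      A * D + ∫ s in (0:ℝ)..t, Real.exp (2 * δ * s) * err M s := by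
    intro M hM
    refine (mul_le_mul_of_nonneg_left ?_ (Real.exp_pos _).le).trans (hbound M)
    have hSS : S M₀ t ≤ S M t :=
      Finset.sum_le_sum_of_subset_of_nonneg (Finset.range_mono hM) fun k _ _ =>
        mul_nonneg (hl0 k) (sq_nonneg _)
    have m1 : m ≤ ε := min_le_left _ _
    have m2 : m ≤ r₁ := (min_le_right _ _).trans (min_le_left _ _)
    have m3 : m ≤ γ := (min_le_right _ _).trans (min_le_right _ _)
    have e1 := (mul_le_mul_of_nonneg_right m1 (dotProduct_self_nonneg' (X t))).trans (hPε (X t))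
    have e2 := mul_le_mul_of_nonneg_right m2 (dotProduct_self_nonneg' (Y t))
    have e3 := mul_le_mul m3 hSS (hS0 M₀ t) hγ.le
    simp only [hV]
    linarith
  have hlim' := tendsto_integral_defect (δ := δ) (βs := βs) ht hζ
    (S := fun M s => Mφ * S M s) (fun M => continuousOn_const.mul ((hSc M).mono hsub))
    (fun M s => mul_nonneg H.Mφ_nonneg (hS0 M s)) hlim
  have hfin := ge_of_tendsto (hlim'.const_add (A * D))
    (Filter.eventually_atTop.2 ⟨M₀, hlow⟩)
  rw [add_zero] at hfin
  have hexp : Real.exp (2 * δ * t) * Real.exp (-2 * δ * t) = 1 := by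
    rw [← Real.exp_add]; simp
  have h5 := mul_le_mul_of_nonneg_left hfin (Real.exp_pos (-2 * δ * t)).le
  rw [← mul_le_mul_iff_right₀ hm0]
  calc _ = Real.exp (2 * δ * t) * Real.exp (-2 * δ * t) *
        (m * (X t ⬝ᵥ X t + Y t ⬝ᵥ Y t + S M₀ t)) := by rw [hexp, one_mul]
    _ = _ := by ring
    _ ≤ _ := h5
    _ = _ := by field_simp

end LyapunovLMI

theorem slOp_add_const_mul {p q f g : ℝ → ℝ} (hp : ContDiffOn ℝ 2 p (Icc 0 1))
    (hf : ContDiffOn ℝ 2 f (Icc 0 1)) (hg : ContDiffOn ℝ 2 g (Icc 0 1)) (k : ℝ) {x : ℝ}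
    (hx : x ∈ Icc (0:ℝ) 1) :
    slOp p q (fun y => f y + k * g y) x = slOp p q f x + k * slOp p q g x := by
  have hp1 : ContDiffOn ℝ 1 p (Icc 0 1) := hp.of_le (by norm_num)
  have hd : ∀ y ∈ Icc (0:ℝ) 1, dI (fun y => f y + k * g y) y = dI f y + k * dI g y :=
    fun y hy => dI_eq hy ((hasDerivWithinAt_dI (hf.of_le (by norm_num)) hy).fun_add
      ((hasDerivWithinAt_dI (hg.of_le (by norm_num)) hy).const_mul k))
  have hF := hasDerivWithinAt_dI (hp1.mul (contDiffOn_dI hf)) hx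
  have hG := hasDerivWithinAt_dI (hp1.mul (contDiffOn_dI hg)) hx
  have e : dI (fun y => p y * dI (fun y => f y + k * g y) y) x
      = dI (fun y => p y * dI f y) x + k * dI (fun y => p y * dI g y) x := by
    refine dI_eq hx ((hF.fun_add (hG.const_mul k)).congr (fun y hy => ?_) ?_)
    · simp only [hd y hy]; ring
    · simp only [hd x hx]; ring
  simp only [slOp, e]
  ring

section bFun

theorem cos_add_two_sin_pos {θ : ℝ} (hθ : θ ∈ Icc 0 (π/2)) :
    0 < Real.cos θ + 2 * Real.sin θ := by
  have hc : 0 ≤ Real.cos θ := Real.cos_nonneg_of_mem_Icc ⟨by linarith [hθ.1, Real.pi_pos], hθ.2⟩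
  have hs : 0 ≤ Real.sin θ :=
    Real.sin_nonneg_of_nonneg_of_le_pi hθ.1 (by linarith [hθ.2, Real.pi_pos])
  have := Real.sin_sq_add_cos_sq θ
  rcases hc.eq_or_lt with h | h
  · rcases hs.eq_or_lt with h' | h'
    · rw [← h, ← h'] at this; norm_num at this
    · linarith
  · linarith

theorem contDiff_bFun (θ : ℝ) (n : WithTop ℕ∞) : ContDiff ℝ n (bFun θ) := by
  unfold bFun; fun_prop

theorem dI_bFun (θ : ℝ) {x : ℝ} (hx : x ∈ Icc (0:ℝ) 1) :
    dI (bFun θ) x = -(2 * x) / (Real.cos θ + 2 * Real.sin θ) := by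
  refine dI_eq hx (HasDerivAt.hasDerivWithinAt ?_)
  have := (((hasDerivAt_id x).fun_pow 2).fun_neg).div_const (Real.cos θ + 2 * Real.sin θ)
  exact this.congr_deriv (by simp)

theorem bFun_zero (θ : ℝ) : bFun θ 0 = 0 := by simp [bFun]

theorem bFun_left (θ : ℝ) (θ₁ : ℝ) : Real.cos θ₁ * bFun θ 0 - Real.sin θ₁ * dI (bFun θ) 0 = 0 := by
  rw [dI_bFun θ (by simp), bFun_zero]; simp

theorem bFun_right {θ : ℝ} (hθ : θ ∈ Icc 0 (π/2)) :
    Real.cos θ * bFun θ 1 + Real.sin θ * dI (bFun θ) 1 = -1 := by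
  have := cos_add_two_sin_pos hθ
  rw [dI_bFun θ (by simp), bFun]
  field_simp
  ring

theorem slOp_bFun {p q qt : ℝ → ℝ} {q_c : ℝ} (hp : ContDiffOn ℝ 2 p (Icc 0 1))
    (hqt : ∀ x, qt x = q x - q_c) (θ : ℝ) {x : ℝ} (hx : x ∈ Icc (0:ℝ) 1) :
    slOp p q (bFun θ) x = aFun p qt θ x + q_c * bFun θ x := by
  have e : dI (fun y => p y * dI (bFun θ) y) x
      = (-(2 * p x) - 2 * x * dI p x) / (Real.cos θ + 2 * Real.sin θ) := by
    have h1 := hasDerivWithinAt_dI (hp.of_le (by norm_num)) hx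
    have h2 := (h1.fun_mul (((hasDerivWithinAt_id x (Icc 0 1)).const_mul (2:ℝ)).fun_neg)).div_const
      (Real.cos θ + 2 * Real.sin θ)
    refine dI_eq hx ((h2.congr (fun y hy => ?_) ?_).congr_deriv ?_)
    · rw [dI_bFun θ hy]; simp only [id]; ring
    · rw [dI_bFun θ hx]; simp only [id]; ring
    · simp only [id]; ring
  rw [slOp, e, aFun, bFun, hqt]
  ring

theorem continuousOn_aFun {p qt : ℝ → ℝ} (hp : ContDiffOn ℝ 2 p (Icc 0 1))
    (hqt : ContinuousOn qt (Icc 0 1)) (θ : ℝ) : ContinuousOn (aFun p qt θ) (Icc 0 1) := by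
  have h1 := continuousOn_dI (hp.of_le (by norm_num) : ContDiffOn ℝ 1 p (Icc 0 1))
  have h2 := hp.continuousOn
  unfold aFun
  fun_prop

end bFun

/-- Classical solutions of the reaction–diffusion equation with a delayed reaction term,
Robin boundary conditions, and boundary input `u` at `x = 1`. -/
structure ClassicalSolution (θ₁ θ₂ : ℝ) (p qt : ℝ → ℝ) (c h : ℝ) (z : ℝ → ℝ → ℝ) (u : ℝ → ℝ) :
    Prop where
  space_reg : ∀ t ≥ -h, ContDiffOn ℝ 2 (z t) (Set.Icc 0 1)
  cont : ContinuousOn (fun pr : ℝ × ℝ => z pr.1 pr.2) (Set.Ici (-h) ×ˢ Set.Icc 0 1)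
  cont_deriv : ContinuousOn (fun pr : ℝ × ℝ => deriv (fun s => z s pr.2) pr.1)
        (Set.Ioi 0 ×ˢ Set.Icc 0 1)
  pde : ∀ t > (0:ℝ), ∀ x ∈ Set.Ioo (0:ℝ) 1,
        HasDerivAt (fun s => z s x)
          (dI (fun y => p y * dI (z t) y) x - qt x * z t x + c * z (t-h) x) t
  left : ∀ t ≥ (0:ℝ), Real.cos θ₁ * z t 0 - Real.sin θ₁ * dI (z t) 0 = 0
  right : ∀ t ≥ -h, Real.cos θ₂ * z t 1 + Real.sin θ₂ * dI (z t) 1 = u t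

theorem continuousOn_unit_integral {h : ℝ} {g : ℝ → ℝ → ℝ}
    (hg : ContinuousOn (fun pr : ℝ × ℝ => g pr.1 pr.2) (Set.Ici (-h) ×ˢ Set.Icc 0 1)) :
    ContinuousOn (fun t => ∫ x in (0:ℝ)..1, g t x) (Ici (-h)) := by
  set G : ℝ → ℝ → ℝ := fun t x => g (max t (-h)) (projIcc 0 1 zero_le_one x) with hG
  have hc : Continuous (Function.uncurry G) := by
    refine hg.comp_continuous (f := fun pr : ℝ × ℝ =>
      (max pr.1 (-h), (projIcc (0:ℝ) 1 zero_le_one pr.2 : ℝ))) ?_ ?_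
    · have := (continuous_projIcc (h := (zero_le_one' ℝ)))
      fun_prop
    · exact fun pr => ⟨mem_Ici.2 (le_max_right _ _), (projIcc (0:ℝ) 1 zero_le_one pr.2).2⟩
  have hI := intervalIntegral.continuous_parametric_intervalIntegral_of_continuous' hc 0 1
    (μ := volume)
  refine hI.continuousOn.congr fun t ht => ?_
  refine unit_integral_congr fun x hx => ?_
  simp only [hG, max_eq_left (mem_Ici.1 ht), projIcc_of_mem zero_le_one hx]

namespace ClassicalSolution

variable {θ₁ θ₂ : ℝ} {p q qt : ℝ → ℝ} {q_c c h : ℝ} {z : ℝ → ℝ → ℝ} {u : ℝ → ℝ}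

theorem continuousOn_coef (Z : ClassicalSolution θ₁ θ₂ p qt c h z u) {f : ℝ → ℝ}
    (hf : ContinuousOn f (Icc 0 1)) : ContinuousOn (fun t => ip (z t) f) (Ici (-h)) :=
  continuousOn_unit_integral (Z.cont.mul (hf.comp continuousOn_snd fun _ hx => hx.2))

theorem continuousOn_sq (Z : ClassicalSolution θ₁ θ₂ p qt c h z u) :
    ContinuousOn (fun t => ∫ x in (0:ℝ)..1, (z t x)^2) (Ici (-h)) :=
  continuousOn_unit_integral (Z.cont.pow 2)

/-- The lifted state satisfies the homogeneous boundary conditions. -/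
theorem lifted_dom (Z : ClassicalSolution θ₁ θ₂ p qt c h z u) (hθ₂ : θ₂ ∈ Icc 0 (π/2))
    (hh : 0 < h) {t : ℝ} (ht : 0 ≤ t) :
    RobinDomain θ₁ θ₂ (fun x => z t x + u t * bFun θ₂ x) := by
  have hz := Z.space_reg t (by linarith)
  have hb := (contDiff_bFun θ₂ 2).contDiffOn (s := Icc (0:ℝ) 1)
  have hd : ∀ x ∈ Icc (0:ℝ) 1, dI (fun x => z t x + u t * bFun θ₂ x) x
      = dI (z t) x + u t * dI (bFun θ₂) x := fun x hx =>
    dI_eq hx ((hasDerivWithinAt_dI (hz.of_le (by norm_num)) hx).fun_add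
      ((hasDerivWithinAt_dI (hb.of_le (by norm_num)) hx).const_mul (u t)))
  refine ⟨hz.add (contDiffOn_const.mul hb), ?_, ?_⟩
  · rw [hd 0 (by simp)]; linear_combination Z.left t ht + u t * bFun_left θ₂ θ₁
  · rw [hd 1 (by simp)]
    linear_combination Z.right t (by linarith) + u t * bFun_right hθ₂

theorem hasDerivAt_coef (Z : ClassicalSolution θ₁ θ₂ p qt c h z u) (hh : 0 < h) {f : ℝ → ℝ}
    (hf : ContinuousOn f (Icc 0 1)) {t : ℝ} (ht : 0 < t) :
    HasDerivAt (fun s => ip (z s) f)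
      (ip (fun x => dI (fun y => p y * dI (z t) y) x - qt x * z t x + c * z (t-h) x) f) t := by
  set F' : ℝ → ℝ → ℝ := fun s x => deriv (fun r => z r x) s * f x with hF'
  have hsub : Icc (t/2) (2*t) ×ˢ Icc (0:ℝ) 1 ⊆ Ioi 0 ×ˢ Icc 0 1 :=
    prod_mono (fun s hs => mem_Ioi.2 (by linarith [hs.1])) Subset.rfl
  have hF'c : ContinuousOn (fun pr : ℝ × ℝ => F' pr.1 pr.2) (Icc (t/2) (2*t) ×ˢ Icc 0 1) :=
    (Z.cont_deriv.mono hsub).mul (hf.comp continuousOn_snd fun _ hx => hx.2)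
  obtain ⟨B, hB⟩ := (isCompact_Icc.prod isCompact_Icc).exists_bound_of_continuousOn hF'c
  have hmem : t ∈ Icc (t/2) (2*t) := ⟨by linarith, by linarith⟩
  have hslice : ∀ s ≥ -h, ContinuousOn (fun x => z s x * f x) (Icc 0 1) := fun s hs =>
    (Z.space_reg s hs).continuousOn.mul hf
  have hF't : ContinuousOn (F' t) (Icc 0 1) :=
    hF'c.comp (f := fun x => (t, x)) (by fun_prop) fun x hx => ⟨hmem, hx⟩
  have hI : Set.uIoc (0:ℝ) 1 ⊆ Icc 0 1 := by
    rw [uIoc_of_le zero_le_one]; exact Ioc_subset_Icc_self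
  have hae : ∀ᵐ x : ℝ, x ≠ 1 := compl_mem_ae_iff.2 (measure_singleton (1:ℝ))
  have hIoo : ∀ x : ℝ, x ≠ 1 → x ∈ Set.uIoc (0:ℝ) 1 → x ∈ Ioo (0:ℝ) 1 := by
    intro x hx1 hx
    rw [uIoc_of_le zero_le_one] at hx
    exact ⟨hx.1, lt_of_le_of_ne hx.2 hx1⟩
  have key := intervalIntegral.hasDerivAt_integral_of_dominated_loc_of_deriv_le
    (μ := volume) (a := 0) (b := 1) (F := fun s x => z s x * f x) (F' := F') (x₀ := t)
    (s := Icc (t/2) (2*t)) (bound := fun _ => B) (Icc_mem_nhds (by linarith) (by linarith)) ?_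
    (hslice t (by linarith)).intervalIntegrable_unit ?_ ?_ intervalIntegrable_const ?_
  · have e : ip (fun x => dI (fun y => p y * dI (z t) y) x - qt x * z t x + c * z (t-h) x) f
        = ∫ x in (0:ℝ)..1, F' t x := by
      refine intervalIntegral.integral_congr_ae ?_
      filter_upwards [hae] with x hx1 hx
      rw [hF', ← (Z.pde t ht x (hIoo x hx1 hx)).deriv]
    rw [e]
    exact key.2
  · filter_upwards [Ioi_mem_nhds ht] with s hs
    exact ((hslice s (by linarith [mem_Ioi.1 hs])).aestronglyMeasurable measurableSet_Icc).mono_set hI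
  · exact (hF't.aestronglyMeasurable measurableSet_Icc).mono_set hI
  · exact Filter.Eventually.of_forall fun x hx s hs => hB (s, x) ⟨hs, hI hx⟩
  · filter_upwards [hae] with x hx1 hx s hs
    have := Z.pde s (by linarith [hs.1]) x (hIoo x hx1 hx)
    exact (this.deriv ▸ this).mul_const (f x)

/-- Dynamics of the modal coefficients of a classical solution. -/
theorem hasDerivAt_mode {lam : ℕ → ℝ} {phi : ℕ → ℝ → ℝ}
    (Z : ClassicalSolution θ₁ θ₂ p qt c h z u)
    (H : SturmLiouville θ₁ θ₂ p q lam phi) (hqt : ∀ x, qt x = q x - q_c) (hh : 0 < h)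
    {n : ℕ} (hn : 1 ≤ n) {t : ℝ} (ht : 0 < t) :
    HasDerivAt (fun s => ip (z s) (phi n))
      ((-lam n + q_c) * ip (z t) (phi n) + c * ip (z (t-h)) (phi n)
        + betaC p qt θ₂ q_c lam phi n * u t) t := by
  have hphi := H.phi_cont hn
  refine (Z.hasDerivAt_coef hh hphi ht).congr_deriv ?_
  have hz := Z.space_reg t (by linarith)
  have hzh := (Z.space_reg (t-h) (by linarith)).continuousOn
  have hb := (contDiff_bFun θ₂ 2).contDiffOn (s := Icc (0:ℝ) 1)
  have hdom := Z.lifted_dom H.angle_right hh ht.le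
  have hqtc : ContinuousOn qt (Icc 0 1) := by
    rw [funext hqt]; exact H.q_cont.sub continuousOn_const
  have ha := continuousOn_aFun H.p_reg hqtc θ₂
  have hsl := slOp_continuousOn H.p_reg H.q_cont hdom.reg
  have hwc := hdom.reg.continuousOn
  rw [ip_congr (f₂ := fun x => ((-1) * slOp p q (fun x => z t x + u t * bFun θ₂ x) x
      + q_c * (z t x + u t * bFun θ₂ x)) + (u t * aFun p qt θ₂ x + c * z (t-h) x)) ?_]
  · rw [ip_add_left ((continuousOn_const.fun_mul hsl).fun_add (continuousOn_const.fun_mul hwc))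
        ((continuousOn_const.fun_mul ha).fun_add (continuousOn_const.fun_mul hzh)) hphi,
      ip_add_left (continuousOn_const.fun_mul hsl) (continuousOn_const.fun_mul hwc) hphi,
      ip_add_left (continuousOn_const.fun_mul ha) (continuousOn_const.fun_mul hzh) hphi,
      ip_const_mul_left, ip_const_mul_left, ip_const_mul_left, ip_const_mul_left,
      H.coef_slOp hdom hn, ip_add_left hz.continuousOn
        (continuousOn_const.fun_mul hb.continuousOn) hphi, ip_const_mul_left, betaC]
    ring
  · intro x hx
    rw [slOp_add_const_mul H.p_reg hz hb _ hx, slOp_bFun H.p_reg hqt θ₂ hx, slOp, hqt]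
    ring

end ClassicalSolution

theorem sum_Icc_eq_sum_fin_add {N₀ N : ℕ} (hN : N₀ ≤ N) (g : ℕ → ℝ) :
    ∑ k ∈ Finset.Icc 1 N, g k =
      ∑ i : Fin N₀, g (i.val + 1) + ∑ j : Fin (N - N₀), g (N₀ + j.val + 1) := by
  have h1 : ∑ k ∈ Finset.Icc 1 N, g k = ∑ k ∈ Finset.range N, g (k + 1) := by
    rw [Finset.range_eq_Ico, Finset.sum_Ico_add' g 0 N 1]
    rfl
  rw [h1, Fin.sum_univ_eq_sum_range (fun k => g (k + 1)) N₀,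
    Fin.sum_univ_eq_sum_range (fun k => g (N₀ + k + 1)) (N - N₀)]
  conv_lhs => rw [show N = N₀ + (N - N₀) by omega]
  rw [Finset.sum_range_add]

/-- Trajectories of the finite-dimensional observer with input `u` and measurement `y`. -/
structure ObserverSolution (N₀ N : ℕ) (lam : ℕ → ℝ) (q_c c h : ℝ) (β b C : ℕ → ℝ)
    (K L : Fin N₀ → ℝ) (y u : ℝ → ℝ) (zhat : ℕ → ℝ → ℝ) : Prop where
  cont : ∀ n, ContinuousOn (zhat n) (Set.Ici (-h))
  low : ∀ i : Fin N₀, ∀ t > (0:ℝ),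
        HasDerivAt (zhat (i.val + 1))
          ((-lam (i.val + 1) + q_c) * zhat (i.val + 1) t + c * zhat (i.val + 1) (t-h)
            + β (i.val + 1) * u t
            - L i * ((∑ k ∈ Finset.Icc 1 N, (zhat k t + b k * u t) * C k) - y t)) t
  high : ∀ n, N₀ + 1 ≤ n → n ≤ N → ∀ t > (0:ℝ),
        HasDerivAt (zhat n)
          ((-lam n + q_c) * zhat n t + c * zhat n (t-h) + β n * u t) t
  feedback : ∀ t ≥ (0:ℝ), u t = ∑ i : Fin N₀, K i * zhat (i.val + 1) t

/-- The estimates of the first modes together with the corresponding estimation errors. -/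
def observerState (N₀ : ℕ) (zn zhat : ℕ → ℝ → ℝ) (t : ℝ) : Fin N₀ ⊕ Fin N₀ → ℝ :=
  Sum.elim (fun i => zhat (i.val + 1) t) fun i => zn (i.val + 1) t - zhat (i.val + 1) t

/-- The scaled estimation errors of the intermediate modes. -/
def scaledError (N₀ N : ℕ) (lam : ℕ → ℝ) (zn zhat : ℕ → ℝ → ℝ) (t : ℝ) : Fin (N - N₀) → ℝ :=
  fun j => Real.sqrt (lam (N₀ + j.val + 1)) *
    (zn (N₀ + j.val + 1) t - zhat (N₀ + j.val + 1) t)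

theorem F1_mulVec (N₀ : ℕ) (lam : ℕ → ℝ) (q_c : ℝ) (B0v C0v K L x e : Fin N₀ → ℝ) :
    F1 N₀ lam q_c B0v C0v K L *ᵥ Sum.elim x e =
      Sum.elim (fun i => (-lam (i.val + 1) + q_c) * x i + B0v i * (K ⬝ᵥ x) + L i * (C0v ⬝ᵥ e))
        (fun i => (-lam (i.val + 1) + q_c) * e i - L i * (C0v ⬝ᵥ e)) := by
  rw [F1, fromBlocks_mulVec]
  simp only [Sum.elim_comp_inl, Sum.elim_comp_inr, add_mulVec, sub_mulVec, vecMulVec_mulVec,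
    zero_mulVec, zero_add, A0]
  congr 1 <;> ext i <;> simp [mulVec_diagonal, mul_comm]

namespace ObserverSolution

variable {N₀ N : ℕ} {lam : ℕ → ℝ} {q_c c h : ℝ} {β b C : ℕ → ℝ} {K L : Fin N₀ → ℝ} {y u : ℝ → ℝ}
  {zn zhat : ℕ → ℝ → ℝ}

theorem feedback_eq (O : ObserverSolution N₀ N lam q_c c h β b C K L y u zhat) {t : ℝ}
    (ht : 0 ≤ t) : u t = Kt N₀ K ⬝ᵥ observerState N₀ zn zhat t := by
  rw [O.feedback t ht, Kt, observerState, sumElim_dotProduct_sumElim, zero_dotProduct, add_zero]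
  rfl

theorem hasDerivAt_scaledError (O : ObserverSolution N₀ N lam q_c c h β b C K L y u zhat)
    (hzn : ∀ n ≥ 1, ∀ t > 0, HasDerivAt (zn n)
      ((-lam n + q_c) * zn n t + c * zn n (t - h) + β n * u t) t) {t : ℝ} (ht : 0 < t) :
    HasDerivAt (scaledError N₀ N lam zn zhat)
      (A1 N₀ N lam q_c *ᵥ scaledError N₀ N lam zn zhat t
        + c • scaledError N₀ N lam zn zhat (t - h)) t := by
  refine hasDerivAt_pi.2 fun j => ?_
  have hj := j.2
  refine (((hzn (N₀ + j.val + 1) (by omega) t ht).fun_sub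
    (O.high (N₀ + j.val + 1) (by omega) (by omega) t ht)).const_mul _).congr_deriv ?_
  simp only [A1, Pi.add_apply, mulVec_diagonal, scaledError, Pi.smul_apply, smul_eq_mul]
  ring

theorem hasDerivAt_observerState (O : ObserverSolution N₀ N lam q_c c h β b C K L y u zhat)
    (hN : N₀ ≤ N) (hlam : ∀ n ≥ 1, 0 < lam n)
    (hzn : ∀ n ≥ 1, ∀ t > 0, HasDerivAt (zn n)
      ((-lam n + q_c) * zn n t + c * zn n (t - h) + β n * u t) t) {t : ℝ} (ht : 0 < t) :
    HasDerivAt (observerState N₀ zn zhat)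
      (F1 N₀ lam q_c (fun i => β (i.val + 1)) (fun i => C (i.val + 1)) K L *ᵥ
          observerState N₀ zn zhat t
        + F2 N₀ N L (fun i => C (N₀ + i.val + 1) / Real.sqrt (lam (N₀ + i.val + 1))) *ᵥ
          scaledError N₀ N lam zn zhat t
        + (y t - ∑ k ∈ Finset.Icc 1 N, (zn k t + b k * u t) * C k) • Lv N₀ L
        + c • observerState N₀ zn zhat (t - h)) t := by
  set ζ := y t - ∑ k ∈ Finset.Icc 1 N, (zn k t + b k * u t) * C k with hζ
  set e1 : ℝ := (fun i : Fin N₀ => C (i.val + 1)) ⬝ᵥ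
    (fun i : Fin N₀ => zn (i.val + 1) t - zhat (i.val + 1) t) with he1
  set e2 : ℝ := (fun i : Fin (N - N₀) => C (N₀ + i.val + 1) / Real.sqrt (lam (N₀ + i.val + 1))) ⬝ᵥ
    scaledError N₀ N lam zn zhat t with he2
  have hF2 : ∀ x, (F2 N₀ N L (fun i => C (N₀ + i.val + 1) / Real.sqrt (lam (N₀ + i.val + 1))) *ᵥ
      scaledError N₀ N lam zn zhat t) x = Lv N₀ L x * e2 := by
    intro x
    rcases x with x | x <;>
    simp only [F2, Lv, he2, mulVec, dotProduct, of_apply, Sum.elim_inl, Sum.elim_inr,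
      Finset.mul_sum] <;>
    exact Finset.sum_congr rfl fun j _ => by ring
  have hu : K ⬝ᵥ (fun i : Fin N₀ => zhat (i.val + 1) t) = u t := (O.feedback t ht.le).symm
  have hsum : (∑ k ∈ Finset.Icc 1 N, (zhat k t + b k * u t) * C k) - y t = -(e1 + e2 + ζ) := by
    have h1 : ∑ k ∈ Finset.Icc 1 N, (zn k t - zhat k t) * C k = e1 + e2 := by
      rw [sum_Icc_eq_sum_fin_add hN]
      congr 1
      · exact Finset.sum_congr rfl fun i _ => by ring
      · refine Finset.sum_congr rfl fun j _ => ?_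
        have := Real.sqrt_pos.2 (hlam (N₀ + j.val + 1) (by omega))
        simp only [scaledError]
        field_simp
    have h2 : ∑ k ∈ Finset.Icc 1 N, (zhat k t + b k * u t) * C k
        = ∑ k ∈ Finset.Icc 1 N, (zn k t + b k * u t) * C k
          - ∑ k ∈ Finset.Icc 1 N, (zn k t - zhat k t) * C k := by
      rw [← Finset.sum_sub_distrib]
      exact Finset.sum_congr rfl fun k _ => by ring
    rw [h2, h1, hζ]; ring
  refine hasDerivAt_pi.2 fun x => ?_
  simp only [Pi.add_apply, hF2, Pi.smul_apply, smul_eq_mul]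
  rw [observerState, F1_mulVec, hu, ← he1]
  rcases x with i | i
  · refine (O.low i t ht).congr_deriv ?_
    rw [hsum]
    simp only [Sum.elim_inl, Lv, observerState]
    ring
  · refine ((hzn (i.val + 1) (by omega) t ht).fun_sub (O.low i t ht)).congr_deriv ?_
    rw [hsum]
    simp only [Sum.elim_inr, Lv, observerState]
    ring

theorem hasDerivAt_input (O : ObserverSolution N₀ N lam q_c c h β b C K L y u zhat) {t : ℝ}
    (ht : 0 < t) {X' : Fin N₀ ⊕ Fin N₀ → ℝ} (hX : HasDerivAt (observerState N₀ zn zhat) X' t) :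
    HasDerivAt u (Kt N₀ K ⬝ᵥ X') t := by
  have h1 : HasDerivAt (fun s => Kt N₀ K ⬝ᵥ observerState N₀ zn zhat s) (Kt N₀ K ⬝ᵥ X') t := by
    unfold dotProduct
    exact HasDerivAt.fun_sum fun i _ => (hasDerivAt_pi.1 hX i).const_mul _
  refine h1.congr_of_eventuallyEq ?_
  filter_upwards [Ioi_mem_nhds ht] with s hs
  exact O.feedback_eq (mem_Ioi.1 hs).le

theorem continuousOn_input (O : ObserverSolution N₀ N lam q_c c h β b C K L y u zhat)
    (hh : 0 < h) (hu : ContinuousOn u (Icc (-h) 0)) : ContinuousOn u (Ici (-h)) := by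
  have h1 : ContinuousOn u (Ici 0) := by
    refine ContinuousOn.congr (f := fun t => ∑ i : Fin N₀, K i * zhat (i.val + 1) t) ?_ O.feedback
    exact continuousOn_finsetSum _ fun i _ => continuousOn_const.mul
      ((O.cont _).mono (Ici_subset_Ici.2 (by linarith)))
  rw [← Icc_union_Ici_eq_Ici (show -h ≤ 0 by linarith)]
  exact hu.union_of_isClosed h1 isClosed_Icc isClosed_Ici

end ObserverSolution

/-- A trace written as the limit of partial sums is controlled by the weighted energy. -/
theorem tendsto_max_trace_defect {ζ Mφ : ℝ} {l w f : ℕ → ℝ} (hl : ∀ k, 0 < l k)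
    (hM : ∀ M, ∑ k ∈ Finset.range M, f k ^ 2 / l k ≤ Mφ)
    (hζ : Filter.Tendsto (fun M => ∑ k ∈ Finset.range M, w k * f k) Filter.atTop (nhds ζ)) :
    Filter.Tendsto (fun M => max 0 (ζ ^ 2 - Mφ * ∑ k ∈ Finset.range M, l k * w k ^ 2))
      Filter.atTop (nhds 0) := by
  have h1 : Filter.Tendsto (fun M => max 0 (ζ ^ 2 - (∑ k ∈ Finset.range M, w k * f k) ^ 2))
      Filter.atTop (nhds 0) := by
    have := ((hζ.pow 2).const_sub (ζ ^ 2))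
    simpa using (tendsto_const_nhds (x := (0:ℝ))).max this
  refine squeeze_zero (fun M => le_max_left _ _) (fun M => max_le_max le_rfl ?_) h1
  have hcs := Finset.sum_mul_sq_le_sq_mul_sq (Finset.range M)
    (fun k => f k / Real.sqrt (l k)) (fun k => Real.sqrt (l k) * w k)
  have e0 : ∀ k, f k / Real.sqrt (l k) * (Real.sqrt (l k) * w k) = w k * f k := by
    intro k
    have := Real.sqrt_pos.2 (hl k)
    field_simp
  simp only [e0, div_pow, mul_pow, Real.sq_sqrt (hl _).le] at hcs
  have hS : 0 ≤ ∑ k ∈ Finset.range M, l k * w k ^ 2 :=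
    Finset.sum_nonneg fun k _ => mul_nonneg (hl k).le (sq_nonneg _)
  linarith [mul_le_mul_of_nonneg_right (hM M) hS]

/-- Uniform exponential decay for scalar delay equations whose delay-free part dominates, driven by
an exponentially decaying input. -/
theorem exists_scalar_delay_decay {h μ c δ : ℝ} (hh : 0 < h) (hμ : 0 < μ) (hδ : 0 < δ) :
    ∃ δ' > (0:ℝ), δ' ≤ δ ∧ ∃ C > (0:ℝ), ∀ (a D : ℝ) (x f : ℝ → ℝ), a + |c| ≤ -μ →
      ContinuousOn x (Ici (-h)) →
      (∀ t > 0, HasDerivAt x (a * x t + c * x (t - h) + f t) t) →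
      (∀ t ≥ 0, f t ^ 2 ≤ Real.exp (-2 * δ * t) * D) →
      (∀ s ∈ Icc (-h) (0:ℝ), x s ^ 2 ≤ D) →
      ∀ t ≥ 0, x t ^ 2 ≤ C * Real.exp (-2 * δ' * t) * D := by
  have hη : 0 < μ / (1 + |c|) := by positivity
  set η := μ / (1 + |c|) with hηd
  obtain ⟨δ₀, hδ₀, h1, h2⟩ := exists_rate hh hη
  set δ' := min δ₀ (δ / 2) with hδ'd
  have hδ' : 0 < δ' := lt_min hδ₀ (by linarith)
  have hle₀ : δ' ≤ δ₀ := min_le_left _ _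
  have hle : δ' ≤ δ / 2 := min_le_right _ _
  refine ⟨δ', hδ', by linarith, 1 + (1 + η) * (h * |c|) + 1 / (μ * δ), by positivity, ?_⟩
  intro a D x f ha hx hx' hf hx0 t ht
  have hD : 0 ≤ D := (sq_nonneg _).trans (hx0 0 ⟨by linarith, le_rfl⟩)
  have key := delay_comparison (h := h) (δ := δ') (η := η) (g := |c| * D) hh hδ' (by linarith)
    ((Real.exp_le_exp.2 (by gcongr)).trans h2) (V := fun t => x t ^ 2)
    (V' := fun t => 2 * x t * (a * x t + c * x (t - h) + f t)) (G := fun t => |c| * x t ^ 2)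
    (err := fun t => Real.exp (-2 * δ * t) * D / μ)
    ((hx.mono (Ici_subset_Ici.2 (by linarith))).pow 2) (fun _ _ => sq_nonneg _)
    (continuousOn_const.mul (hx.pow 2)) (fun _ _ => by positivity) (by fun_prop)
    (fun t ht => ((hx' t ht).fun_pow 2).congr_deriv (by ring)) ?_
    (fun s hs => mul_le_mul_of_nonneg_left (hx0 s hs) (abs_nonneg c)) ht
  · have hI : ∫ s in (0:ℝ)..t, Real.exp (2 * δ' * s) * (Real.exp (-2 * δ * s) * D / μ)
        ≤ ∫ s in (0:ℝ)..t, Real.exp (-δ * s) * (D / μ) := by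
      refine intervalIntegral.integral_mono_on ht
        (Continuous.intervalIntegrable (by fun_prop) _ _)
        (Continuous.intervalIntegrable (by fun_prop) _ _) fun s hs => ?_
      rw [← mul_div_assoc', ← mul_assoc, ← Real.exp_add]
      gcongr
      nlinarith [hs.1]
    have hI2 : ∫ s in (0:ℝ)..t, Real.exp (-δ * s) * (D / μ)
        = Real.exp (-δ * t) * (-(D / (μ * δ))) - Real.exp (-δ * 0) * (-(D / (μ * δ))) := by
      refine intervalIntegral.integral_eq_sub_of_hasDerivAt
        (f := fun s => Real.exp (-δ * s) * (-(D / (μ * δ)))) (fun s _ => ?_)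
        (Continuous.intervalIntegrable (by fun_prop) _ _)
      refine ((((hasDerivAt_id s).const_mul (-δ)).exp).mul_const _).congr_deriv ?_
      simp only [id]
      field_simp
    have h0 := hx0 0 ⟨by linarith, le_rfl⟩
    have hpos : 0 ≤ Real.exp (-δ * t) * (D / (μ * δ)) := by positivity
    have hbd : Real.exp (2 * δ' * t) * x t ^ 2
        ≤ (1 + (1 + η) * (h * |c|) + 1 / (μ * δ)) * D := by
      have e : (1 + (1 + η) * (h * |c|) + 1 / (μ * δ)) * D
        = D + (1 + η) * (h * (|c| * D)) + D / (μ * δ) := by ring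
      rw [e]
      rw [hI2, mul_zero, Real.exp_zero] at hI
      linarith
    have e2 : x t ^ 2 = Real.exp (-2 * δ' * t) * (Real.exp (2 * δ' * t) * x t ^ 2) := by
      rw [← mul_assoc, ← Real.exp_add]
      ring_nf
      simp
    rw [e2]
    refine (mul_le_mul_of_nonneg_left hbd (Real.exp_pos _).le).trans_eq ?_
    ring
  · intro t ht
    have hη2 : η * (1 + |c|) = μ := by rw [hηd]; field_simp
    have hfx : 2 * x t * f t ≤ μ * x t ^ 2 + Real.exp (-2 * δ * t) * D / μ := by
      have h3 : f t ^ 2 / μ ≤ Real.exp (-2 * δ * t) * D / μ := by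
        gcongr; exact hf t ht.le
      have h4 : 2 * x t * f t ≤ μ * x t ^ 2 + f t ^ 2 / μ := by
        have : 0 ≤ (μ * x t - f t) ^ 2 / μ := by positivity
        have e : (μ * x t - f t) ^ 2 / μ = μ * x t ^ 2 - 2 * x t * f t + f t ^ 2 / μ := by
          field_simp; ring
        linarith
      linarith
    have hcx : 2 * c * (x t * x (t - h)) ≤ |c| * x t ^ 2 + |c| * x (t - h) ^ 2 := by
      have h5 : c * (x t * x (t-h)) ≤ |c| * |x t * x (t - h)| := by
        rw [← abs_mul]; exact le_abs_self _
      have h6 : 2 * |x t * x (t - h)| ≤ x t ^ 2 + x (t - h) ^ 2 := by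
        rw [abs_mul, ← sq_abs (x t), ← sq_abs (x (t-h))]
        nlinarith [sq_nonneg (|x t| - |x (t-h)|)]
      nlinarith [abs_nonneg c]
    have h7 := mul_le_mul_of_nonneg_right ha (sq_nonneg (x t))
    have h8 : η * x t ^ 2 + η * (|c| * x t ^ 2) = μ * x t ^ 2 := by rw [← hη2]; ring
    linarith

namespace SturmLiouville

variable {θ₁ θ₂ : ℝ} {p q : ℝ → ℝ} {lam : ℕ → ℝ} {phi : ℕ → ℝ → ℝ}

theorem sum_sq_coef_le (H : SturmLiouville θ₁ θ₂ p q lam phi) {f : ℝ → ℝ}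
    (hf : ContinuousOn f (Icc 0 1)) (N : ℕ) :
    ∑ k ∈ Finset.Icc 1 N, ip f (phi k) ^ 2 ≤ ∫ x in (0:ℝ)..1, (f x)^2 := by
  have e : ∑ k ∈ Finset.Icc 1 N, ip f (phi k) ^ 2
      = ∑ k ∈ Finset.range N, ip f (phi (k + 1)) ^ 2 := by
    rw [Finset.range_eq_Ico, Finset.sum_Ico_add' (fun k => ip f (phi k) ^ 2) 0 N 1]
    rfl
  rw [e]
  exact sum_le_hasSum _ (fun _ _ => sq_nonneg _) (H.hasSum_sq hf)

theorem summable_tail_sq (H : SturmLiouville θ₁ θ₂ p q lam phi) {f : ℝ → ℝ}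
    (hf : ContinuousOn f (Icc 0 1)) (N : ℕ) :
    Summable fun k => ip f (phi (N + 1 + k)) ^ 2 := by
  have := (summable_nat_add_iff (f := fun k => ip f (phi (k + 1)) ^ 2) N).2 (H.hasSum_sq hf).summable
  refine this.congr fun k => ?_
  rw [show k + N + 1 = N + 1 + k by ring]

theorem sum_tail_sq_le_RN2 (H : SturmLiouville θ₁ θ₂ p q lam phi) {f : ℝ → ℝ}
    (hf : ContinuousOn f (Icc 0 1)) (N M : ℕ) :
    ∑ k ∈ Finset.range M, ip f (phi (N + 1 + k)) ^ 2 ≤ RN2 f phi N :=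
  (H.summable_tail_sq hf N).sum_le_tsum _ fun _ _ => sq_nonneg _

/-- Splitting a partial sum over all modes into the first `N` modes and residual modes. -/
theorem _root_.sum_range_add_eq_sum_Icc_add (g : ℕ → ℝ) (N M : ℕ) :
    ∑ k ∈ Finset.range (N + M), g (k + 1) =
      ∑ k ∈ Finset.Icc 1 N, g k + ∑ k ∈ Finset.range M, g (N + 1 + k) := by
  rw [Finset.sum_range_add]
  congr 1
  · rw [Finset.range_eq_Ico, Finset.sum_Ico_add' g 0 N 1]
    rfl
  · exact Finset.sum_congr rfl fun k _ => by rw [show N + k + 1 = N + 1 + k by ring]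

theorem sum_tail_sq_le (H : SturmLiouville θ₁ θ₂ p q lam phi) {f : ℝ → ℝ}
    (hf : ContinuousOn f (Icc 0 1)) (N M : ℕ) :
    ∑ k ∈ Finset.range M, ip f (phi (N + 1 + k)) ^ 2 ≤ ∫ x in (0:ℝ)..1, (f x)^2 := by
  have h1 := sum_le_hasSum (Finset.range (N + M)) (fun _ _ => sq_nonneg _) (H.hasSum_sq hf)
  rw [sum_range_add_eq_sum_Icc_add (fun k => ip f (phi k) ^ 2)] at h1
  linarith [Finset.sum_nonneg fun k (_ : k ∈ Finset.Icc 1 N) => sq_nonneg (ip f (phi k))]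

theorem sum_tail_energy_le (H : SturmLiouville θ₁ θ₂ p q lam phi) {f : ℝ → ℝ}
    (hf : RobinDomain θ₁ θ₂ f) (N M : ℕ) :
    ∑ k ∈ Finset.range M, lam (N + 1 + k) * ip f (phi (N + 1 + k)) ^ 2 ≤ ip (slOp p q f) f := by
  have h0 : ∀ k ≥ 1, 0 ≤ lam k * ip f (phi k) ^ 2 := fun k hk =>
    mul_nonneg (H.lam_pos k hk).le (sq_nonneg _)
  have h1 := sum_le_hasSum (Finset.range (N + M)) (fun k _ => h0 (k + 1) (by omega))
    (H.hasSum_energy hf)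
  rw [sum_range_add_eq_sum_Icc_add (fun k => lam k * ip f (phi k) ^ 2)] at h1
  linarith [Finset.sum_nonneg fun k (hk : k ∈ Finset.Icc 1 N) => h0 k (Finset.mem_Icc.1 hk).1]

/-- An upper bound for the energy from the first `N` modes and the residual modes. -/
theorem energy_le (H : SturmLiouville θ₁ θ₂ p q lam phi) {f : ℝ → ℝ}
    (hf : RobinDomain θ₁ θ₂ f) {N : ℕ} {B : ℝ}
    (hB : ∀ M, ∑ k ∈ Finset.range M, lam (N + 1 + k) * ip f (phi (N + 1 + k)) ^ 2 ≤ B) :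
    ip (slOp p q f) f ≤ lam N * ∑ k ∈ Finset.Icc 1 N, ip f (phi k) ^ 2 + B := by
  have ht := ((H.hasSum_energy hf).tendsto_sum_nat.comp (Filter.tendsto_add_atTop_nat N))
  refine le_of_tendsto' ht fun M => ?_
  simp only [Function.comp, add_comm M N]
  rw [sum_range_add_eq_sum_Icc_add (fun k => lam k * ip f (phi k) ^ 2), Finset.mul_sum]
  refine add_le_add (Finset.sum_le_sum fun k hk => ?_) (hB M)
  obtain ⟨h1, h2⟩ := Finset.mem_Icc.1 hk
  exact mul_le_mul_of_nonneg_right (H.lam_le h1 h2) (sq_nonneg _)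

theorem tendsto_trace_tail (H : SturmLiouville θ₁ θ₂ p q lam phi) {f : ℝ → ℝ}
    (hf : RobinDomain θ₁ θ₂ f) (N : ℕ) :
    Filter.Tendsto (fun M => ∑ k ∈ Finset.range M, ip f (phi (N + 1 + k)) * phi (N + 1 + k) 0)
      Filter.atTop (nhds (f 0 - ∑ k ∈ Finset.Icc 1 N, ip f (phi k) * phi k 0)) := by
  have ht := ((H.tendsto_trace hf).comp (Filter.tendsto_add_atTop_nat N)).sub_const
    (∑ k ∈ Finset.Icc 1 N, ip f (phi k) * phi k 0)
  refine ht.congr fun M => ?_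
  simp only [Function.comp, add_comm M N]
  rw [sum_range_add_eq_sum_Icc_add (fun k => ip f (phi k) * phi k 0)]
  ring

end SturmLiouville

theorem unit_integral_sq_add_const_mul_le {f g : ℝ → ℝ} (hf : ContinuousOn f (Icc 0 1))
    (hg : ContinuousOn g (Icc 0 1)) (k : ℝ) :
    ∫ x in (0:ℝ)..1, (f x + k * g x)^2 ≤
      2 * (∫ x in (0:ℝ)..1, (f x)^2) + 2 * k ^ 2 * ∫ x in (0:ℝ)..1, (g x)^2 := by
  rw [← intervalIntegral.integral_const_mul, ← intervalIntegral.integral_const_mul,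
    ← unit_integral_add (by fun_prop) (by fun_prop)]
  refine unit_integral_mono (by fun_prop) (by fun_prop) fun x _ => ?_
  nlinarith [sq_nonneg (f x - k * g x)]

theorem h1sq_add_const_mul_le {f g : ℝ → ℝ} (hf : ContDiffOn ℝ 1 f (Icc 0 1))
    (hg : ContDiffOn ℝ 1 g (Icc 0 1)) (k : ℝ) :
    h1sq (fun x => f x + k * g x) ≤ 2 * h1sq f + 2 * k ^ 2 * h1sq g := by
  have e : ∫ x in (0:ℝ)..1, (dI (fun x => f x + k * g x) x)^2
      = ∫ x in (0:ℝ)..1, (dI f x + k * dI g x)^2 :=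
    unit_integral_congr fun x hx => by
      rw [dI_eq hx ((hasDerivWithinAt_dI hf hx).fun_add ((hasDerivWithinAt_dI hg hx).const_mul k))]
  rw [h1sq, e, h1sq, h1sq]
  linarith [unit_integral_sq_add_const_mul_le hf.continuousOn hg.continuousOn k,
    unit_integral_sq_add_const_mul_le (continuousOn_dI hf) (continuousOn_dI hg) k]

section ObserverBounds

variable {N₀ N : ℕ} {lam : ℕ → ℝ} {zn zhat : ℕ → ℝ → ℝ} {t : ℝ}

theorem observerState_dotProduct_self :
    observerState N₀ zn zhat t ⬝ᵥ observerState N₀ zn zhat t =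
      ∑ i : Fin N₀, zhat (i.val + 1) t ^ 2
        + ∑ i : Fin N₀, (zn (i.val + 1) t - zhat (i.val + 1) t) ^ 2 := by
  rw [observerState, sumElim_dotProduct_sumElim]
  simp only [dotProduct, sq]

theorem scaledError_dotProduct_self (hlam : ∀ n ≥ 1, 0 < lam n) :
    scaledError N₀ N lam zn zhat t ⬝ᵥ scaledError N₀ N lam zn zhat t =
      ∑ j : Fin (N - N₀), lam (N₀ + j.val + 1) *
        (zn (N₀ + j.val + 1) t - zhat (N₀ + j.val + 1) t) ^ 2 := by
  refine Finset.sum_congr rfl fun j _ => ?_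
  rw [scaledError, mul_mul_mul_comm, Real.mul_self_sqrt (hlam _ (by omega)).le, sq]

theorem sum_sq_error_le :
    ∑ k ∈ Finset.Icc 1 N, (zn k t - zhat k t) ^ 2 ≤
      2 * ∑ k ∈ Finset.Icc 1 N, zn k t ^ 2 + 2 * ∑ k ∈ Finset.Icc 1 N, zhat k t ^ 2 := by
  rw [Finset.mul_sum, Finset.mul_sum, ← Finset.sum_add_distrib]
  exact Finset.sum_le_sum fun k _ => by nlinarith [sq_nonneg (zn k t + zhat k t)]

theorem observerState_dotProduct_self_le (hN : N₀ ≤ N) :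
    observerState N₀ zn zhat t ⬝ᵥ observerState N₀ zn zhat t ≤
      2 * ∑ k ∈ Finset.Icc 1 N, zn k t ^ 2 + 3 * ∑ k ∈ Finset.Icc 1 N, zhat k t ^ 2 := by
  have h1 := sum_sq_error_le (N := N) (zn := zn) (zhat := zhat) (t := t)
  have e1 := sum_Icc_eq_sum_fin_add hN (fun k => (zn k t - zhat k t) ^ 2)
  have e2 := sum_Icc_eq_sum_fin_add hN (fun k => zhat k t ^ 2)
  have p1 : 0 ≤ ∑ j : Fin (N - N₀), (zn (N₀ + j.val + 1) t - zhat (N₀ + j.val + 1) t) ^ 2 := by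
    positivity
  have p2 : 0 ≤ ∑ j : Fin (N - N₀), zhat (N₀ + j.val + 1) t ^ 2 := by positivity
  rw [observerState_dotProduct_self]
  linarith

theorem scaledError_dotProduct_self_le (hN : N₀ ≤ N) (hlam : ∀ n ≥ 1, 0 < lam n)
    (hmono : ∀ n, 1 ≤ n → n ≤ N → lam n ≤ lam N) (hN1 : 1 ≤ N) :
    scaledError N₀ N lam zn zhat t ⬝ᵥ scaledError N₀ N lam zn zhat t ≤
      lam N * (2 * ∑ k ∈ Finset.Icc 1 N, zn k t ^ 2 + 2 * ∑ k ∈ Finset.Icc 1 N, zhat k t ^ 2) := by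
  have h1 := sum_sq_error_le (N := N) (zn := zn) (zhat := zhat) (t := t)
  have e1 := sum_Icc_eq_sum_fin_add hN (fun k => (zn k t - zhat k t) ^ 2)
  have p1 : 0 ≤ ∑ i : Fin N₀, (zn (i.val + 1) t - zhat (i.val + 1) t) ^ 2 := by positivity
  rw [scaledError_dotProduct_self hlam]
  calc _ ≤ ∑ j : Fin (N - N₀), lam N * (zn (N₀ + j.val + 1) t - zhat (N₀ + j.val + 1) t) ^ 2 := by
        refine Finset.sum_le_sum fun j _ => mul_le_mul_of_nonneg_right ?_ (sq_nonneg _)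
        have := j.2
        exact hmono _ (by omega) (by omega)
    _ = lam N * ∑ j : Fin (N - N₀), (zn (N₀ + j.val + 1) t - zhat (N₀ + j.val + 1) t) ^ 2 :=
        (Finset.mul_sum _ _ _).symm
    _ ≤ _ := mul_le_mul_of_nonneg_left (by linarith) (hlam N hN1).le

/-- The estimation errors of the first `N` modes are controlled by the reduced state. -/
theorem sum_sq_error_le_dotProduct (hN : N₀ ≤ N) (hlam : ∀ n ≥ 1, 0 < lam n)
    (hmono : ∀ n ≥ 1, lam 1 ≤ lam n) :
    ∑ k ∈ Finset.Icc 1 N, (zn k t - zhat k t) ^ 2 ≤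
      observerState N₀ zn zhat t ⬝ᵥ observerState N₀ zn zhat t
        + (scaledError N₀ N lam zn zhat t ⬝ᵥ scaledError N₀ N lam zn zhat t) / lam 1 := by
  have p1 : 0 ≤ ∑ i : Fin N₀, zhat (i.val + 1) t ^ 2 := by positivity
  have h1 := hlam 1 le_rfl
  have h2 : ∑ j : Fin (N - N₀), (zn (N₀ + j.val + 1) t - zhat (N₀ + j.val + 1) t) ^ 2
      ≤ (scaledError N₀ N lam zn zhat t ⬝ᵥ scaledError N₀ N lam zn zhat t) / lam 1 := by
    rw [le_div_iff₀ h1, scaledError_dotProduct_self hlam, Finset.sum_mul]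
    refine Finset.sum_le_sum fun j _ => ?_
    rw [mul_comm]
    exact mul_le_mul_of_nonneg_right (hmono _ (by omega)) (sq_nonneg _)
  rw [sum_Icc_eq_sum_fin_add hN, observerState_dotProduct_self]
  linarith

end ObserverBounds

section ClosedLoop

variable {θ₁ θ₂ : ℝ} {p q qt : ℝ → ℝ} {q_c c h : ℝ} {lam : ℕ → ℝ} {phi : ℕ → ℝ → ℝ} {N₀ N : ℕ}
  {K L : Fin N₀ → ℝ} {z : ℝ → ℝ → ℝ} {u : ℝ → ℝ} {zhat : ℕ → ℝ → ℝ}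

theorem ClassicalSolution.ip_lifted (Z : ClassicalSolution θ₁ θ₂ p qt c h z u)
    (H : SturmLiouville θ₁ θ₂ p q lam phi) {t : ℝ} (ht : -h ≤ t) {n : ℕ} (hn : 1 ≤ n) :
    ip (fun x => z t x + u t * bFun θ₂ x) (phi n)
      = ip (z t) (phi n) + ip (bFun θ₂) (phi n) * u t := by
  rw [ip_add_left (Z.space_reg t ht).continuousOn
    (continuousOn_const.fun_mul (contDiff_bFun θ₂ 0).continuous.continuousOn) (H.phi_cont hn),
    ip_const_mul_left, mul_comm]

/-- Classical solutions of the plant in closed loop with the observer-based controller, whose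
initial data are of size at most `D`. -/
structure ClosedLoopSolution (θ₁ θ₂ : ℝ) (p qt : ℝ → ℝ) (q_c c h : ℝ) (lam : ℕ → ℝ)
    (phi : ℕ → ℝ → ℝ) (N₀ N : ℕ) (K L : Fin N₀ → ℝ) (z : ℝ → ℝ → ℝ) (u : ℝ → ℝ)
    (zhat : ℕ → ℝ → ℝ) (D : ℝ) : Prop where
  plant : ClassicalSolution θ₁ θ₂ p qt c h z u
  observer : ObserverSolution N₀ N lam q_c c h (betaC p qt θ₂ q_c lam phi)
    (fun n => ip (bFun θ₂) (phi n)) (fun n => phi n 0) K L (fun t => z t 0) u zhat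
  input_cont : ContinuousOn u (Icc (-h) 0)
  zhat_const : ∀ n, ∀ τ ∈ Icc (-h) (0:ℝ), zhat n τ = zhat n 0
  sq_le : ∀ τ ∈ Icc (-h) (0:ℝ), ∫ x in (0:ℝ)..1, (z τ x)^2 ≤ D
  input_le : ∀ τ ∈ Icc (-h) (0:ℝ), u τ ^ 2 ≤ D
  h1sq_le : h1sq (z 0) ≤ D
  zhat_le : ∑ n ∈ Finset.Icc 1 N, zhat n 0 ^ 2 ≤ D

/-- Exponential decay of the reduced state and of the energy of the residual modes. -/
theorem exists_modal_decay {P Q1 : Matrix (Fin N₀ ⊕ Fin N₀) (Fin N₀ ⊕ Fin N₀) ℝ}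
    {Q2 : Matrix (Fin (N - N₀)) (Fin (N - N₀)) ℝ}
    {r₁ r₂ βs γ α₁ α₂ α₃ α₄ cf Ra Rb Mφ : ℝ}
    (H : SturmLiouville θ₁ θ₂ p q lam phi) (hqt : ∀ x, qt x = q x - q_c) (hh : 0 < h)
    (hN : N₀ ≤ N) (hN1 : 1 ≤ N)
    (HL : LyapunovLMI P Q1
      (F1 N₀ lam q_c (B0 N₀ p qt θ₂ q_c lam phi) (fun i => phi (i.val + 1) 0) K L) Q2
      (A1 N₀ N lam q_c)
      (F2 N₀ N L (fun i => phi (N₀ + i.val + 1) 0 / Real.sqrt (lam (N₀ + i.val + 1))))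
      (Lv N₀ L) (Kt N₀ K) c r₁ r₂ βs γ α₁ α₂ α₃ α₄ cf q_c (lam (N + 1)) Ra Rb Mφ
      (fun k => lam (N + 1 + k)) (fun k => ip (aFun p qt θ₂) (phi (N + 1 + k)))
      (fun k => ip (bFun θ₂) (phi (N + 1 + k))))
    (hM : ∀ M, ∑ k ∈ Finset.range M, phi (N + 1 + k) 0 ^ 2 / lam (N + 1 + k) ≤ Mφ) :
    ∃ δ > (0:ℝ), ∃ C > (0:ℝ), ∀ (z : ℝ → ℝ → ℝ) (u : ℝ → ℝ) (zhat : ℕ → ℝ → ℝ) (D : ℝ),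
      ClosedLoopSolution θ₁ θ₂ p qt q_c c h lam phi N₀ N K L z u zhat D → ∀ t ≥ 0, ∀ M,
      observerState N₀ (fun n s => ip (z s) (phi n)) zhat t ⬝ᵥ
          observerState N₀ (fun n s => ip (z s) (phi n)) zhat t
        + scaledError N₀ N lam (fun n s => ip (z s) (phi n)) zhat t ⬝ᵥ
          scaledError N₀ N lam (fun n s => ip (z s) (phi n)) zhat t
        + ∑ k ∈ Finset.range M, lam (N + 1 + k) *
          ip (fun x => z t x + u t * bFun θ₂ x) (phi (N + 1 + k)) ^ 2 ≤
      C * Real.exp (-2 * δ * t) * D := by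
  obtain ⟨δ, hδ, C, hC, hdecay⟩ := HL.decay hh
  obtain ⟨m, -, Ce, hCe, hen⟩ := exists_energy_equiv H.angle_left H.angle_right H.p_reg H.p_pos
    H.q_cont H.q_pos
  have hlamN := H.lam_pos N hN1
  have hbc : ContinuousOn (bFun θ₂) (Icc 0 1) := (contDiff_bFun θ₂ 0).continuous.continuousOn
  set Bb := ∫ x in (0:ℝ)..1, (bFun θ₂ x)^2 with hBb
  have hBb0 : 0 ≤ Bb := unit_integral_sq_nonneg _
  have hb1 := h1sq_nonneg (bFun θ₂)
  set C₁ := 5 + 4 * lam N + (2 + 2 * Bb) + Ce * (2 + 2 * h1sq (bFun θ₂)) with hC₁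
  refine ⟨δ, hδ, C * C₁, by positivity, fun z u zhat D S t ht M => ?_⟩
  have Z := S.plant
  have O := S.observer
  set zn : ℕ → ℝ → ℝ := fun n s => ip (z s) (phi n) with hzn
  have hznd : ∀ n ≥ 1, ∀ t > 0, HasDerivAt (zn n)
      ((-lam n + q_c) * zn n t + c * zn n (t - h) + betaC p qt θ₂ q_c lam phi n * u t) t :=
    fun n hn t ht => Z.hasDerivAt_mode H hqt hh hn ht
  have hznc : ∀ n ≥ 1, ContinuousOn (zn n) (Ici (-h)) := fun n hn =>
    Z.continuousOn_coef (H.phi_cont hn)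
  have huc := O.continuousOn_input hh S.input_cont
  have hD : 0 ≤ D := (h1sq_nonneg _).trans S.h1sq_le
  have hlift : ∀ s ≥ -h, ∀ n ≥ 1, ip (fun x => z s x + u s * bFun θ₂ x) (phi n)
      = zn n s + ip (bFun θ₂) (phi n) * u s := fun s hs n hn => Z.ip_lifted H hs hn
  have hX' := fun t (ht : 0 < t) => O.hasDerivAt_observerState (zn := zn) hN H.lam_pos hznd ht
  have hB : (fun i : Fin N₀ => betaC p qt θ₂ q_c lam phi (i.val + 1)) =
      B0 N₀ p qt θ₂ q_c lam phi := rfl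
  simp only [hB] at hX'
  have hcz : ∀ s ≥ -h, ContinuousOn (z s) (Icc 0 1) := fun s hs => (Z.space_reg s hs).continuousOn
  have hsub : Ici (0:ℝ) ⊆ Ici (-h) := Ici_subset_Ici.2 (by linarith)
  have main := hdecay (observerState N₀ zn zhat) (scaledError N₀ N lam zn zhat)
    (fun k t => zn (N + 1 + k) t + ip (bFun θ₂) (phi (N + 1 + k)) * u t) u
    (fun t => z t 0 - ∑ k ∈ Finset.Icc 1 N, (zn k t + ip (bFun θ₂) (phi k) * u t) * phi k 0)
    (C₁ * D) ?_ ?_ ?_ huc ?_ hX' (fun t ht => O.hasDerivAt_scaledError hznd ht) ?_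
    (fun t ht => O.feedback_eq ht) ?_ ?_ ?_ t ht M
  · rw [Finset.sum_congr rfl fun k _ => by rw [hlift t (by linarith) (N + 1 + k) (by omega)]]
    refine main.trans_eq ?_
    ring
  · refine continuousOn_pi.2 fun x => ?_
    rcases x with i | i
    · exact O.cont _
    · exact (hznc _ (by omega)).sub (O.cont _)
  · exact continuousOn_pi.2 fun j => continuousOn_const.mul ((hznc _ (by omega)).sub (O.cont _))
  · exact fun k => (hznc _ (by omega)).add (continuousOn_const.mul huc)
  · have h0 : ContinuousOn (fun t => z t 0) (Ici 0) :=
      Z.cont.comp (f := fun t : ℝ => (t, (0:ℝ))) (by fun_prop) fun t ht => ⟨hsub ht, by simp⟩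
    refine h0.sub (continuousOn_finsetSum _ fun k hk => ?_)
    have := hznc k (Finset.mem_Icc.1 hk).1
    exact ((this.add (continuousOn_const.mul huc)).mul continuousOn_const).mono hsub
  · intro k t ht
    refine ((hznd (N + 1 + k) (by omega) t ht).fun_add
      ((O.hasDerivAt_input ht (hX' t ht)).const_mul _)).congr_deriv ?_
    simp only [betaC, ← O.feedback_eq (zn := zn) ht.le]
    ring
  · intro t ht
    refine tendsto_max_trace_defect (fun k => H.lam_pos _ (by omega)) hM ?_
    have h1 := H.tendsto_trace_tail (Z.lifted_dom H.angle_right hh ht) N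
    rw [bFun_zero, mul_zero, add_zero, Finset.sum_congr rfl fun k hk => by
      rw [hlift t (by linarith) k (Finset.mem_Icc.1 hk).1]] at h1
    refine h1.congr fun M => Finset.sum_congr rfl fun k _ => ?_
    rw [hlift t (by linarith) _ (by omega)]
  · intro s hs
    have hs' : -h ≤ s := hs.1
    have h1 : ∑ k ∈ Finset.Icc 1 N, zn k s ^ 2 ≤ D :=
      (H.sum_sq_coef_le (hcz s hs') N).trans (S.sq_le s hs)
    have h2 : ∑ k ∈ Finset.Icc 1 N, zhat k s ^ 2 ≤ D := by
      rw [Finset.sum_congr rfl fun k _ => by rw [S.zhat_const k s hs]]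
      exact S.zhat_le
    have hp1 : 0 ≤ Ce * (2 + 2 * h1sq (bFun θ₂)) * D := by positivity
    have hp2 : 0 ≤ lam N * D := by positivity
    have hp3 : 0 ≤ Bb * D := by positivity
    refine ⟨(observerState_dotProduct_self_le hN).trans (by rw [hC₁]; linarith),
      (scaledError_dotProduct_self_le hN H.lam_pos (fun n h1 h2 => H.lam_le h1 h2) hN1).trans ?_,
      (S.input_le s hs).trans (by rw [hC₁]; linarith), fun M => ?_⟩
    · have := mul_le_mul_of_nonneg_left (add_le_add (mul_le_mul_of_nonneg_left h1 zero_le_two)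
        (mul_le_mul_of_nonneg_left h2 zero_le_two)) hlamN.le
      rw [hC₁]
      linarith
    · rw [Finset.sum_congr rfl fun k _ => by rw [← hlift s hs' (N + 1 + k) (by omega)]]
      refine (H.sum_tail_sq_le ((hcz s hs').add (continuousOn_const.mul hbc)) N M).trans ?_
      refine (unit_integral_sq_add_const_mul_le (hcz s hs') hbc (u s)).trans ?_
      have := mul_le_mul_of_nonneg_right (S.input_le s hs) hBb0
      rw [hC₁]
      linarith [S.sq_le s hs]
  · intro M
    rw [Finset.sum_congr rfl fun k _ => by
      rw [← hlift 0 (by linarith) (N + 1 + k) (by omega)]]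
    have hdom := Z.lifted_dom H.angle_right hh le_rfl
    refine (H.sum_tail_energy_le hdom N M).trans ((hen _ hdom).2.trans ?_)
    have h1 := h1sq_add_const_mul_le ((Z.space_reg 0 (by linarith)).of_le (by norm_num))
      (contDiff_bFun θ₂ 1).contDiffOn (u 0)
    have h2 := mul_le_mul_of_nonneg_right (S.input_le 0 ⟨by linarith, le_rfl⟩) hb1
    have h3 : h1sq (fun x => z 0 x + u 0 * bFun θ₂ x) ≤ (2 + 2 * h1sq (bFun θ₂)) * D := by
      linarith [S.h1sq_le]
    have h4 := mul_le_mul_of_nonneg_left h3 hCe.le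
    have hp2 : 0 ≤ lam N * D := by positivity
    have hp3 : 0 ≤ Bb * D := by positivity
    rw [hC₁]
    linarith

end ClosedLoop

section ClosedLoopDecay

variable {θ₁ θ₂ : ℝ} {p q qt : ℝ → ℝ} {q_c c h : ℝ} {lam : ℕ → ℝ} {phi : ℕ → ℝ → ℝ} {N₀ N : ℕ}
  {K L : Fin N₀ → ℝ}

/-- Exponential decay of all the estimates, given decay of the reduced state. -/
theorem exists_estimate_decay {δ C : ℝ} (H : SturmLiouville θ₁ θ₂ p q lam phi) (hh : 0 < h)
    (hN : N₀ ≤ N) (hspec : ∀ n ≥ N₀ + 1, -lam n + q_c + |c| < 0) (hδ : 0 < δ) (hC : 0 < C) :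
    ∃ δ' > (0:ℝ), δ' ≤ δ ∧ ∃ C' > (0:ℝ), ∀ (z : ℝ → ℝ → ℝ) (u : ℝ → ℝ) (zhat : ℕ → ℝ → ℝ) (D : ℝ),
      ClosedLoopSolution θ₁ θ₂ p qt q_c c h lam phi N₀ N K L z u zhat D →
      (∀ t ≥ 0, u t ^ 2 ≤ C * Real.exp (-2 * δ * t) * D ∧
        ∑ i : Fin N₀, zhat (i.val + 1) t ^ 2 ≤ C * Real.exp (-2 * δ * t) * D) →
      ∀ t ≥ 0, ∑ n ∈ Finset.Icc 1 N, zhat n t ^ 2 ≤ C' * Real.exp (-2 * δ' * t) * D := by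
  obtain ⟨δ', hδ', hle, C₁, hC₁, hdec⟩ := exists_scalar_delay_decay (c := c) hh
    (neg_pos.2 (hspec (N₀ + 1) le_rfl)) hδ
  set B := ∑ n ∈ Finset.Icc 1 N, betaC p qt θ₂ q_c lam phi n ^ 2 with hB
  have hB0 : 0 ≤ B := by positivity
  refine ⟨δ', hδ', hle, C + (N - N₀ : ℕ) * (C₁ * (1 + B * C)), by positivity,
    fun z u zhat D S hu t ht => ?_⟩
  have O := S.observer
  have hD : 0 ≤ D := (h1sq_nonneg _).trans S.h1sq_le
  have hexp : Real.exp (-2 * δ * t) ≤ Real.exp (-2 * δ' * t) :=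
    Real.exp_le_exp.2 (by nlinarith)
  have hhigh : ∀ n, N₀ + 1 ≤ n → n ≤ N →
      zhat n t ^ 2 ≤ C₁ * Real.exp (-2 * δ' * t) * ((1 + B * C) * D) := by
    intro n hn hnN
    have hmem : n ∈ Finset.Icc 1 N := Finset.mem_Icc.2 ⟨by omega, hnN⟩
    refine hdec (-lam n + q_c) _ (zhat n) (fun s => betaC p qt θ₂ q_c lam phi n * u s) ?_
      (O.cont n) (fun s hs => O.high n hn hnN s hs) (fun s hs => ?_) (fun s hs => ?_) t ht
    · linarith [H.lam_le (show 1 ≤ N₀ + 1 by omega) hn]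
    · have h1 : betaC p qt θ₂ q_c lam phi n ^ 2 ≤ B :=
        Finset.single_le_sum (f := fun n => betaC p qt θ₂ q_c lam phi n ^ 2)
          (fun _ _ => sq_nonneg _) hmem
      have h2 := mul_le_mul h1 (hu s hs).1 (sq_nonneg _) hB0
      have h3 : 0 ≤ Real.exp (-2 * δ * s) * D := by positivity
      rw [mul_pow]
      linarith
    · have h1 : zhat n 0 ^ 2 ≤ ∑ n ∈ Finset.Icc 1 N, zhat n 0 ^ 2 :=
        Finset.single_le_sum (f := fun n => zhat n 0 ^ 2) (fun _ _ => sq_nonneg _) hmem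
      have h2 : 0 ≤ B * C * D := by positivity
      rw [S.zhat_const n s hs]
      linarith [S.zhat_le]
  have h1 : ∑ j : Fin (N - N₀), zhat (N₀ + j.val + 1) t ^ 2
      ≤ (N - N₀ : ℕ) * (C₁ * Real.exp (-2 * δ' * t) * ((1 + B * C) * D)) := by
    refine (Finset.sum_le_card_nsmul _ _ _ fun j _ =>
      hhigh (N₀ + j.val + 1) (by omega) (by have := j.2; omega)).trans_eq ?_
    rw [Finset.card_univ, Fintype.card_fin, nsmul_eq_mul]
  have h2 := (hu t ht).2.trans
    (mul_le_mul_of_nonneg_right (mul_le_mul_of_nonneg_left hexp hC.le) hD)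
  rw [sum_Icc_eq_sum_fin_add hN (fun n => zhat n t ^ 2)]
  linarith

/-- Exponential decay of the closed loop in the `H¹` norm. -/
theorem exists_closedLoop_decay {P Q1 : Matrix (Fin N₀ ⊕ Fin N₀) (Fin N₀ ⊕ Fin N₀) ℝ}
    {Q2 : Matrix (Fin (N - N₀)) (Fin (N - N₀)) ℝ}
    {r₁ r₂ βs γ α₁ α₂ α₃ α₄ cf Ra Rb Mφ : ℝ}
    (H : SturmLiouville θ₁ θ₂ p q lam phi) (hqt : ∀ x, qt x = q x - q_c) (hh : 0 < h)
    (hN : N₀ ≤ N) (hN1 : 1 ≤ N) (hspec : ∀ n ≥ N₀ + 1, -lam n + q_c + |c| < 0)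
    (HL : LyapunovLMI P Q1
      (F1 N₀ lam q_c (B0 N₀ p qt θ₂ q_c lam phi) (fun i => phi (i.val + 1) 0) K L) Q2
      (A1 N₀ N lam q_c)
      (F2 N₀ N L (fun i => phi (N₀ + i.val + 1) 0 / Real.sqrt (lam (N₀ + i.val + 1))))
      (Lv N₀ L) (Kt N₀ K) c r₁ r₂ βs γ α₁ α₂ α₃ α₄ cf q_c (lam (N + 1)) Ra Rb Mφ
      (fun k => lam (N + 1 + k)) (fun k => ip (aFun p qt θ₂) (phi (N + 1 + k)))
      (fun k => ip (bFun θ₂) (phi (N + 1 + k))))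
    (hM : ∀ M, ∑ k ∈ Finset.range M, phi (N + 1 + k) 0 ^ 2 / lam (N + 1 + k) ≤ Mφ) :
    ∃ δ > (0:ℝ), ∃ C > (0:ℝ), ∀ (z : ℝ → ℝ → ℝ) (u : ℝ → ℝ) (zhat : ℕ → ℝ → ℝ) (D : ℝ),
      ClosedLoopSolution θ₁ θ₂ p qt q_c c h lam phi N₀ N K L z u zhat D → ∀ t ≥ 0,
      h1sq (z t) + ∑ n ∈ Finset.Icc 1 N, zhat n t ^ 2 ≤ C * Real.exp (-2 * δ * t) * D := by
  obtain ⟨δ₀, hδ₀, C₀, hC₀, hmodal⟩ := exists_modal_decay H hqt hh hN hN1 HL hM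
  have hk0 := dotProduct_self_nonneg' (Kt N₀ K)
  set k2 := Kt N₀ K ⬝ᵥ Kt N₀ K with hk2
  obtain ⟨δ, hδ, hle, C₂, hC₂, hest⟩ := exists_estimate_decay (qt := qt) (K := K) (L := L) H hh hN
    hspec hδ₀ (show 0 < (1 + k2) * C₀ by positivity)
  obtain ⟨m, hm, Ce, -, hen⟩ := exists_energy_equiv H.angle_left H.angle_right H.p_reg H.p_pos
    H.q_cont H.q_pos
  have hb1 := h1sq_nonneg (bFun θ₂)
  have hlamN := H.lam_pos N hN1
  have hlam1 := H.lam_pos 1 le_rfl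
  set Bb := ∑ k ∈ Finset.Icc 1 N, ip (bFun θ₂) (phi k) ^ 2 with hBb
  have hBb0 : 0 ≤ Bb := by positivity
  set Cw := lam N * (3 * (C₂ + (C₀ + C₀ / lam 1) + Bb * (k2 * C₀))) + C₀ with hCw
  refine ⟨δ, hδ, 2 * (Cw / m) + 2 * (k2 * C₀) * h1sq (bFun θ₂) + C₂, by positivity,
    fun z u zhat D S t ht => ?_⟩
  have Z := S.plant
  have O := S.observer
  have hD : 0 ≤ D := (h1sq_nonneg _).trans S.h1sq_le
  set zn : ℕ → ℝ → ℝ := fun n s => ip (z s) (phi n) with hzn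
  have hXY : ∀ s ≥ 0,
      observerState N₀ zn zhat s ⬝ᵥ observerState N₀ zn zhat s ≤ C₀ * Real.exp (-2 * δ₀ * s) * D ∧
      scaledError N₀ N lam zn zhat s ⬝ᵥ scaledError N₀ N lam zn zhat s
        ≤ C₀ * Real.exp (-2 * δ₀ * s) * D := fun s hs => by
    have h1 := hmodal z u zhat D S s hs 0
    rw [Finset.sum_range_zero, add_zero] at h1
    have h2 := dotProduct_self_nonneg' (observerState N₀ zn zhat s)
    have h3 := dotProduct_self_nonneg' (scaledError N₀ N lam zn zhat s)
    exact ⟨by linarith, by linarith⟩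
  have hu : ∀ s ≥ 0, u s ^ 2 ≤ k2 * (C₀ * Real.exp (-2 * δ₀ * s) * D) := fun s hs => by
    rw [O.feedback_eq (zn := zn) hs]
    exact (sq_dotProduct_le _ _).trans (mul_le_mul_of_nonneg_left (hXY s hs).1 hk0)
  have hz := hest z u zhat D S (fun s hs => by
    have hV : 0 ≤ C₀ * Real.exp (-2 * δ₀ * s) * D := by positivity
    have h1 := (hXY s hs).1
    rw [observerState_dotProduct_self] at h1
    have h2 : 0 ≤ ∑ i : Fin N₀, (zn (i.val + 1) s - zhat (i.val + 1) s) ^ 2 := by positivity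
    have h3 := mul_nonneg hk0 hV
    exact ⟨by linarith [hu s hs], by linarith⟩) t ht
  have hexp : Real.exp (-2 * δ₀ * t) * D ≤ Real.exp (-2 * δ * t) * D :=
    mul_le_mul_of_nonneg_right (Real.exp_le_exp.2 (by nlinarith)) hD
  set W := Real.exp (-2 * δ * t) * D with hW
  have hV : C₀ * Real.exp (-2 * δ₀ * t) * D ≤ C₀ * W := by
    rw [mul_assoc]
    exact mul_le_mul_of_nonneg_left hexp hC₀.le
  have hut : u t ^ 2 ≤ k2 * C₀ * W := by
    rw [mul_assoc]
    exact (hu t ht).trans (mul_le_mul_of_nonneg_left hV hk0)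
  rw [mul_assoc, ← hW] at hz ⊢
  set w : ℝ → ℝ := fun x => z t x + u t * bFun θ₂ x with hw
  have hdom : RobinDomain θ₁ θ₂ w := Z.lifted_dom H.angle_right hh ht
  have htail : ∀ M, ∑ k ∈ Finset.range M, lam (N + 1 + k) * ip w (phi (N + 1 + k)) ^ 2 ≤ C₀ * W :=
    fun M => by
      have h1 := hmodal z u zhat D S t ht M
      have h2 := dotProduct_self_nonneg' (observerState N₀ zn zhat t)
      have h3 := dotProduct_self_nonneg' (scaledError N₀ N lam zn zhat t)
      linarith
  have herr : ∑ k ∈ Finset.Icc 1 N, (zn k t - zhat k t) ^ 2 ≤ (C₀ + C₀ / lam 1) * W := by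
    refine (sum_sq_error_le_dotProduct hN H.lam_pos fun n hn => H.lam_le le_rfl hn).trans ?_
    have h1 := div_le_div_of_nonneg_right ((hXY t ht).2.trans hV) hlam1.le
    rw [mul_div_right_comm] at h1
    linarith [(hXY t ht).1]
  have hlow : ∑ k ∈ Finset.Icc 1 N, ip w (phi k) ^ 2
      ≤ 3 * (C₂ + (C₀ + C₀ / lam 1) + Bb * (k2 * C₀)) * W := by
    have h1 : ∑ k ∈ Finset.Icc 1 N, ip w (phi k) ^ 2 ≤ 3 * (∑ k ∈ Finset.Icc 1 N, zhat k t ^ 2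
        + ∑ k ∈ Finset.Icc 1 N, (zn k t - zhat k t) ^ 2 + Bb * u t ^ 2) := by
      rw [hBb, Finset.sum_mul, ← Finset.sum_add_distrib, ← Finset.sum_add_distrib, Finset.mul_sum]
      refine Finset.sum_le_sum fun k hk => ?_
      rw [Z.ip_lifted H (by linarith) (Finset.mem_Icc.1 hk).1, ← mul_pow]
      change (zn k t + _) ^ 2 ≤ _
      nlinarith [sq_nonneg (zhat k t - (zn k t - zhat k t)),
        sq_nonneg (zhat k t - ip (bFun θ₂) (phi k) * u t),
        sq_nonneg (zn k t - zhat k t - ip (bFun θ₂) (phi k) * u t)]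
    have h2 := mul_le_mul_of_nonneg_left hut hBb0
    linarith
  have hwle : h1sq w ≤ Cw / m * W := by
    have h1 := (hen w hdom).1.trans (H.energy_le hdom htail)
    have h2 := mul_le_mul_of_nonneg_left hlow hlamN.le
    rw [div_mul_eq_mul_div, le_div_iff₀ hm]
    rw [hCw]
    linarith
  have hzw : h1sq (z t) ≤ 2 * h1sq w + 2 * u t ^ 2 * h1sq (bFun θ₂) := by
    have h1 := h1sq_add_const_mul_le (hdom.reg.of_le (by norm_num))
      (contDiff_bFun θ₂ 1).contDiffOn (-u t)
    rw [neg_sq] at h1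
    refine le_of_eq_of_le ?_ h1
    congr 1
    funext x
    simp [hw]
  have h2 := mul_le_mul_of_nonneg_right hut hb1
  linarith

end ClosedLoopDecay

/-- Theorem 1 (stability), Dirichlet measurement: under the LMI conditions
`Ψ ≺ 0`, `Θ₁ ≺ 0`, `Θ₂ ≺ 0`, `Θ₃ < 0`, `Θ₄ < 0`, for any delay `h > 0` the closed-loop
system (plant + finite-dimensional observer-based controller with output `y_D(t) = z(t,0)`)
is exponentially stable in `H¹` norm. -/
theorem stmt_15
    -- plant data
    (θ₁ θ₂ : ℝ) (hθ₁ : θ₁ ∈ Set.Ioc 0 (π/2)) (hθ₂ : θ₂ ∈ Set.Icc 0 (π/2))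
    (p q qt : ℝ → ℝ) (q_c c : ℝ) (hc : c ≠ 0)
    (hp : ContDiffOn ℝ 2 p (Set.Icc 0 1)) (hppos : ∀ x ∈ Set.Icc (0:ℝ) 1, 0 < p x)
    (hqc : ContinuousOn q (Set.Icc 0 1)) (hqpos : ∀ x ∈ Set.Icc (0:ℝ) 1, 0 < q x)
    (hqt : ∀ x, qt x = q x - q_c)
    -- eigenstructure of the Sturm–Liouville operator A f = -(p f')' + q f
    (lam : ℕ → ℝ) (phi : ℕ → ℝ → ℝ)
    (hlampos : ∀ n ≥ 1, 0 < lam n)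
    (hlammono : ∀ n ≥ 1, lam n < lam (n+1))
    (hlamtop : Filter.Tendsto lam Filter.atTop Filter.atTop)
    (hphireg : ∀ n ≥ 1, ContDiffOn ℝ 2 (phi n) (Set.Icc 0 1))
    (hphieig : ∀ n ≥ 1, ∀ x ∈ Set.Icc (0:ℝ) 1,
      -(dI (fun y => p y * dI (phi n) y) x) + q x * phi n x = lam n * phi n x)
    (hphibc : ∀ n ≥ 1,
      Real.cos θ₁ * phi n 0 - Real.sin θ₁ * dI (phi n) 0 = 0 ∧
      Real.cos θ₂ * phi n 1 + Real.sin θ₂ * dI (phi n) 1 = 0)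
    (horth : ∀ m ≥ 1, ∀ n ≥ 1,
      ip (phi m) (phi n) = if m = n then 1 else 0)
    -- (φₙ)ₙ is a Hilbert basis of L²(0,1): Parseval identity
    (hparseval : ∀ f : ℝ → ℝ, ContinuousOn f (Set.Icc 0 1) →
      (∫ x in (0:ℝ)..1, (f x)^2) = ∑' k : ℕ, (ip f (phi (k+1)))^2)
    -- dimensions
    (N₀ N : ℕ) (hN₀ : 1 ≤ N₀) (hN : N₀ + 1 ≤ N)
    (hspec : ∀ n ≥ N₀ + 1, -lam n + q_c + |c| < 0)
    -- gains, with all eigenvalues of F₁ of real part < -|c|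
    (K L : Fin N₀ → ℝ)
    (F1m : Matrix (Fin N₀ ⊕ Fin N₀) (Fin N₀ ⊕ Fin N₀) ℝ)
    (hF1m : F1m = F1 N₀ lam q_c (B0 N₀ p qt θ₂ q_c lam phi)
      (fun i => phi (i.val + 1) 0) K L)
    (hF1spec : ∀ μ : ℂ, μ ∈ spectrum ℂ (F1m.map (Complex.ofReal : ℝ → ℂ)) → μ.re < -|c|)
    -- Young parameters
    (α₁ α₂ α₃ α₄ cf : ℝ) (hα₁ : 0 < α₁) (hα₂ : 0 < α₂) (hα₃ : 0 < α₃) (hα₄ : 0 < α₄)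
    (hcf : cf = 1 - (|c|/α₁ + 1/α₂ + 1/α₃ + |c|/α₄)/2) (hcfpos : 0 < cf)
    -- residual norms and boundary-trace series
    (RNa2 RNb2 Mphi : ℝ)
    (hRNa2 : RNa2 = RN2 (aFun p qt θ₂) phi N) (hRNb2 : RNb2 = RN2 (bFun θ₂) phi N)
    (hMphisum : Summable fun k : ℕ => (phi (N + 1 + k) 0)^2 / lam (N + 1 + k))
    (hMphi : Mphi = ∑' k : ℕ, (phi (N + 1 + k) 0)^2 / lam (N + 1 + k))
    -- derived matrices
    (F2m : Matrix (Fin N₀ ⊕ Fin N₀) (Fin (N - N₀)) ℝ)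
    (hF2m : F2m = F2 N₀ N L
      (fun i => phi (N₀ + i.val + 1) 0 / Real.sqrt (lam (N₀ + i.val + 1))))
    (Em : SIdx N₀ N → ℝ) (hEm : Em = Erow N₀ N F1m F2m (Lv N₀ L) (Kt N₀ K))
    -- LMI decision variables and constraints
    (P Q1 : Matrix (Fin N₀ ⊕ Fin N₀) (Fin N₀ ⊕ Fin N₀) ℝ)
    (Q2 : Matrix (Fin (N - N₀)) (Fin (N - N₀)) ℝ)
    (r₁ r₂ βs γ : ℝ) (hr₁ : 0 < r₁) (hr₂ : 0 < r₂) (hβs : 0 < βs) (hγ : 0 < γ)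
    (hP : P.PosDef) (hQ1 : Q1.PosSemidef) (hQ2 : Q2.PosSemidef)
    (hPsi : (-(PsiM N₀ N P Q1 F1m Q2 (A1 N₀ N lam q_c) F2m (Lv N₀ L) (Kt N₀ K) Em
      c r₁ βs γ α₂ α₃ RNa2 RNb2)).PosDef)
    (hTh1 : (-(Theta1 N₀ P Q1 (Kt N₀ K) c γ α₃ α₄ RNb2)).PosDef)
    (hTh2 : (-(Theta2 N₀ N Q2 r₁ c)).PosDef)
    (hTh3 : γ * α₁ * |c| - r₂ < 0)
    (hTh4 : 2*γ*(-cf * lam (N+1) + q_c) + βs * Mphi + r₂ / lam (N+1) < 0)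
    -- state delay
    (h : ℝ) (hh : 0 < h) :
    ∃ δ > (0:ℝ), ∃ M > (0:ℝ),
      ∀ (z : ℝ → ℝ → ℝ) (u : ℝ → ℝ) (zhat : ℕ → ℝ → ℝ),
      -- regularity of the classical solution
      (∀ t ≥ -h, ContDiffOn ℝ 2 (z t) (Set.Icc 0 1)) →
      ContinuousOn (fun pr : ℝ × ℝ => z pr.1 pr.2) (Set.Ici (-h) ×ˢ Set.Icc 0 1) →
      ContinuousOn (fun pr : ℝ × ℝ => deriv (fun s => z s pr.2) pr.1)
        (Set.Ioi 0 ×ˢ Set.Icc 0 1) →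
      ContinuousOn (fun pr : ℝ × ℝ => dI (z pr.1) pr.2) (Set.Ioi 0 ×ˢ Set.Icc 0 1) →
      ContinuousOn (fun pr : ℝ × ℝ => dI (dI (z pr.1)) pr.2) (Set.Ioi 0 ×ˢ Set.Icc 0 1) →
      (∀ n, ContinuousOn (zhat n) (Set.Ici (-h))) →
      -- Lipschitz regularity of the initial data z₀ (in L²) and u₀
      (∃ Kz, ∀ τ₁ ∈ Set.Icc (-h) (0:ℝ), ∀ τ₂ ∈ Set.Icc (-h) (0:ℝ),
        (∫ x in (0:ℝ)..1, (z τ₁ x - z τ₂ x)^2) ≤ Kz * (τ₁ - τ₂)^2) →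
      (∃ Ku, ∀ τ₁ ∈ Set.Icc (-h) (0:ℝ), ∀ τ₂ ∈ Set.Icc (-h) (0:ℝ),
        |u τ₁ - u τ₂| ≤ Ku * |τ₁ - τ₂|) →
      -- the PDE in the domain
      (∀ t > (0:ℝ), ∀ x ∈ Set.Ioo (0:ℝ) 1,
        HasDerivAt (fun s => z s x)
          (dI (fun y => p y * dI (z t) y) x - qt x * z t x + c * z (t-h) x) t) →
      -- boundary conditions (and compatibility at t = 0)
      (∀ t ≥ (0:ℝ), Real.cos θ₁ * z t 0 - Real.sin θ₁ * dI (z t) 0 = 0) →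
      -- Robin actuation at x = 1; for τ ∈ [-h,0] this defines u₀
      (∀ t ≥ -h, Real.cos θ₂ * z t 1 + Real.sin θ₂ * dI (z t) 1 = u t) →
      -- observer initial data constant on [-h,0]
      (∀ n, ∀ τ ∈ Set.Icc (-h) (0:ℝ), zhat n τ = zhat n 0) →
      -- observer dynamics with Dirichlet output innovation, modes 1..N₀
      (∀ i : Fin N₀, ∀ t > (0:ℝ),
        HasDerivAt (zhat (i.val + 1))
          ((-lam (i.val + 1) + q_c) * zhat (i.val + 1) t + c * zhat (i.val + 1) (t-h)
            + betaC p qt θ₂ q_c lam phi (i.val + 1) * u t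
            - L i * ((∑ k ∈ Finset.Icc 1 N,
                (zhat k t + ip (bFun θ₂) (phi k) * u t) * phi k 0) - z t 0)) t) →
      -- observer dynamics, modes N₀+1..N
      (∀ n, N₀ + 1 ≤ n → n ≤ N → ∀ t > (0:ℝ),
        HasDerivAt (zhat n)
          ((-lam n + q_c) * zhat n t + c * zhat n (t-h)
            + betaC p qt θ₂ q_c lam phi n * u t) t) →
      -- feedback law (including the compatibility condition u₀(0) = K Ẑ(0))
      (∀ t ≥ (0:ℝ), u t = ∑ i : Fin N₀, K i * zhat (i.val + 1) t) →
      -- exponential stability estimate in H¹ norm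
      ∀ t ≥ (0:ℝ),
        ((∫ x in (0:ℝ)..1, (z t x)^2) + ∫ x in (0:ℝ)..1, (dI (z t) x)^2)
            + ∑ n ∈ Finset.Icc 1 N, (zhat n t)^2
          ≤ M * Real.exp (-2*δ*t) *
            (sSup ((fun τ => ∫ x in (0:ℝ)..1, (z τ x)^2) '' Set.Icc (-h) 0)
              + ((∫ x in (0:ℝ)..1, (z 0 x)^2) + ∫ x in (0:ℝ)..1, (dI (z 0) x)^2)
              + (sSup ((fun τ => |u τ|) '' Set.Icc (-h) 0))^2
              + ∑ n ∈ Finset.Icc 1 N, (zhat n 0)^2) := by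
  subst hF1m hF2m hEm hRNa2 hRNb2 hMphi
  have hqtc : ContinuousOn qt (Icc 0 1) := by
    rw [funext hqt]
    exact hqc.sub continuousOn_const
  have H : SturmLiouville θ₁ θ₂ p q lam phi :=
    ⟨hθ₁, hθ₂, hp, hppos, hqc, hqpos, hlampos, hlammono,
      fun n hn => ⟨hphireg n hn, (hphibc n hn).1, (hphibc n hn).2⟩, hphieig, horth, hparseval⟩
  have hM0 : ∀ k, 0 ≤ phi (N + 1 + k) 0 ^ 2 / lam (N + 1 + k) := fun k =>
    div_nonneg (sq_nonneg _) (H.lam_pos _ (by omega)).le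
  obtain ⟨δ, hδ, C, hC, hdecay⟩ := exists_closedLoop_decay (N := N) H hqt hh (by omega) (by omega)
    hspec ⟨hα₁, hα₂, hα₃, hα₄, hcf, hcfpos, hr₁, hr₂, hβs, hγ, hP, hQ1, hQ2, hPsi, hTh1, hTh2, hTh3,
      hTh4, tsum_nonneg hM0, H.lam_pos _ (by omega), fun k => H.lam_le (by omega) (by omega),
      H.sum_tail_sq_le_RN2 (continuousOn_aFun hp hqtc θ₂) N,
      H.sum_tail_sq_le_RN2 (contDiff_bFun θ₂ 0).continuous.continuousOn N⟩
    fun M => hMphisum.sum_le_tsum _ fun k _ => hM0 k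
  refine ⟨δ, hδ, C, hC, fun z u zhat hzreg hzc hzt _ _ hzhat _ hulip hpde hleft hright hconst hlow
    hhigh hfb => ?_⟩
  have Z : ClassicalSolution θ₁ θ₂ p qt c h z u := ⟨hzreg, hzc, hzt, hpde, hleft, hright⟩
  have huc : ContinuousOn u (Icc (-h) 0) := by
    obtain ⟨Ku, hKu⟩ := hulip
    refine (LipschitzOnWith.of_dist_le_mul (K := Ku.toNNReal) fun s hs r hr => ?_).continuousOn
    exact (hKu s hs r hr).trans
      (mul_le_mul_of_nonneg_right (Real.le_coe_toNNReal Ku) (abs_nonneg _))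
  have hz0 : ∀ τ ∈ Icc (-h) (0:ℝ), ∫ x in (0:ℝ)..1, (z τ x)^2 ≤
      sSup ((fun τ => ∫ x in (0:ℝ)..1, (z τ x)^2) '' Set.Icc (-h) 0) := fun τ hτ =>
    le_csSup (isCompact_Icc.image_of_continuousOn (Z.continuousOn_sq.mono Icc_subset_Ici_self)).bddAbove
      (mem_image_of_mem _ hτ)
  have hu0 : ∀ τ ∈ Icc (-h) (0:ℝ), u τ ^ 2 ≤
      (sSup ((fun τ => |u τ|) '' Set.Icc (-h) 0)) ^ 2 := fun τ hτ => by
    rw [← sq_abs]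
    exact pow_le_pow_left₀ (abs_nonneg _) (le_csSup
      (isCompact_Icc.image_of_continuousOn huc.abs).bddAbove (mem_image_of_mem _ hτ)) 2
  have hmem : (0:ℝ) ∈ Icc (-h) 0 := ⟨by linarith, le_rfl⟩
  have p1 := (unit_integral_sq_nonneg (z 0)).trans (hz0 0 hmem)
  have p2 := h1sq_nonneg (z 0)
  have p3 := (sq_nonneg (u 0)).trans (hu0 0 hmem)
  have p4 : 0 ≤ ∑ n ∈ Finset.Icc 1 N, zhat n 0 ^ 2 := by positivity
  refine hdecay z u zhat _ ⟨Z, ⟨hzhat, hlow, hhigh, hfb⟩, huc, hconst, fun τ hτ => ?_,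
    fun τ hτ => ?_, ?_, ?_⟩
  · exact (hz0 τ hτ).trans (by rw [h1sq] at p2; linarith)
  · exact (hu0 τ hτ).trans (by rw [h1sq] at p2; linarith)
  · rw [h1sq]
    linarith
  · rw [h1sq] at p2
    linarith

end
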